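/- (Camacho–Sad separatrix theorem.) Let P and Q be holomorphic functions on a neighborhood of 0 in ℂ² with P(0,0) = Q(0,0) = 0, and assume 0 is an isolated common zero of P and Q (so the vector field Z = P ∂/∂z + Q ∂/∂w has an isolated singularity at 0). Then Z admits a separatrix at 0: there exist r > 0 and holomorphic functions f and g on the ball B(0, r) ⊆ ℂ² such that f(0,0) = 0, f is not identically zero, and P·(∂f/∂z) + Q·(∂f/∂w) = g·f on B(0, r); i.e. the (possibly singular) analytic curve {f = 0} passes through 0 and is invariant under Z. -/

import Mathlib

/-!
The proof follows Cano's short version of the argument of Camacho and Sad.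

A common factor of `P` and `Q` that vanishes at the origin is itself an equation of an invariant
curve. Otherwise, by Weierstrass preparation and Gauss's lemma, the ideal `(P, Q)` has finite
codimension. Blow up the origin, and let `x = 0` be the exceptional divisor in a chart, so that the
transformed field is `x a ∂x + b ∂y` up to a power of `x`. The Camacho–Sad index at a point is the
residue of `a / b` along `x = 0`, and by the residue theorem on the projective line
(`eventually_sum_residue_taylorSeries_eq`) the indices along the exceptional divisor add up to `-1`.
Hence some point has an index which is not a nonnegative rational (`IsAdmissiblePoint`). Such a
point is blown up in turn. One then finds either a point of the same type on the new divisor, or a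
corner of two divisors whose two indices satisfy Cano's condition (`IsAdmissibleCorner`), and this
pair of conditions is stable under further blow-ups. When the divisor is not invariant, a general
point of it carries a transverse invariant curve at once.

The process stops because the codimension of the ideal generated by the two components drops by at
least the product of the multiplicities (`intersectionNumber_transform_add_mul_le`, Noether's
inequality). It ends at a point where `a` is a unit and the index condition is the nonresonance
condition of the Briot–Bouquet theorem (`briot_bouquet`, proved by majorants), which yields a
convergent invariant curve transverse to the divisor. Its image is a parametrized invariant curve of
the original field. The reduction only uses a few algebraic properties of the ring of germs
(`PlaneGermRing`), and the invariant curves enter it through closure rules (`SeparatrixRules`).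

Finally, one of the two coordinates makes the ring of germs on a parametrized curve integral over
the normal ring of germs in one variable. By Weierstrass division, the germs vanishing on the curve
are then the multiples of a single germ `f`, given by a minimal polynomial. The derivative of `f`
along an invariant field vanishes on the curve, so it is `g f` for some `g`.
-/

namespace CamachoSad

open Filter Polynomial Topology
open scoped LaurentSeries PowerSeries

noncomputable section

/-! ### The residue theorem on the projective line -/

section

variable {K : Type*} [Field K]

/-- The residue at the origin of the formal meromorphic form `(f / g) dX`; it is `0` when
`g = 0`. -/
def residue (f g : K⟦X⟧) : K :=
  ((f : K⸨X⸩) / (g : K⸨X⸩)).coeff (-1)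

theorem coeff_coe_of_neg (f : K⟦X⟧) {n : ℤ} (hn : n < 0) : (f : K⸨X⸩).coeff n = 0 :=
  (PowerSeries.coeff_coe f n).trans (if_pos hn)

theorem coeff_coe_zero (f : K⟦X⟧) :
    (f : K⸨X⸩).coeff 0 = PowerSeries.constantCoeff f := by
  simpa using PowerSeries.coeff_coe f 0

theorem coe_inv_of_constantCoeff_ne_zero {u : K⟦X⟧} (hu : PowerSeries.constantCoeff u ≠ 0) :
    (u : K⸨X⸩)⁻¹ = ((u⁻¹ : K⟦X⟧) : K⸨X⸩) := by
  apply inv_eq_of_mul_eq_one_right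
  rw [← PowerSeries.coe_mul, PowerSeries.mul_inv_cancel _ hu, PowerSeries.coe_one]

theorem residue_mul_left_mul_left {u : K⟦X⟧} (hu : u ≠ 0) (f g : K⟦X⟧) :
    residue (u * f) (u * g) = residue f g := by
  have hu' : (u : K⸨X⸩) ≠ 0 := fun h =>
    hu (HahnSeries.ofPowerSeries_injective (h.trans (map_zero _).symm))
  rw [residue, PowerSeries.coe_mul, PowerSeries.coe_mul, mul_div_mul_left _ _ hu', residue]

theorem residue_eq_zero {f g : K⟦X⟧} (hg : PowerSeries.constantCoeff g ≠ 0) :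
    residue f g = 0 := by
  rw [residue, div_eq_mul_inv, coe_inv_of_constantCoeff_ne_zero hg, ← PowerSeries.coe_mul,
    coeff_coe_of_neg _ (by simp)]

/-- Taylor expansion of a polynomial at the point `c`. -/
def taylorSeries (c : K) : K[X] →ₐ[K] K⟦X⟧ :=
  (coeToPowerSeries.algHom K).comp (taylorAlgHom c)

theorem taylorSeries_apply (c : K) (p : K[X]) :
    taylorSeries c p = ((taylor c p : K[X]) : K⟦X⟧) := by
  simp [taylorSeries, coeToPowerSeries.algHom_apply]

theorem taylorSeries_zero (p : K[X]) : taylorSeries 0 p = (p : K⟦X⟧) := by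
  simp [taylorSeries_apply]

theorem taylorSeries_X (c : K) : taylorSeries c X = PowerSeries.X + PowerSeries.C c := by
  simp [taylorSeries_apply]

theorem taylorSeries_C (c a : K) : taylorSeries c (C a) = PowerSeries.C a := by
  simp [taylorSeries_apply]

theorem constantCoeff_taylorSeries (c : K) (p : K[X]) :
    PowerSeries.constantCoeff (taylorSeries c p) = p.eval c := by
  rw [taylorSeries_apply, constantCoeff_coe, coeff_zero_eq_eval_zero, taylor_eval, zero_add]

theorem taylorSeries_injective (c : K) : Function.Injective (taylorSeries c) := by
  intro p q h
  rw [taylorSeries_apply, taylorSeries_apply] at h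
  exact taylor_injective c (coe_injective K h)

theorem coe_eq_eval₂_single_one (p : K[X]) :
    ((p : K⟦X⟧) : K⸨X⸩) = p.eval₂ HahnSeries.C (HahnSeries.single 1 1 : K⸨X⸩) := by
  induction p using Polynomial.induction_on' with
  | add p q hp hq => rw [eval₂_add, ← hp, ← hq, coe_add, PowerSeries.coe_add]
  | monomial n a => rw [eval₂_monomial, ← C_mul_X_pow_eq_monomial]; simp

theorem single_mul_eval₂_eq_reflect {n : ℕ} {p : K[X]} (hp : p.natDegree ≤ n) :
    HahnSeries.single 1 1 ^ n * p.eval₂ HahnSeries.C (HahnSeries.single (-1) 1 : K⸨X⸩) =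
      ((reflect n p : K⟦X⟧) : K⸨X⸩) := by
  have hinv : (HahnSeries.single (-1) 1 : K⸨X⸩) * HahnSeries.single 1 1 = 1 := by simp
  let _ : Invertible (HahnSeries.single (-1) 1 : K⸨X⸩) := .mk _ (by simp) hinv
  have h := eval₂_reflect_mul_pow HahnSeries.C (HahnSeries.single (-1) 1 : K⸨X⸩) n p hp
  rw [coe_eq_eval₂_single_one, ← h, mul_left_comm, ← mul_pow,
    mul_comm (HahnSeries.single 1 1 : K⸨X⸩), hinv, one_pow, mul_one]
  rfl

variable (K) in
theorem eval₂RingHom_single_neg_one_injective :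
    Function.Injective (eval₂RingHom HahnSeries.C (HahnSeries.single (-1) 1 : K⸨X⸩)) := by
  rw [injective_iff_map_eq_zero]
  intro p hp
  have h := single_mul_eval₂_eq_reflect (le_refl p.natDegree)
  rw [← coe_eval₂RingHom, hp, mul_zero] at h
  have h' : (reflect p.natDegree p : K⟦X⟧) = 0 :=
    HahnSeries.ofPowerSeries_injective (h.symm.trans (map_zero _).symm)
  simpa [reflect_eq_zero_iff] using h'

/-- Laurent expansion of a rational function at the point `c`. -/
def expansionAt (c : K) : FractionRing K[X] →+* K⸨X⸩ :=
  IsFractionRing.lift (g := (HahnSeries.ofPowerSeries ℤ K).comp (taylorSeries c).toRingHom)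
    (HahnSeries.ofPowerSeries_injective.comp (taylorSeries_injective c))

/-- Laurent expansion of a rational function in the coordinate `1 / X` at infinity. -/
def expansionAtInfty : FractionRing K[X] →+* K⸨X⸩ :=
  IsFractionRing.lift (eval₂RingHom_single_neg_one_injective K)

theorem expansionAt_algebraMap (c : K) (p : K[X]) :
    expansionAt c (algebraMap _ _ p) = (taylorSeries c p : K⸨X⸩) :=
  IsFractionRing.lift_algebraMap _ _

theorem expansionAtInfty_algebraMap (p : K[X]) :
    expansionAtInfty (algebraMap _ _ p) =
      p.eval₂ HahnSeries.C (HahnSeries.single (-1) 1 : K⸨X⸩) :=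
  IsFractionRing.lift_algebraMap _ _

theorem expansionAt_smul (c a : K) (F : FractionRing K[X]) :
    expansionAt c (a • F) = a • expansionAt c F := by
  rw [Algebra.smul_def, map_mul, IsScalarTower.algebraMap_apply K K[X], expansionAt_algebraMap,
    algebraMap_eq, taylorSeries_C, PowerSeries.coe_C, HahnSeries.C_mul_eq_smul]

theorem expansionAtInfty_smul (a : K) (F : FractionRing K[X]) :
    expansionAtInfty (a • F) = a • expansionAtInfty F := by
  rw [Algebra.smul_def, map_mul, IsScalarTower.algebraMap_apply K K[X],
    expansionAtInfty_algebraMap, algebraMap_eq, eval₂_C, HahnSeries.C_mul_eq_smul]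

variable (K) in
/-- The rational functions `F` whose residues at the finite points add up to minus the residue of
`F dX` at infinity. In the coordinate `t = 1 / X` one has `dX = -dt / t²`, so this is the
coefficient of `t` in the expansion of `F`. The finite set `S` of points of summation only has to
contain all the poles. -/
def residueSumSubmodule : Submodule K (FractionRing K[X]) where
  carrier := {F | ∀ᶠ S : Finset K in atTop,
    ∑ c ∈ S, (expansionAt c F).coeff (-1) = (expansionAtInfty F).coeff 1}
  add_mem' hF hG := by
    filter_upwards [hF, hG] with S hF hG
    simp only [map_add, HahnSeries.coeff_add, Finset.sum_add_distrib, hF, hG]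
  zero_mem' := by simp
  smul_mem' a F hF := by
    filter_upwards [hF] with S hF
    simp only [expansionAt_smul, expansionAtInfty_smul, HahnSeries.coeff_smul, ← Finset.smul_sum,
      hF]

theorem algebraMap_mem_residueSumSubmodule (p : K[X]) :
    algebraMap _ _ p ∈ residueSumSubmodule K := by
  refine Eventually.of_forall fun S => ?_
  simp only [expansionAt_algebraMap, expansionAtInfty_algebraMap]
  rw [Finset.sum_eq_zero fun c _ => coeff_coe_of_neg _ (by simp), eval₂_eq_sum_range,
    HahnSeries.coeff_sum]
  refine (Finset.sum_eq_zero fun n _ => ?_).symm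
  rw [HahnSeries.C_mul_eq_smul, HahnSeries.coeff_smul, HahnSeries.single_pow,
    HahnSeries.coeff_single_of_ne, smul_zero]
  simp only [nsmul_eq_mul]
  lia

theorem expansionAt_X_sub_C (c d : K) :
    expansionAt d (algebraMap _ _ (X - C c)) =
      ((PowerSeries.X + PowerSeries.C (d - c) : K⟦X⟧) : K⸨X⸩) := by
  rw [expansionAt_algebraMap, map_sub, taylorSeries_X, taylorSeries_C, add_sub_assoc,
    ← map_sub PowerSeries.C]

theorem expansionAtInfty_inv_X_sub_C (c : K) :
    expansionAtInfty (algebraMap _ _ (X - C c))⁻¹ =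
      HahnSeries.single 1 1 * (((1 - PowerSeries.C c * PowerSeries.X)⁻¹ : K⟦X⟧) : K⸨X⸩) := by
  have hunit : PowerSeries.constantCoeff (1 - PowerSeries.C c * PowerSeries.X : K⟦X⟧) ≠ 0 := by
    simp
  rw [map_inv₀, expansionAtInfty_algebraMap, ← coe_inv_of_constantCoeff_ne_zero hunit,
    inv_eq_iff_eq_inv, mul_inv, inv_inv, HahnSeries.inv_single, inv_one]
  simp [mul_sub, HahnSeries.C_apply]

theorem inv_X_sub_C_pow_mem_residueSumSubmodule (c : K) (k : ℕ) :
    (algebraMap _ _ (X - C c))⁻¹ ^ (k + 1) ∈ residueSumSubmodule K := by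
  filter_upwards [eventually_ge_atTop {c}] with S hS
  rw [Finset.sum_eq_single_of_mem c (hS (Finset.mem_singleton_self c))]
  · rw [map_pow, map_pow, expansionAtInfty_inv_X_sub_C, map_inv₀, expansionAt_X_sub_C, sub_self,
      map_zero, add_zero, PowerSeries.coe_X, mul_pow, HahnSeries.inv_single, inv_one,
      HahnSeries.single_pow, HahnSeries.single_pow, ← PowerSeries.coe_pow,
      HahnSeries.coeff_single_mul, one_pow, one_mul]
    rcases Nat.eq_zero_or_pos k with rfl | hk
    · simp [coeff_coe_zero]
    · rw [coeff_coe_of_neg _ (by simp; lia), HahnSeries.coeff_single_of_ne (by simp; lia)]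
  · intro d _ hd
    rw [map_pow, map_inv₀, expansionAt_X_sub_C,
      coe_inv_of_constantCoeff_ne_zero (by simpa using sub_ne_zero.2 hd), ← PowerSeries.coe_pow,
      coeff_coe_of_neg _ (by simp)]

theorem exists_eq_smul_prod_X_sub_C_inv_pow [IsAlgClosed K] (p D : K[X]) :
    ∃ (a : K) (s : Finset K) (n : K → ℕ),
      algebraMap K[X] (FractionRing K[X]) p / algebraMap _ _ D =
        a • (algebraMap _ _ p * ∏ c ∈ s, (algebraMap K[X] _ (X - C c))⁻¹ ^ n c) := by
  classical
  refine ⟨D.leadingCoeff⁻¹, D.roots.toFinset, fun c => D.roots.count c, ?_⟩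
  conv_lhs => rw [(IsAlgClosed.splits D).eq_prod_roots, Finset.prod_multiset_map_count]
  rw [Algebra.smul_def, map_inv₀, map_mul, div_eq_mul_inv, mul_inv, map_prod,
    ← Finset.prod_inv_distrib, mul_left_comm, IsScalarTower.algebraMap_apply K K[X],
    algebraMap_eq]
  simp only [map_pow, inv_pow]

theorem residueSumSubmodule_eq_top [IsAlgClosed K] : residueSumSubmodule K = ⊤ := by
  rw [eq_top_iff]
  intro F _
  obtain ⟨p, D, -, rfl⟩ := IsFractionRing.div_surjective (A := K[X]) F
  obtain ⟨a, s, n, h⟩ := exists_eq_smul_prod_X_sub_C_inv_pow p D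
  rw [h]
  refine Submodule.smul_mem _ a ?_
  obtain ⟨q, r, hr, hpartial⟩ := mul_prod_pow_inverse_eq_quo_add_sum_rem_mul_pow_inverse
    (K := FractionRing K[X]) (s := s) p (g := fun c => X - C c) (fun c _ => monic_X_sub_C c)
    (fun c _ d _ hcd => pairwise_coprime_X_sub_C Function.injective_id hcd) n
    (gi := fun c => (algebraMap _ _ (X - C c))⁻¹)
    (fun c _ => inv_mul_cancel₀ (by
      simpa only [ne_eq, FaithfulSMul.algebraMap_eq_zero_iff] using X_sub_C_ne_zero c))
  rw [hpartial]
  refine add_mem (algebraMap_mem_residueSumSubmodule q)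
    (sum_mem fun c hc => sum_mem fun j _ => ?_)
  have hconst : r c j = C ((r c j).coeff 0) :=
    eq_C_of_degree_le_zero (Nat.WithBot.lt_one_iff_le_zero.1
      ((hr c hc j).trans_eq (degree_X_sub_C c)))
  rw [hconst, ← algebraMap_eq, ← IsScalarTower.algebraMap_apply, ← Algebra.smul_def]
  exact Submodule.smul_mem _ _ (inv_X_sub_C_pow_mem_residueSumSubmodule c j)

theorem mul_pow_div_sub_eq {L : Type*} [Field L] {t u v : L} (ht : t ≠ 0) (h : t * v - u ≠ 0)
    (n : ℕ) :
    t ^ n * v / (t ^ n * u - t * (t ^ n * v)) =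
      t⁻¹ * (-1) - t⁻¹ * (t⁻¹ * (u / (v - t⁻¹ * u))) := by
  have hden : t ^ n * u - t * (t ^ n * v) = -(t ^ n * (t * v - u)) := by ring
  have hden' : v - t⁻¹ * u = t⁻¹ * (t * v - u) := by field_simp
  rw [hden, hden']
  rw [mul_comm] at h
  field_simp
  ring

theorem residue_reflect_eq {ν : ℕ} {p q : K[X]} (hp : p.natDegree ≤ ν) (hq : q.natDegree ≤ ν)
    (hD : q - X * p ≠ 0) :
    residue (reflect ν q : K⟦X⟧) ((reflect ν p : K⟦X⟧) - PowerSeries.X * (reflect ν q : K⟦X⟧)) =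
      -1 - (expansionAtInfty (algebraMap _ _ p / algebraMap _ _ (q - X * p))).coeff 1 := by
  set t : K⸨X⸩ := HahnSeries.single 1 1 with ht
  set e := eval₂RingHom HahnSeries.C (HahnSeries.single (-1) 1 : K⸨X⸩) with he
  have ht0 : t ≠ 0 := by simp [ht]
  have htinv : t⁻¹ = HahnSeries.single (-1) 1 := by rw [ht, HahnSeries.inv_single, inv_one]
  have heX : e X = t⁻¹ := by rw [he, coe_eval₂RingHom, eval₂_X, htinv]
  have hep : ((reflect ν p : K⟦X⟧) : K⸨X⸩) = t ^ ν * e p := (single_mul_eval₂_eq_reflect hp).symm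
  have heq : ((reflect ν q : K⟦X⟧) : K⸨X⸩) = t ^ ν * e q := (single_mul_eval₂_eq_reflect hq).symm
  have hF : expansionAtInfty (algebraMap _ _ p / algebraMap _ _ (q - X * p)) =
      e p / (e q - t⁻¹ * e p) := by
    rw [map_div₀, expansionAtInfty_algebraMap, expansionAtInfty_algebraMap, ← heX, ← map_mul,
      ← map_sub]
    rfl
  have hD' : t * e q - e p ≠ 0 := by
    have h := (map_ne_zero_iff e (eval₂RingHom_single_neg_one_injective K)).2 hD
    rw [map_sub, map_mul, heX] at h
    convert mul_ne_zero ht0 h using 1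
    rw [mul_sub, mul_inv_cancel_left₀ ht0]
  rw [residue, PowerSeries.coe_sub, PowerSeries.coe_mul, PowerSeries.coe_X, hep, heq, hF,
    mul_pow_div_sub_eq ht0 hD', HahnSeries.coeff_sub, htinv]
  simp [HahnSeries.coeff_single_mul]

/- The last summand is the Camacho–Sad index at infinity, which differs by `1` from a residue of
the form `p / (q - X p) dX`. Hence the sum `-1`, the self-intersection of the exceptional divisor of
a blow-up. -/
theorem eventually_sum_residue_taylorSeries_eq [IsAlgClosed K] {ν : ℕ} {p q : K[X]}
    (hp : p.natDegree ≤ ν) (hq : q.natDegree ≤ ν) (hD : q - X * p ≠ 0) :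
    ∀ᶠ S : Finset K in atTop,
      ∑ c ∈ S, residue (taylorSeries c p) (taylorSeries c (q - X * p)) +
        residue (reflect ν q : K⟦X⟧)
          ((reflect ν p : K⟦X⟧) - PowerSeries.X * (reflect ν q : K⟦X⟧)) = -1 := by
  have hF : algebraMap _ _ p / algebraMap _ _ (q - X * p) ∈ residueSumSubmodule K :=
    residueSumSubmodule_eq_top.ge trivial
  filter_upwards [hF] with S hS
  rw [residue_reflect_eq hp hq hD, ← hS, ← add_sub_assoc, sub_eq_iff_eq_add, add_comm]
  simp only [residue, map_div₀, expansionAt_algebraMap]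

end

/-! ### Germs and blow-ups, algebraically -/

section

/-- The algebraic structure of the ring of germs of holomorphic functions at the origin of the plane
on which the reduction of singularities rests: coordinates `x` and `y`, the Taylor series `restrict`
of the restriction to the line `x = 0`, the exchange `swap` of the two coordinates, and the
pullbacks `chart c` under the blow-up charts `(x, y) ↦ (x, x (c + y))`. -/
structure PlaneGermRing (K A : Type*) [Field K] [CommRing A] [Algebra K A] where
  x : A
  y : A
  restrict : A →ₐ[K] K⟦X⟧
  swap : A →ₐ[K] A
  chart : K → A →ₐ[K] A
  restrict_x : restrict x = 0
  restrict_y : restrict y = PowerSeries.X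
  x_dvd_of_restrict_eq_zero : ∀ f, restrict f = 0 → x ∣ f
  eq_zero_of_x_mul_eq_zero : ∀ f, x * f = 0 → f = 0
  swap_swap : ∀ f, swap (swap f) = f
  swap_x : swap x = y
  chart_x : ∀ c, chart c x = x
  chart_y : ∀ c, chart c y = x * (algebraMap K A c + y)
  isUnit_of_constantCoeff_restrict_ne_zero :
    ∀ f, PowerSeries.constantCoeff (restrict f) ≠ 0 → IsUnit f
  exists_eq_x_mul_add_y_mul :
    ∀ f, PowerSeries.constantCoeff (restrict f) = 0 → ∃ f₁ f₂, f = x * f₁ + y * f₂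
  restrict_swap_chart_zero : ∀ f, restrict (swap (chart 0 f)) = restrict (swap f)

variable {K A : Type*} [Field K] [CommRing A] [Algebra K A]

namespace PlaneGermRing

variable (G : PlaneGermRing K A)

/-- The value of a germ at the origin. -/
def value (f : A) : K := PowerSeries.constantCoeff (G.restrict f)

/-- The ideal of the germs vanishing at the origin, given by its generators. -/
def maxIdeal : Ideal A := Ideal.span {G.x, G.y}

theorem swap_y : G.swap G.y = G.x := by rw [← G.swap_x, G.swap_swap]

theorem x_mem_maxIdeal : G.x ∈ G.maxIdeal := Ideal.subset_span (by simp)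

theorem y_mem_maxIdeal : G.y ∈ G.maxIdeal := Ideal.subset_span (by simp)

theorem mem_maxIdeal_pow_succ_iff {n : ℕ} {f : A} :
    f ∈ G.maxIdeal ^ (n + 1) ↔
      ∃ f₁ ∈ G.maxIdeal ^ n, ∃ f₂ ∈ G.maxIdeal ^ n, f = G.x * f₁ + G.y * f₂ := by
  rw [pow_succ', maxIdeal, Ideal.span_insert, Ideal.sup_mul, Submodule.mem_sup]
  simp only [Ideal.mem_span_singleton_mul]
  constructor
  · rintro ⟨_, ⟨f₁, h₁, rfl⟩, _, ⟨f₂, h₂, rfl⟩, rfl⟩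
    exact ⟨f₁, h₁, f₂, h₂, rfl⟩
  · rintro ⟨f₁, h₁, f₂, h₂, rfl⟩
    exact ⟨_, ⟨f₁, h₁, rfl⟩, _, ⟨f₂, h₂, rfl⟩, rfl⟩

theorem mem_maxIdeal_iff_value_eq_zero {f : A} : f ∈ G.maxIdeal ↔ G.value f = 0 := by
  constructor
  · intro h
    rw [← pow_one G.maxIdeal] at h
    obtain ⟨f₁, -, f₂, -, rfl⟩ := G.mem_maxIdeal_pow_succ_iff.1 h
    simp [value, G.restrict_x, G.restrict_y]
  · intro h
    obtain ⟨f₁, f₂, rfl⟩ := G.exists_eq_x_mul_add_y_mul f h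
    exact add_mem (Ideal.mul_mem_right _ _ G.x_mem_maxIdeal)
      (Ideal.mul_mem_right _ _ G.y_mem_maxIdeal)

theorem sub_algebraMap_value_mem_maxIdeal (f : A) :
    f - algebraMap K A (G.value f) ∈ G.maxIdeal :=
  G.mem_maxIdeal_iff_value_eq_zero.2 (by simp [value])

theorem x_pow_mul_cancel {n : ℕ} {f g : A} (h : G.x ^ n * f = G.x ^ n * g) : f = g := by
  induction n with
  | zero => simpa using h
  | succ n ih =>
    apply ih
    have hx : G.x * (G.x ^ n * f - G.x ^ n * g) = 0 := by linear_combination h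
    exact sub_eq_zero.1 (G.eq_zero_of_x_mul_eq_zero _ hx)

theorem swap_mem_maxIdeal_pow {n : ℕ} {f : A} (hf : f ∈ G.maxIdeal ^ n) :
    G.swap f ∈ G.maxIdeal ^ n := by
  induction n generalizing f with
  | zero => simp
  | succ n ih =>
    obtain ⟨f₁, h₁, f₂, h₂, rfl⟩ := G.mem_maxIdeal_pow_succ_iff.1 hf
    refine G.mem_maxIdeal_pow_succ_iff.2 ⟨_, ih h₂, _, ih h₁, ?_⟩
    rw [map_add, map_mul, map_mul, G.swap_x, G.swap_y, add_comm]

theorem value_swap (f : A) : G.value (G.swap f) = G.value f := by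
  have h := G.sub_algebraMap_value_mem_maxIdeal f
  rw [← pow_one G.maxIdeal] at h
  have h' := G.swap_mem_maxIdeal_pow h
  rw [pow_one, mem_maxIdeal_iff_value_eq_zero, map_sub, AlgHom.commutes, value, map_sub,
    map_sub] at h'
  simpa [value] using sub_eq_zero.1 h'

/-- The homogeneous form of degree `n` in `x` and `y` with the given dehomogenization; coefficients
of degree larger than `n` are discarded. -/
def homogenize (n : ℕ) : K[X] →ₗ[K] A :=
  ∑ i ∈ Finset.range (n + 1), (lcoeff K i).smulRight (G.x ^ (n - i) * G.y ^ i)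

theorem homogenize_apply (n : ℕ) (p : K[X]) :
    G.homogenize n p = ∑ i ∈ Finset.range (n + 1), p.coeff i • (G.x ^ (n - i) * G.y ^ i) := by
  simp [homogenize]

theorem homogenize_X_mul (n : ℕ) (p : K[X]) :
    G.homogenize (n + 1) (X * p) = G.y * G.homogenize n p := by
  rw [homogenize_apply, Finset.sum_range_succ', homogenize_apply, Finset.mul_sum]
  simp only [coeff_X_mul, coeff_X_mul_zero, zero_smul, add_zero, mul_smul_comm]
  refine Finset.sum_congr rfl fun i _ => ?_
  rw [Nat.add_sub_add_right, pow_succ', mul_left_comm]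

theorem homogenize_succ {n : ℕ} {p : K[X]} (hp : p.natDegree ≤ n) :
    G.homogenize (n + 1) p = G.x * G.homogenize n p := by
  rw [homogenize_apply, Finset.sum_range_succ, coeff_eq_zero_of_natDegree_lt (by lia),
    homogenize_apply, Finset.mul_sum]
  simp only [zero_smul, add_zero, mul_smul_comm]
  refine Finset.sum_congr rfl fun i hi => ?_
  rw [Nat.succ_sub (by simpa [Nat.lt_succ_iff] using hi), pow_succ', mul_assoc]

theorem homogenize_mem_maxIdeal_pow (n : ℕ) (p : K[X]) :
    G.homogenize n p ∈ G.maxIdeal ^ n := by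
  rw [homogenize_apply]
  refine Ideal.sum_mem _ fun i hi => Submodule.smul_of_tower_mem _ _ ?_
  have hmem := Ideal.mul_mem_mul (Ideal.pow_mem_pow G.x_mem_maxIdeal (n - i))
    (Ideal.pow_mem_pow G.y_mem_maxIdeal i)
  rwa [← pow_add, Nat.sub_add_cancel (Finset.mem_range_succ_iff.1 hi)] at hmem

theorem homogenize_one (n : ℕ) : G.homogenize n 1 = G.x ^ n := by
  rw [homogenize_apply, Finset.sum_range_succ', Finset.sum_eq_zero fun i _ => by simp [coeff_one]]
  simp

theorem swap_homogenize (n : ℕ) (p : K[X]) :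
    G.swap (G.homogenize n p) = G.homogenize n (reflect n p) := by
  rw [homogenize_apply, homogenize_apply, map_sum, ← Finset.sum_range_reflect]
  refine Finset.sum_congr rfl fun i hi => ?_
  have hi' := Finset.mem_range.1 hi
  rw [map_smul, map_mul, map_pow, map_pow, G.swap_x, G.swap_y, coeff_reflect,
    show n + 1 - 1 - i = n - i by lia, revAt_le (by lia), show n - (n - i) = i by lia, mul_comm]

/-- `p` is the dehomogenization of the part of degree `n` of `f`, a germ of order at least `n`. -/
structure IsLeadingForm (n : ℕ) (f : A) (p : K[X]) : Prop where
  natDegree_le : p.natDegree ≤ n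
  sub_mem : f - G.homogenize n p ∈ G.maxIdeal ^ (n + 1)

theorem exists_isLeadingForm {n : ℕ} {f : A} (hf : f ∈ G.maxIdeal ^ n) :
    ∃ p, G.IsLeadingForm n f p := by
  induction n generalizing f with
  | zero =>
    refine ⟨C (G.value f), by simp, ?_⟩
    simpa [homogenize_apply, ← Algebra.algebraMap_eq_smul_one] using
      G.sub_algebraMap_value_mem_maxIdeal f
  | succ n ih =>
    obtain ⟨f₁, h₁, f₂, h₂, rfl⟩ := G.mem_maxIdeal_pow_succ_iff.1 hf
    obtain ⟨p₁, d₁, e₁⟩ := ih h₁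
    obtain ⟨p₂, d₂, e₂⟩ := ih h₂
    refine ⟨p₁ + X * p₂, natDegree_add_le_of_degree_le (by lia) ?_, ?_⟩
    · rw [add_comm]
      exact natDegree_mul_le_of_le natDegree_X_le d₂
    · rw [map_add, homogenize_X_mul, G.homogenize_succ d₁]
      exact G.mem_maxIdeal_pow_succ_iff.2 ⟨_, e₁, _, e₂, by ring⟩

theorem isLeadingForm_x_pow (n : ℕ) : G.IsLeadingForm n (G.x ^ n) 1 where
  natDegree_le := by simp
  sub_mem := by simp [homogenize_one]

/-- `f'` is the transform of `f` of order `n` in the chart centred at `c`, that is, the pullback of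
`f` divided by the `n`-th power of the equation `x` of the exceptional divisor. -/
def IsTransform (c : K) (n : ℕ) (f f' : A) : Prop := G.chart c f = G.x ^ n * f'

theorem exists_isTransform (c : K) {n : ℕ} {f : A} (hf : f ∈ G.maxIdeal ^ n) :
    ∃ f', G.IsTransform c n f f' := by
  induction n generalizing f with
  | zero => exact ⟨G.chart c f, by simp [IsTransform]⟩
  | succ n ih =>
    obtain ⟨f₁, h₁, f₂, h₂, rfl⟩ := G.mem_maxIdeal_pow_succ_iff.1 hf
    obtain ⟨g₁, e₁⟩ := ih h₁
    obtain ⟨g₂, e₂⟩ := ih h₂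
    refine ⟨g₁ + (algebraMap K A c + G.y) * g₂, ?_⟩
    rw [IsTransform, map_add, map_mul, map_mul, G.chart_x, G.chart_y, e₁, e₂]
    ring

theorem isTransform_homogenize (c : K) {n : ℕ} {p : K[X]} (hp : p.natDegree ≤ n) :
    G.IsTransform c n (G.homogenize n p) (aeval (algebraMap K A c + G.y) p) := by
  rw [IsTransform, homogenize_apply, map_sum, aeval_eq_sum_range' (Nat.lt_succ_of_le hp),
    Finset.mul_sum]
  refine Finset.sum_congr rfl fun i hi => ?_
  rw [map_smul, map_mul, map_pow, map_pow, G.chart_x, G.chart_y, mul_pow, ← mul_assoc, ← pow_add,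
    Nat.sub_add_cancel (Finset.mem_range_succ_iff.1 hi), mul_smul_comm]

theorem restrict_aeval (c : K) (p : K[X]) :
    G.restrict (aeval (algebraMap K A c + G.y) p) = taylorSeries c p := by
  have h : G.restrict.comp (aeval (algebraMap K A c + G.y)) = taylorSeries c :=
    algHom_ext (by
      rw [AlgHom.comp_apply, aeval_X, taylorSeries_X, map_add, AlgHom.commutes, G.restrict_y,
        add_comm]
      rfl)
  exact DFunLike.congr_fun h p

theorem restrict_algebraMap_add_y (c : K) :
    G.restrict (algebraMap K A c + G.y) = taylorSeries c X := by
  simpa using G.restrict_aeval c X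

variable {G}

theorem IsTransform.mul {c : K} {n k : ℕ} {f f' g g' : A} (hf : G.IsTransform c n f f')
    (hg : G.IsTransform c k g g') : G.IsTransform c (n + k) (f * g) (f' * g') := by
  rw [IsTransform, map_mul, hf, hg]
  ring

theorem IsLeadingForm.mem {n : ℕ} {f : A} {p : K[X]} (h : G.IsLeadingForm n f p) :
    f ∈ G.maxIdeal ^ n := by
  simpa using add_mem (Ideal.pow_le_pow_right (Nat.le_succ n) h.sub_mem)
    (G.homogenize_mem_maxIdeal_pow n p)

theorem IsLeadingForm.mem_succ {n : ℕ} {f : A} (h : G.IsLeadingForm n f 0) :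
    f ∈ G.maxIdeal ^ (n + 1) := by
  simpa using h.sub_mem

theorem IsLeadingForm.restrict_eq {n : ℕ} {f : A} {p : K[X]} (h : G.IsLeadingForm n f p) {c : K}
    {f' : A} (hf : G.IsTransform c n f f') : G.restrict f' = taylorSeries c p := by
  obtain ⟨g, hg⟩ := G.exists_isTransform c h.sub_mem
  have hf' : f' = aeval (algebraMap K A c + G.y) p + G.x * g := by
    apply G.x_pow_mul_cancel (n := n)
    have hdecomp := (map_sub _ _ _).symm.trans hg
    rw [hf, G.isTransform_homogenize c h.natDegree_le, sub_eq_iff_eq_add] at hdecomp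
    rw [hdecomp]
    ring
  rw [hf', map_add, map_mul, G.restrict_x, zero_mul, add_zero, restrict_aeval]

theorem IsLeadingForm.eq_zero_of_mem {n : ℕ} {f : A} {p : K[X]} (h : G.IsLeadingForm n f p)
    (hf : f ∈ G.maxIdeal ^ (n + 1)) : p = 0 := by
  obtain ⟨g, hg⟩ := G.exists_isTransform 0 hf
  have hp := h.restrict_eq (c := 0) (f' := G.x * g) (by rw [IsTransform, hg]; ring)
  rw [map_mul, G.restrict_x, zero_mul] at hp
  exact taylorSeries_injective 0 (by rw [← hp, map_zero])

theorem IsLeadingForm.eq_mul {n k : ℕ} {f g : A} {p q r : K[X]} (hf : G.IsLeadingForm n f p)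
    (hg : G.IsLeadingForm k g q) (hr : G.IsLeadingForm (n + k) (f * g) r) : r = p * q := by
  obtain ⟨f', hf'⟩ := G.exists_isTransform 0 hf.mem
  obtain ⟨g', hg'⟩ := G.exists_isTransform 0 hg.mem
  apply taylorSeries_injective 0
  rw [← hr.restrict_eq (hf'.mul hg'), map_mul, hf.restrict_eq hf', hg.restrict_eq hg', map_mul]

theorem IsLeadingForm.mem_of_mul_mem {n k : ℕ} {f g : A} {p : K[X]} (hf : G.IsLeadingForm n f p)
    (hp : p ≠ 0) (h : f * g ∈ G.maxIdeal ^ (n + k)) : g ∈ G.maxIdeal ^ k := by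
  induction k with
  | zero => simp
  | succ k ih =>
    have hfg := Ideal.pow_le_pow_right (Nat.le_succ (n + k)) h
    obtain ⟨q, hq⟩ := G.exists_isLeadingForm (ih hfg)
    obtain ⟨r, hr⟩ := G.exists_isLeadingForm hfg
    have hpq : p * q = 0 := (hf.eq_mul hq hr).symm.trans (hr.eq_zero_of_mem h)
    obtain rfl := (mul_eq_zero.1 hpq).resolve_left hp
    exact hq.mem_succ

theorem IsLeadingForm.swap {n : ℕ} {f : A} {p : K[X]} (h : G.IsLeadingForm n f p) :
    G.IsLeadingForm n (G.swap f) (reflect n p) where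
  natDegree_le := natDegree_reflect_le.trans (by simpa using h.natDegree_le)
  sub_mem := by
    rw [← swap_homogenize, ← map_sub]
    exact G.swap_mem_maxIdeal_pow h.sub_mem

variable (G)

theorem not_maxIdeal_pow_le_succ (n : ℕ) : ¬ G.maxIdeal ^ n ≤ G.maxIdeal ^ (n + 1) := fun h =>
  one_ne_zero <|
    (G.isLeadingForm_x_pow n).eq_zero_of_mem (h (Ideal.pow_mem_pow G.x_mem_maxIdeal n))

end PlaneGermRing

end

/-! ### Noether's inequality -/

section

variable {K V : Type*} [Field K] [AddCommGroup V] [Module K V]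

/-- The codimension of a subspace, with junk value `0` when it is infinite. -/
def codim (W : Submodule K V) : ℕ := Module.finrank K (V ⧸ W)

theorem finite_quotient_of_le {W U : Submodule K V} (h : W ≤ U) [Module.Finite K (V ⧸ W)] :
    Module.Finite K (V ⧸ U) :=
  Module.Finite.of_surjective (Submodule.factor h) (Submodule.factor_surjective h)

theorem finite_quotient_of_finite_map_mkQ {W U : Submodule K V} (h : W ≤ U)
    [Module.Finite K (V ⧸ U)] [Module.Finite K (U.map W.mkQ)] : Module.Finite K (V ⧸ W) :=
  have : Module.Finite K ((V ⧸ W) ⧸ U.map W.mkQ) :=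
    Module.Finite.equiv (Submodule.quotientQuotientEquivQuotient W U h).symm
  Module.Finite.of_submodule_quotient (U.map W.mkQ)

theorem codim_eq_codim_add_finrank_map {W U : Submodule K V} (h : W ≤ U)
    [Module.Finite K (V ⧸ W)] : codim W = codim U + Module.finrank K (U.map W.mkQ) := by
  rw [codim, codim, ← (Submodule.quotientQuotientEquivQuotient W U h).finrank_eq,
    Submodule.finrank_quotient_add_finrank]

theorem finrank_le_finrank_map_mkQ_of_surjective {V' : Type*} [AddCommGroup V'] [Module K V']
    {W U : Submodule K V} [Module.Finite K (V ⧸ W)] (φ : U →ₗ[K] V')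
    (hφ : Function.Surjective φ) (hW : ∀ u : U, (u : V) ∈ W → φ u = 0) :
    Module.finrank K V' ≤ Module.finrank K (U.map W.mkQ) := by
  set π := W.mkQ.comp U.subtype with hπ
  have hrange : U.map W.mkQ = LinearMap.range π := by
    rw [hπ, LinearMap.range_comp, Submodule.range_subtype]
  have hker : LinearMap.ker π ≤ LinearMap.ker φ := fun u hu => hW u (by simpa [hπ] using hu)
  have : Module.Finite K (U ⧸ LinearMap.ker π) := Module.Finite.equiv π.quotKerEquivRange.symm
  rw [hrange, ← π.quotKerEquivRange.finrank_eq]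
  refine LinearMap.finrank_le_finrank_of_surjective (f := Submodule.liftQ _ φ hker) fun z => ?_
  obtain ⟨u, rfl⟩ := hφ z
  exact ⟨Submodule.Quotient.mk u, by simp⟩

theorem finrank_range_add_finrank_le_of_injective {U W : Type*} [AddCommGroup U] [Module K U]
    [AddCommGroup W] [Module K W] [Module.Finite K W] {φ : U →ₗ[K] W} {ψ : W →ₗ[K] V}
    (hφ : Function.Injective φ) (h : ψ.comp φ = 0) :
    Module.finrank K (LinearMap.range ψ) + Module.finrank K U ≤ Module.finrank K W := by
  have hle : LinearMap.range φ ≤ LinearMap.ker ψ := LinearMap.range_le_ker_iff.2 h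
  rw [← LinearMap.finrank_range_add_finrank_ker ψ, ← LinearMap.finrank_range_of_inj hφ]
  gcongr
  exact Submodule.finrank_mono hle

end

section

variable {K A : Type*} [Field K] [CommRing A] [Algebra K A]

/-- Multiplication by `a` as a map between the quotients by two ideals. -/
def mulQuotient (a : A) (I J : Ideal A) (h : ∀ f ∈ I, a * f ∈ J) :
    A ⧸ I.restrictScalars K →ₗ[K] A ⧸ J.restrictScalars K :=
  Submodule.mapQ _ _ (LinearMap.mulLeft K a) h

variable (K) in
/-- The intersection multiplicity of the curves `a = 0` and `b = 0`, with junk value `0` when it is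
infinite. -/
def intersectionNumber (a b : A) : ℕ := codim ((Ideal.span {a, b}).restrictScalars K)

theorem intersectionNumber_comm (a b : A) :
    intersectionNumber K a b = intersectionNumber K b a := by
  rw [intersectionNumber, Ideal.span_pair_comm, intersectionNumber]

namespace PlaneGermRing

variable (G : PlaneGermRing K A)

/-- The class modulo `𝔪ⁿ⁺¹` of the form of degree `n` with the given dehomogenization. -/
def homogenizeQuotient (n : ℕ) :
    degreeLT K (n + 1) →ₗ[K] A ⧸ (G.maxIdeal ^ (n + 1)).restrictScalars K :=
  (Submodule.mkQ _).comp ((G.homogenize n).comp (Submodule.subtype _))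

theorem homogenizeQuotient_injective (n : ℕ) : Function.Injective (G.homogenizeQuotient n) := by
  rw [injective_iff_map_eq_zero]
  rintro ⟨p, hp⟩ h
  rw [degreeLT_succ_eq_degreeLE, mem_degreeLE, ← natDegree_le_iff_degree_le] at hp
  have hlead : G.IsLeadingForm n (G.homogenize n p) p := ⟨hp, by simp⟩
  simpa using hlead.eq_zero_of_mem ((Submodule.Quotient.mk_eq_zero _).1 h)

theorem range_homogenizeQuotient (n : ℕ) :
    LinearMap.range (G.homogenizeQuotient n) =
      ((G.maxIdeal ^ n).restrictScalars K).map
        ((G.maxIdeal ^ (n + 1)).restrictScalars K).mkQ := by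
  apply le_antisymm
  · rintro _ ⟨p, rfl⟩
    exact ⟨_, G.homogenize_mem_maxIdeal_pow n p, rfl⟩
  · rintro _ ⟨f, hf, rfl⟩
    obtain ⟨p, hp⟩ := G.exists_isLeadingForm hf
    have hdeg := hp.natDegree_le
    rw [natDegree_le_iff_degree_le, ← mem_degreeLE, ← degreeLT_succ_eq_degreeLE] at hdeg
    exact ⟨⟨p, hdeg⟩, ((Submodule.Quotient.eq _).2 hp.sub_mem).symm⟩

theorem finrank_degreeLT (n : ℕ) : Module.finrank K (degreeLT K n) = n := by
  rw [(degreeLTEquiv K n).finrank_eq, Module.finrank_fin_fun]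

instance finite_degreeLT (n : ℕ) : Module.Finite K (degreeLT K n) :=
  Module.Finite.equiv (degreeLTEquiv K n).symm

theorem maxIdeal_pow_succ_le (n : ℕ) :
    (G.maxIdeal ^ (n + 1)).restrictScalars K ≤ (G.maxIdeal ^ n).restrictScalars K :=
  Ideal.pow_le_pow_right (Nat.le_succ n)

instance subsingleton_quotient_maxIdeal_pow_zero :
    Subsingleton (A ⧸ (G.maxIdeal ^ 0).restrictScalars K) :=
  Submodule.Quotient.subsingleton_iff.2 (by simp)

instance finite_quotient_maxIdeal_pow (n : ℕ) :
    Module.Finite K (A ⧸ (G.maxIdeal ^ n).restrictScalars K) := by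
  induction n with
  | zero => infer_instance
  | succ n ih =>
    have : Module.Finite K (((G.maxIdeal ^ n).restrictScalars K).map
        ((G.maxIdeal ^ (n + 1)).restrictScalars K).mkQ) := by
      rw [← range_homogenizeQuotient]
      infer_instance
    exact finite_quotient_of_finite_map_mkQ (G.maxIdeal_pow_succ_le n)

theorem two_mul_codim_maxIdeal_pow (n : ℕ) :
    2 * codim ((G.maxIdeal ^ n).restrictScalars K) = n * (n + 1) := by
  induction n with
  | zero => rw [codim, Module.finrank_zero_of_subsingleton, mul_zero, zero_mul]
  | succ n ih =>
    rw [codim_eq_codim_add_finrank_map (G.maxIdeal_pow_succ_le n), ← range_homogenizeQuotient,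
      LinearMap.finrank_range_of_inj (G.homogenizeQuotient_injective n), finrank_degreeLT, mul_add,
      ih]
    ring

/-- The ideal contains a power of the maximal ideal. -/
def IsCofinite (I : Ideal A) : Prop := ∃ N, G.maxIdeal ^ N ≤ I

variable {G} in
theorem IsCofinite.finite_quotient {I : Ideal A} (h : G.IsCofinite I) :
    Module.Finite K (A ⧸ I.restrictScalars K) :=
  have ⟨N, hN⟩ := h
  finite_quotient_of_le (W := (G.maxIdeal ^ N).restrictScalars K) hN

theorem x_pow_mem_span_of_isTransform {n k N : ℕ} {a b a' b' : A} {c : K}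
    (ha : G.IsTransform c n a a') (hb : G.IsTransform c k b b')
    (hN : G.x ^ N ∈ Ideal.span {a, b}) : G.x ^ N ∈ Ideal.span {a', b'} := by
  obtain ⟨u, v, h⟩ := Ideal.mem_span_pair.1 hN
  refine Ideal.mem_span_pair.2 ⟨G.chart c u * G.x ^ n, G.chart c v * G.x ^ k, ?_⟩
  rw [mul_assoc, mul_assoc, ← ha, ← hb, ← map_mul, ← map_mul, ← map_add, h, map_pow, G.chart_x]

-- A weak form of the Weierstrass preparation theorem.
theorem exists_y_pow_eq {f : A} (hf : G.restrict f ≠ 0) :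
    ∃ l s t, G.y ^ l = f * t + G.x * s := by
  obtain ⟨l, hl⟩ := PowerSeries.exists_coeff_ne_zero_iff_ne_zero.2 hf
  clear hf
  induction l generalizing f with
  | zero =>
    obtain ⟨u, rfl⟩ := G.isUnit_of_constantCoeff_restrict_ne_zero f (by simpa using hl)
    exact ⟨0, 0, ↑u⁻¹, by simp⟩
  | succ l ih =>
    by_cases h0 : PowerSeries.constantCoeff (G.restrict f) = 0
    · obtain ⟨f₁, f₂, rfl⟩ := G.exists_eq_x_mul_add_y_mul f h0
      rw [map_add, map_mul, map_mul, G.restrict_x, G.restrict_y, zero_mul, zero_add,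
        PowerSeries.coeff_succ_X_mul] at hl
      obtain ⟨l', s, t, h⟩ := ih hl
      refine ⟨l' + 1, G.y * s - f₁ * t, t, ?_⟩
      rw [pow_succ, h]
      ring
    · obtain ⟨u, rfl⟩ := G.isUnit_of_constantCoeff_restrict_ne_zero f h0
      exact ⟨0, 0, ↑u⁻¹, by simp⟩

theorem isCofinite_of_mem {I : Ideal A} {N : ℕ} (hx : G.x ^ N ∈ I) {f : A} (hf : f ∈ I)
    (h : G.restrict f ≠ 0) : G.IsCofinite I := by
  obtain ⟨l, s, t, hy⟩ := G.exists_y_pow_eq h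
  refine Ideal.exists_pow_le_of_le_radical_of_fg ?_ (Submodule.fg_span (Set.toFinite _))
  rw [maxIdeal, Ideal.span_le]
  rintro z (rfl | rfl)
  · exact ⟨N, hx⟩
  · refine ⟨l * N, ?_⟩
    have hdvd : f ∣ (G.y ^ l) ^ N - (G.x * s) ^ N := by
      refine Dvd.dvd.trans ⟨t, ?_⟩ (sub_dvd_pow_sub_pow _ _ N)
      rw [hy, add_sub_cancel_right]
    have hxs : (G.x * s) ^ N ∈ I := by
      rw [mul_pow]
      exact Ideal.mul_mem_right _ _ hx
    rw [pow_mul]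
    exact (Submodule.sub_mem_iff_left _ hxs).1 (Ideal.mem_of_dvd _ hdvd hf)

variable {G} in
theorem IsLeadingForm.restrict_ne_zero {n : ℕ} {f f' : A} {p : K[X]} {c : K}
    (h : G.IsLeadingForm n f p) (hp : p ≠ 0) (hf : G.IsTransform c n f f') :
    G.restrict f' ≠ 0 := by
  rw [h.restrict_eq hf, Ne, map_eq_zero_iff _ (taylorSeries_injective c)]
  exact hp

/-- The truncation of `(a, b)` whose colength is compared with those of the powers of `𝔪`; here
`n` and `k` are the orders of `a` and `b`. -/
def truncatedIdeal (n k t : ℕ) (a b : A) : Ideal A :=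
  Ideal.span {a} * G.maxIdeal ^ (t + k) ⊔ Ideal.span {b} * G.maxIdeal ^ (t + n)

theorem mul_mem_maxIdeal_pow {n k : ℕ} {f g : A} (hf : f ∈ G.maxIdeal ^ n)
    (hg : g ∈ G.maxIdeal ^ k) : f * g ∈ G.maxIdeal ^ (k + n) := by
  rw [add_comm, pow_add]
  exact Ideal.mul_mem_mul hf hg

/-- The forms `p` and `q`, not both zero, are the parts of degrees `n` and `k` of the germs `a` and
`b`, of orders at least `n` and `k`. -/
structure IsLeadingPair (n k : ℕ) (a b : A) (p q : K[X]) : Prop where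
  fst : G.IsLeadingForm n a p
  snd : G.IsLeadingForm k b q
  ne_zero : p ≠ 0 ∨ q ≠ 0

variable {G} in
theorem IsLeadingPair.symm {n k : ℕ} {a b : A} {p q : K[X]} (h : G.IsLeadingPair n k a b p q) :
    G.IsLeadingPair k n b a q p :=
  ⟨h.snd, h.fst, h.ne_zero.symm⟩

variable {G} in
theorem IsLeadingPair.swap {n k : ℕ} {a b : A} {p q : K[X]} (h : G.IsLeadingPair n k a b p q) :
    G.IsLeadingPair n k (G.swap a) (G.swap b) (reflect n p) (reflect k q) :=
  ⟨h.fst.swap, h.snd.swap, by simpa [reflect_eq_zero_iff] using h.ne_zero⟩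

section

variable {n k t : ℕ} {a b : A}

theorem mul_left_mem_truncatedIdeal {f : A} (hf : f ∈ G.maxIdeal ^ (t + k)) :
    a * f ∈ G.truncatedIdeal n k t a b :=
  Ideal.mem_sup_left (Ideal.mul_mem_mul (Ideal.mem_span_singleton_self a) hf)

theorem mul_right_mem_truncatedIdeal {f : A} (hf : f ∈ G.maxIdeal ^ (t + n)) :
    b * f ∈ G.truncatedIdeal n k t a b :=
  Ideal.mem_sup_right (Ideal.mul_mem_mul (Ideal.mem_span_singleton_self b) hf)

theorem truncatedIdeal_le_maxIdeal_pow (ha : a ∈ G.maxIdeal ^ n) (hb : b ∈ G.maxIdeal ^ k) :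
    G.truncatedIdeal n k t a b ≤ G.maxIdeal ^ (t + n + k) := by
  refine sup_le ?_ ?_ <;>
    rw [Ideal.span_singleton_mul_le_iff] <;> intro f hf
  · exact add_right_comm t n k ▸ G.mul_mem_maxIdeal_pow ha hf
  · exact G.mul_mem_maxIdeal_pow hb hf

theorem truncatedIdeal_le_span : G.truncatedIdeal n k t a b ≤ Ideal.span {a, b} := by
  rw [Ideal.span_insert]
  exact sup_le_sup Ideal.mul_le_left Ideal.mul_le_left

theorem isCofinite_truncatedIdeal (h : G.IsCofinite (Ideal.span {a, b})) :
    G.IsCofinite (G.truncatedIdeal n k t a b) := by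
  obtain ⟨N, hN⟩ := h
  refine ⟨N + (t + n + k), ?_⟩
  rw [pow_add]
  refine (Ideal.mul_mono_left hN).trans ?_
  rw [Ideal.span_insert, Ideal.sup_mul]
  exact sup_le_sup (Ideal.mul_mono_right (Ideal.pow_le_pow_right (by lia)))
    (Ideal.mul_mono_right (Ideal.pow_le_pow_right (by lia)))

theorem finite_quotient_truncatedIdeal (h : G.IsCofinite (Ideal.span {a, b})) :
    Module.Finite K (A ⧸ (G.truncatedIdeal n k t a b).restrictScalars K) :=
  (G.isCofinite_truncatedIdeal h).finite_quotient

/-- The map `(u, v) ↦ a u + b v` onto the ideal `(a, b)` modulo its truncation. -/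
def koszulSum (n k t : ℕ) (a b : A) :
    (A ⧸ (G.maxIdeal ^ (t + k)).restrictScalars K) ×
      (A ⧸ (G.maxIdeal ^ (t + n)).restrictScalars K) →ₗ[K]
        A ⧸ (G.truncatedIdeal n k t a b).restrictScalars K :=
  (mulQuotient a _ _ fun _ => G.mul_left_mem_truncatedIdeal).coprod
    (mulQuotient b _ _ fun _ => G.mul_right_mem_truncatedIdeal)

theorem range_koszulSum :
    LinearMap.range (G.koszulSum n k t a b) =
      ((Ideal.span {a, b}).restrictScalars K).map
        ((G.truncatedIdeal n k t a b).restrictScalars K).mkQ := by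
  apply le_antisymm
  · rintro _ ⟨⟨u, v⟩, rfl⟩
    obtain ⟨u, rfl⟩ := Submodule.Quotient.mk_surjective _ u
    obtain ⟨v, rfl⟩ := Submodule.Quotient.mk_surjective _ v
    exact ⟨a * u + b * v, Ideal.mem_span_pair.2 ⟨u, v, by ring⟩, rfl⟩
  · rintro _ ⟨f, hf, rfl⟩
    obtain ⟨u, v, rfl⟩ := Ideal.mem_span_pair.1 hf
    refine ⟨(Submodule.Quotient.mk u, Submodule.Quotient.mk v), ?_⟩
    rw [mul_comm u, mul_comm v]
    rfl

/-- The syzygy `f ↦ (b f, -a f)` between the two generators. -/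
def koszulSyzygy (t : ℕ) (ha : a ∈ G.maxIdeal ^ n) (hb : b ∈ G.maxIdeal ^ k) :
    A ⧸ (G.maxIdeal ^ t).restrictScalars K →ₗ[K]
      (A ⧸ (G.maxIdeal ^ (t + k)).restrictScalars K) ×
        (A ⧸ (G.maxIdeal ^ (t + n)).restrictScalars K) :=
  (mulQuotient b _ _ fun _ => G.mul_mem_maxIdeal_pow hb).prod
    (mulQuotient (-a) _ _ fun _ => G.mul_mem_maxIdeal_pow (neg_mem ha))

theorem koszulSum_comp_koszulSyzygy (ha : a ∈ G.maxIdeal ^ n) (hb : b ∈ G.maxIdeal ^ k) :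
    (G.koszulSum n k t a b).comp (G.koszulSyzygy t ha hb) = 0 := by
  ext f
  have hzero : a * (b * f) + b * (-a * f) = 0 := by ring
  exact congrArg Submodule.Quotient.mk hzero

theorem koszulSyzygy_injective {p q : K[X]} (h : G.IsLeadingPair n k a b p q) :
    Function.Injective (G.koszulSyzygy t h.fst.mem h.snd.mem) := by
  rw [injective_iff_map_eq_zero]
  intro w hw
  obtain ⟨f, rfl⟩ := Submodule.Quotient.mk_surjective _ w
  have hbf : b * f ∈ G.maxIdeal ^ (t + k) :=
    (Submodule.Quotient.mk_eq_zero _).1 (congrArg Prod.fst hw)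
  have haf : -a * f ∈ G.maxIdeal ^ (t + n) :=
    (Submodule.Quotient.mk_eq_zero _).1 (congrArg Prod.snd hw)
  rw [neg_mul, neg_mem_iff] at haf
  refine (Submodule.Quotient.mk_eq_zero _).2 ?_
  rcases h.ne_zero with hp | hq
  · exact h.fst.mem_of_mul_mem hp (add_comm n t ▸ haf)
  · exact h.snd.mem_of_mul_mem hq (add_comm k t ▸ hbf)

theorem finrank_map_mkQ_truncatedIdeal_add_codim_le {p q : K[X]}
    (h : G.IsLeadingPair n k a b p q) (t : ℕ) :
    Module.finrank K (((Ideal.span {a, b}).restrictScalars K).map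
        ((G.truncatedIdeal n k t a b).restrictScalars K).mkQ) +
      codim ((G.maxIdeal ^ t).restrictScalars K) ≤
    codim ((G.maxIdeal ^ (t + k)).restrictScalars K) +
      codim ((G.maxIdeal ^ (t + n)).restrictScalars K) := by
  rw [← range_koszulSum]
  exact (finrank_range_add_finrank_le_of_injective (G.koszulSyzygy_injective h)
    (G.koszulSum_comp_koszulSyzygy h.fst.mem h.snd.mem)).trans_eq Module.finrank_prod

end

/-- The transform of order `k` in the chart centred at `c`, as a linear map on `𝔪ᵏ`. -/
def transform (c : K) (k : ℕ) : (G.maxIdeal ^ k).restrictScalars K →ₗ[K] A where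
  toFun f := (G.exists_isTransform c f.2).choose
  map_add' f g := G.x_pow_mul_cancel <| by
    rw [← (G.exists_isTransform c (f + g).2).choose_spec, mul_add,
      ← (G.exists_isTransform c f.2).choose_spec, ← (G.exists_isTransform c g.2).choose_spec,
      Submodule.coe_add, map_add]
  map_smul' a f := G.x_pow_mul_cancel <| by
    rw [← (G.exists_isTransform c (a • f).2).choose_spec, RingHom.id_apply, mul_smul_comm,
      ← (G.exists_isTransform c f.2).choose_spec, Submodule.coe_smul, map_smul]

variable {G} in
theorem IsTransform.transform_eq {c : K} {k : ℕ} {f f' : A}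
    (hf : f ∈ (G.maxIdeal ^ k).restrictScalars K) (h : G.IsTransform c k f f') :
    G.transform c k ⟨f, hf⟩ = f' :=
  G.x_pow_mul_cancel ((G.exists_isTransform c hf).choose_spec.symm.trans h)

/-- The form in `x` and `y - c x` with the coefficients of `p` in degrees at most `n`, made
homogeneous of degree `k + n - i` in degree `i`, so that its transform of order `k` is the
homogenization of `p` in degree `n`. -/
def untransform (c : K) (k n : ℕ) (p : K[X]) : A :=
  ∑ i ∈ Finset.range (n + 1),
    p.coeff i • (G.x ^ (k + n - 2 * i) * (G.y - algebraMap K A c * G.x) ^ i)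

theorem untransform_mem (c : K) {k n : ℕ} (hn : n ≤ k) (p : K[X]) :
    G.untransform c k n p ∈ G.maxIdeal ^ k := by
  refine Ideal.sum_mem _ fun i hi => Submodule.smul_of_tower_mem _ _ ?_
  have hi' := Finset.mem_range_succ_iff.1 hi
  have hmem := G.mul_mem_maxIdeal_pow (Ideal.pow_mem_pow G.x_mem_maxIdeal (k + n - 2 * i))
    (Ideal.pow_mem_pow (sub_mem G.y_mem_maxIdeal
      (Ideal.mul_mem_left _ (algebraMap K A c) G.x_mem_maxIdeal)) i)
  exact Ideal.pow_le_pow_right (by lia) hmem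

theorem isTransform_untransform (c : K) {k n : ℕ} (hn : n ≤ k) (p : K[X]) :
    G.IsTransform c k (G.untransform c k n p) (G.homogenize n p) := by
  rw [IsTransform, untransform, homogenize_apply, map_sum, Finset.mul_sum]
  refine Finset.sum_congr rfl fun i hi => ?_
  have hi' := Finset.mem_range_succ_iff.1 hi
  have hy : G.chart c (G.y - algebraMap K A c * G.x) = G.x * G.y := by
    rw [map_sub, map_mul, AlgHom.commutes, G.chart_x, G.chart_y]
    ring
  have hpow : G.x ^ (k + n - 2 * i) * G.x ^ i = G.x ^ k * G.x ^ (n - i) := by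
    rw [← pow_add, ← pow_add]
    congr 1
    lia
  rw [map_smul, map_mul, map_pow, map_pow, G.chart_x, hy, mul_pow, ← mul_assoc, hpow, mul_assoc,
    mul_smul_comm]

theorem exists_isTransform_sub_mem (c : K) {k n : ℕ} (hn : n ≤ k + 1) (g : A) :
    ∃ f ∈ G.maxIdeal ^ k, ∃ f', G.IsTransform c k f f' ∧ g - f' ∈ G.maxIdeal ^ n := by
  induction n with
  | zero => exact ⟨0, by simp, 0, by simp [IsTransform], by simp⟩
  | succ n ih =>
    obtain ⟨f, hf, f', hff', hg⟩ := ih (by lia)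
    obtain ⟨p, hp⟩ := G.exists_isLeadingForm hg
    have hn' : n ≤ k := by lia
    refine ⟨f + G.untransform c k n p, add_mem hf (G.untransform_mem c hn' p),
      f' + G.homogenize n p, ?_, ?_⟩
    · rw [IsTransform, map_add, hff', G.isTransform_untransform c hn' p, mul_add]
    · rw [← sub_sub]
      exact hp.sub_mem

section

variable {n k : ℕ} {a b a' b' : A} {c : K}

theorem exists_isTransform_of_mem_truncatedIdeal {t : ℕ} (ha : G.IsTransform c n a a')
    (hb : G.IsTransform c k b b') {f : A} (hf : f ∈ G.truncatedIdeal n k t a b) :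
    ∃ f' ∈ Ideal.span {a', b'}, G.IsTransform c (t + n + k) f f' := by
  obtain ⟨_, h₁, _, h₂, rfl⟩ := Submodule.mem_sup.1 hf
  obtain ⟨u, hu, rfl⟩ := Ideal.mem_span_singleton_mul.1 h₁
  obtain ⟨v, hv, rfl⟩ := Ideal.mem_span_singleton_mul.1 h₂
  obtain ⟨u', hu'⟩ := G.exists_isTransform c hu
  obtain ⟨v', hv'⟩ := G.exists_isTransform c hv
  refine ⟨u' * a' + v' * b', Ideal.mem_span_pair.2 ⟨_, _, rfl⟩, ?_⟩
  rw [IsTransform, map_add, map_mul, map_mul, ha, hb, hu', hv']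
  ring

theorem intersectionNumber_le_finrank_map_mkQ_truncatedIdeal {t : ℕ} (ha : G.IsTransform c n a a')
    (hb : G.IsTransform c k b b') (hcof : G.IsCofinite (Ideal.span {a, b}))
    (ht : G.maxIdeal ^ t ≤ Ideal.span {a', b'}) :
    intersectionNumber K a' b' ≤
      Module.finrank K (((G.maxIdeal ^ (t + n + k)).restrictScalars K).map
        ((G.truncatedIdeal n k t a b).restrictScalars K).mkQ) := by
  have := G.finite_quotient_truncatedIdeal (n := n) (k := k) (t := t) hcof
  refine finrank_le_finrank_map_mkQ_of_surjective
    (((Ideal.span {a', b'}).restrictScalars K).mkQ.comp (G.transform c (t + n + k))) ?_ ?_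
  · intro z
    obtain ⟨g, rfl⟩ := Submodule.Quotient.mk_surjective _ z
    obtain ⟨f, hf, f', hff', hg⟩ := G.exists_isTransform_sub_mem c (by lia : t ≤ t + n + k + 1) g
    refine ⟨⟨f, hf⟩, ?_⟩
    rw [LinearMap.comp_apply, hff'.transform_eq hf]
    exact ((Submodule.Quotient.eq _).2 (ht hg)).symm
  · rintro ⟨f, hf⟩ hmem
    obtain ⟨f', hf', hff'⟩ := G.exists_isTransform_of_mem_truncatedIdeal ha hb hmem
    rw [LinearMap.comp_apply, hff'.transform_eq hf]
    exact (Submodule.Quotient.mk_eq_zero _).2 hf'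

variable {p q : K[X]}

variable {G} in
theorem IsCofinite.transform (hcof : G.IsCofinite (Ideal.span {a, b}))
    (h : G.IsLeadingPair n k a b p q) (ha : G.IsTransform c n a a')
    (hb : G.IsTransform c k b b') : G.IsCofinite (Ideal.span {a', b'}) := by
  obtain ⟨N, hN⟩ := hcof
  have hx := G.x_pow_mem_span_of_isTransform ha hb (hN (Ideal.pow_mem_pow G.x_mem_maxIdeal N))
  rcases h.ne_zero with hp | hq
  · exact G.isCofinite_of_mem hx (Ideal.subset_span (by simp)) (h.fst.restrict_ne_zero hp ha)
  · exact G.isCofinite_of_mem hx (Ideal.subset_span (by simp)) (h.snd.restrict_ne_zero hq hb)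

/- Noether's inequality: the intersection multiplicity of two curves drops under blow-up by at
least the product of their multiplicities. -/
theorem intersectionNumber_transform_add_mul_le (hcof : G.IsCofinite (Ideal.span {a, b}))
    (h : G.IsLeadingPair n k a b p q) (ha : G.IsTransform c n a a')
    (hb : G.IsTransform c k b b') :
    intersectionNumber K a' b' + n * k ≤ intersectionNumber K a b := by
  obtain ⟨t, ht⟩ := hcof.transform h ha hb
  have := G.finite_quotient_truncatedIdeal (n := n) (k := k) (t := t) hcof
  have hspan := codim_eq_codim_add_finrank_map (K := K)
    (W := (G.truncatedIdeal n k t a b).restrictScalars K)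
    (U := (Ideal.span {a, b}).restrictScalars K) G.truncatedIdeal_le_span
  have hpow := codim_eq_codim_add_finrank_map (K := K)
    (W := (G.truncatedIdeal n k t a b).restrictScalars K)
    (U := (G.maxIdeal ^ (t + n + k)).restrictScalars K)
    (G.truncatedIdeal_le_maxIdeal_pow h.fst.mem h.snd.mem)
  have hkoszul := G.finrank_map_mkQ_truncatedIdeal_add_codim_le h t
  have hle := G.intersectionNumber_le_finrank_map_mkQ_truncatedIdeal ha hb hcof ht
  have h₀ := G.two_mul_codim_maxIdeal_pow t
  have h₁ := G.two_mul_codim_maxIdeal_pow (t + k)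
  have h₂ := G.two_mul_codim_maxIdeal_pow (t + n)
  have h₃ := G.two_mul_codim_maxIdeal_pow (t + n + k)
  simp only [intersectionNumber] at hle ⊢
  nlinarith

end

theorem map_swap_span_pair (a b : A) :
    (Ideal.span {a, b}).map G.swap = Ideal.span {G.swap a, G.swap b} := by
  rw [Ideal.map_span, Set.image_pair]

theorem intersectionNumber_swap (a b : A) :
    intersectionNumber K (G.swap a) (G.swap b) = intersectionNumber K a b := by
  let e : A ≃ₗ[K] A := LinearEquiv.ofInvolutive G.swap.toLinearMap G.swap_swap
  refine (Submodule.Quotient.equiv _ _ e ?_).finrank_eq.symm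
  ext f
  rw [← map_swap_span_pair]
  exact (Ideal.mem_map_iff_of_surjective G.swap fun f => ⟨_, G.swap_swap f⟩).symm

variable {G} in
theorem IsCofinite.swap {a b : A} (h : G.IsCofinite (Ideal.span {a, b})) :
    G.IsCofinite (Ideal.span {G.swap a, G.swap b}) := by
  obtain ⟨N, hN⟩ := h
  refine ⟨N, fun f hf => ?_⟩
  rw [← map_swap_span_pair, ← G.swap_swap f]
  exact Ideal.mem_map_of_mem _ (hN (G.swap_mem_maxIdeal_pow hf))

end PlaneGermRing

end

/-! ### Camacho–Sad indices -/

section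

variable {K : Type*} [Field K]

theorem residue_zero_left (g : K⟦X⟧) : residue 0 g = 0 := by simp [residue]

theorem residue_zero_right (f : K⟦X⟧) : residue f 0 = 0 := by simp [residue]

theorem coeff_inv_X_mul_coe (f : K⟦X⟧) :
    (((PowerSeries.X : K⟦X⟧) : K⸨X⸩)⁻¹ * (f : K⸨X⸩)).coeff (-1) = PowerSeries.constantCoeff f := by
  rw [PowerSeries.coe_X, HahnSeries.inv_single, HahnSeries.coeff_single_mul, inv_one, one_mul,
    sub_self, coeff_coe_zero]

theorem residue_X_mul (f : K⟦X⟧) {g : K⟦X⟧} (hg : PowerSeries.constantCoeff g ≠ 0) :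
    residue f (PowerSeries.X * g) =
      PowerSeries.constantCoeff f / PowerSeries.constantCoeff g := by
  rw [residue, div_eq_mul_inv, PowerSeries.coe_mul, mul_inv,
    coe_inv_of_constantCoeff_ne_zero hg, mul_left_comm, ← PowerSeries.coe_mul, coeff_inv_X_mul_coe,
    map_mul, PowerSeries.constantCoeff_inv, div_eq_mul_inv]

theorem residue_X_mul_sub {f g : K⟦X⟧} (hg : g ≠ 0) :
    residue (f - g) (PowerSeries.X * g) = residue f (PowerSeries.X * g) - 1 := by
  have hg' : (g : K⸨X⸩) ≠ 0 := fun h =>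
    hg (HahnSeries.ofPowerSeries_injective (h.trans (map_zero _).symm))
  have hX := coeff_inv_X_mul_coe (1 : K⟦X⟧)
  simp only [map_one, mul_one] at hX
  rw [residue, residue, PowerSeries.coe_sub, sub_div, HahnSeries.coeff_sub, PowerSeries.coe_mul,
    div_mul_cancel_right₀ hg', hX]

theorem reflect_succ {n : ℕ} {p : K[X]} (hp : p.natDegree ≤ n) :
    reflect (n + 1) p = X * reflect n p := by
  simpa [mul_comm] using reflect_mul p 1 (F := n) (G := 1) hp (by simp)

theorem reflect_X_mul {n : ℕ} {p : K[X]} (hp : p.natDegree ≤ n) :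
    reflect (n + 1) (X * p) = reflect n p := by
  simpa [mul_comm] using reflect_mul p X (F := n) (G := 1) hp (by simp)

theorem exists_ne_zero_eval_ne_zero [Infinite K] {p : K[X]} (hp : p ≠ 0) :
    ∃ c, c ≠ 0 ∧ p.eval c ≠ 0 := by
  by_contra! h
  refine mul_ne_zero X_ne_zero hp (Polynomial.funext fun c => ?_)
  by_cases hc : c = 0
  · simp [hc]
  · simp [h c hc]

/-- Cano's condition on the Camacho–Sad indices `i` and `j` along the two branches of a corner of
the exceptional divisor. -/
def CanoCondition (i j : K) : Prop :=
  ∃ α : ℚ, 0 < α ∧ (∃ q : ℚ, q ≤ -α ∧ i = q) ∧ ¬∃ q : ℚ, -α⁻¹ ≤ q ∧ j = q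

theorem CanoCondition.right_ne_zero {i j : K} (h : CanoCondition i j) : j ≠ 0 := by
  obtain ⟨α, hα, -, hj⟩ := h
  rintro rfl
  exact hj ⟨0, by simpa using hα.le, by simp⟩

variable [CharZero K]

variable (K) in
/-- The nonnegative rational numbers, as elements of `K`. -/
def nonnegRat : Subsemiring K := (NNRat.castHom K).rangeS

theorem mem_nonnegRat_iff {z : K} : z ∈ nonnegRat K ↔ ∃ q : ℚ, 0 ≤ q ∧ z = q := by
  constructor
  · rintro ⟨q, rfl⟩
    exact ⟨q, q.2, by simp⟩
  · rintro ⟨q, hq, rfl⟩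
    exact ⟨⟨q, hq⟩, by simp⟩

section

variable [IsAlgClosed K] {n : ℕ} {p q : K[X]}

theorem residue_reflect_add_one_mem (hp : p.natDegree ≤ n) (hq : q.natDegree ≤ n)
    (hD : q - X * p ≠ 0)
    (hres : ∀ c, residue (taylorSeries c p) (taylorSeries c (q - X * p)) ∈ nonnegRat K) :
    ∃ s ∈ nonnegRat K, residue (reflect n q : K⟦X⟧)
      ((reflect n p : K⟦X⟧) - PowerSeries.X * (reflect n q : K⟦X⟧)) = -1 - s := by
  obtain ⟨S, hS⟩ := (eventually_sum_residue_taylorSeries_eq hp hq hD).exists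
  exact ⟨_, sum_mem fun c _ => hres c, eq_sub_of_add_eq' hS⟩

theorem residue_zero_add_residue_reflect (hp : p.natDegree ≤ n) (hq : q.natDegree ≤ n)
    (hD : q - p ≠ 0)
    (hres : ∀ c, c ≠ 0 →
      residue (taylorSeries c p) (taylorSeries c (X * (q - p))) ∈ nonnegRat K) :
    ∃ s ∈ nonnegRat K, residue (p : K⟦X⟧) (PowerSeries.X * ((q : K⟦X⟧) - (p : K⟦X⟧))) +
      residue (reflect n q : K⟦X⟧)
        (PowerSeries.X * ((reflect n p : K⟦X⟧) - (reflect n q : K⟦X⟧))) = -1 - s := by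
  classical
  have hqX : (X * q).natDegree ≤ n + 1 :=
    natDegree_mul_le.trans (by rw [natDegree_X, add_comm]; gcongr)
  have hDX : X * q - X * p ≠ 0 := mul_sub X q p ▸ mul_ne_zero X_ne_zero hD
  obtain ⟨S, hS, h0⟩ := ((eventually_sum_residue_taylorSeries_eq (hp.trans n.le_succ) hqX hDX).and
    (eventually_ge_atTop {0})).exists
  refine ⟨_, sum_mem fun c hc => hres c (Finset.ne_of_mem_erase (s := S) hc), ?_⟩
  rw [← Finset.add_sum_erase _ _ (Finset.singleton_subset_iff.1 h0), reflect_X_mul hq,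
    reflect_succ hp, Polynomial.coe_mul, Polynomial.coe_X, ← mul_sub X q p, ← mul_sub] at hS
  rw [← taylorSeries_zero, ← taylorSeries_zero, ← map_sub, ← Polynomial.coe_X,
    ← taylorSeries_zero X, ← map_mul, taylorSeries_zero X, Polynomial.coe_X]
  linear_combination hS

end

namespace CanoCondition

variable {i j i' j' s : K}

theorem left_ne_zero (h : CanoCondition i j) : i ≠ 0 := by
  obtain ⟨α, hα, ⟨q, hq, rfl⟩, -⟩ := h
  exact_mod_cast (hq.trans_lt (neg_lt_zero.2 hα)).ne

theorem right_ne_inv (h : CanoCondition i j) : j ≠ i⁻¹ := by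
  rintro rfl
  obtain ⟨α, hα, ⟨q, hq, rfl⟩, hj⟩ := h
  refine hj ⟨q⁻¹, ?_, by simp⟩
  rw [neg_le, ← inv_neg]
  exact inv_anti₀ hα (by linarith)

theorem of_left_eq (hs : s ∈ nonnegRat K) (hi : i = -1 - s) (hj : j + 1 ∉ nonnegRat K) :
    CanoCondition i j := by
  obtain ⟨s, hs, rfl⟩ := mem_nonnegRat_iff.1 hs
  refine ⟨1, one_pos, ⟨-1 - s, by linarith, by simp [hi]⟩, ?_⟩
  rintro ⟨q, hq, rfl⟩
  exact hj (mem_nonnegRat_iff.2 ⟨q + 1, by linarith [inv_one (G := ℚ)], by simp⟩)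

/- Blowing up a corner lowers its two indices by one and creates the indices `i'` and `j'` on the
new component. The parameter `α` becomes `α / (α + 1)` at one of the new corners and `α + 1` at the
other. -/
theorem blowUp (h : CanoCondition i j) (hs : s ∈ nonnegRat K) (hsum : i' + j' = -1 - s) :
    CanoCondition i' (j - 1) ∨ CanoCondition (i - 1) j' := by
  obtain ⟨α, hα, ⟨q, hq, rfl⟩, hj⟩ := h
  obtain ⟨s, hs, rfl⟩ := mem_nonnegRat_iff.1 hs
  by_cases hj' : ∃ r : ℚ, -(α + 1)⁻¹ ≤ r ∧ j' = r
  · obtain ⟨r, hr, rfl⟩ := hj'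
    refine .inl ⟨α / (α + 1), by positivity, ⟨-1 - s - r, ?_, ?_⟩, ?_⟩
    · have : -(α + 1)⁻¹ = -1 + α / (α + 1) := by field_simp; ring
      linarith
    · push_cast
      linear_combination hsum
    · rintro ⟨t, ht, hjt⟩
      refine hj ⟨t + 1, ?_, by push_cast; linear_combination hjt⟩
      have : -(α / (α + 1))⁻¹ = -α⁻¹ - 1 := by field_simp; ring
      linarith
  · exact .inr ⟨α + 1, by positivity, ⟨q - 1, by linarith, by simp⟩, hj'⟩

end CanoCondition

end

/-! ### The reduction of singularities -/

section

variable {K A : Type*} [Field K] [CommRing A] [Algebra K A]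

theorem span_pair_mul_sub_of_isUnit {R : Type*} [CommRing R] {u : R} (hu : IsUnit u) (a b : R) :
    Ideal.span {a, u * (b - a)} = Ideal.span {a, b} := by
  rw [Ideal.span_insert, Ideal.span_singleton_mul_left_unit hu, ← Ideal.span_insert,
    Ideal.span_pair_sub_left]

namespace PlaneGermRing

variable (G : PlaneGermRing K A)

/-- The Camacho–Sad index of `x a ∂x + y b ∂y` along `x = 0`. -/
def cornerIndex (a b : A) : K := residue (G.restrict a) (PowerSeries.X * G.restrict b)

/-- Closure rules for three predicates on pairs of germs, which stand for the following properties: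
`Curve P Q` says that the field `P ∂x + Q ∂y` has an invariant curve, `PointCurve a b` that the
field `x a ∂x + b ∂y` has an invariant curve other than `x = 0`, and `CornerCurve a b` that the
field `x a ∂x + y b ∂y` has an invariant curve other than the axes. The first rule is the
Briot–Bouquet theorem, and the others push curves forward under blow-ups and `swap`. -/
structure SeparatrixRules (Curve PointCurve CornerCurve : A → A → Prop) : Prop where
  pointCurve_of_nonresonant : ∀ a b, G.value a ≠ 0 → G.value b = 0 →
    (∀ n : ℕ, 1 ≤ n → PowerSeries.coeff 1 (G.restrict b) ≠ n * G.value a) → PointCurve a b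
  pointCurve_of_pointCurve : ∀ c n a b a' b', G.IsTransform c n a a' →
    G.IsTransform c (n + 1) b b' → PointCurve a' (b' - (algebraMap K A c + G.y) * a') →
    PointCurve a b
  pointCurve_of_cornerCurve : ∀ n a b a' b', G.IsTransform 0 n (G.swap a) a' →
    G.IsTransform 0 (n + 1) (G.swap b) b' → CornerCurve b' (a' - b') → PointCurve a b
  cornerCurve_of_pointCurve : ∀ c n a b a' b', c ≠ 0 → G.IsTransform c n a a' →
    G.IsTransform c n b b' → PointCurve a' ((algebraMap K A c + G.y) * (b' - a')) →
    CornerCurve a b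
  cornerCurve_of_cornerCurve : ∀ n a b a' b', G.IsTransform 0 n a a' →
    G.IsTransform 0 n b b' → CornerCurve a' (b' - a') → CornerCurve a b
  cornerCurve_of_swap : ∀ a b, CornerCurve (G.swap b) (G.swap a) → CornerCurve a b
  curve_of_pointCurve : ∀ c n a b a' b', G.IsTransform c n a a' → G.IsTransform c n b b' →
    PointCurve a' (b' - (algebraMap K A c + G.y) * a') → Curve a b
  curve_of_swap : ∀ a b, Curve (G.swap b) (G.swap a) → Curve a b

/-- The indices of `x a ∂x + y b ∂y` along the two axes satisfy Cano's condition. -/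
structure IsAdmissibleCorner (a b : A) : Prop where
  isCofinite : G.IsCofinite (Ideal.span {a, b})
  canoCondition : CanoCondition (G.cornerIndex a b) (G.cornerIndex (G.swap b) (G.swap a))

variable {G} {n k : ℕ} {a b a' b' : A} {p q : K[X]} {c : K}

theorem IsAdmissibleCorner.restrict_swap_left_ne_zero (h : G.IsAdmissibleCorner a b) :
    G.restrict (G.swap a) ≠ 0 := fun ha =>
  h.canoCondition.right_ne_zero (by rw [cornerIndex, ha, mul_zero, residue_zero_right])

theorem exists_isLeadingPair (hcof : G.IsCofinite (Ideal.span {a, b})) {j : ℕ}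
    (hb : b ∈ G.maxIdeal ^ j) : ∃ n p q, G.IsLeadingPair n (n + j) a b p q := by
  by_contra! h
  have hmem : ∀ n, a ∈ G.maxIdeal ^ n ∧ b ∈ G.maxIdeal ^ (n + j) := by
    intro n
    induction n with
    | zero => simpa using hb
    | succ n ih =>
      obtain ⟨p, hp⟩ := G.exists_isLeadingForm ih.1
      obtain ⟨q, hq⟩ := G.exists_isLeadingForm ih.2
      obtain ⟨rfl, rfl⟩ : p = 0 ∧ q = 0 := by
        by_contra hne
        exact h n p q ⟨hp, hq, not_and_or.1 hne⟩
      exact ⟨hp.mem_succ, by simpa only [add_right_comm] using hq.mem_succ⟩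
  obtain ⟨N, hN⟩ := hcof
  refine G.not_maxIdeal_pow_le_succ N (hN.trans (Ideal.span_le.2 ?_))
  rintro z (rfl | rfl)
  exacts [(hmem _).1, Ideal.pow_le_pow_right (by lia) (hmem (N + 1)).2]

theorem IsLeadingForm.value_eq (h : G.IsLeadingForm n a p) (ha : G.IsTransform c n a a') :
    G.value a' = p.eval c := by
  rw [value, h.restrict_eq ha, constantCoeff_taylorSeries]

theorem IsLeadingPair.restrict_sub_mul (h : G.IsLeadingPair n k a b p q)
    (ha : G.IsTransform c n a a') (hb : G.IsTransform c k b b') :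
    G.restrict (b' - (algebraMap K A c + G.y) * a') = taylorSeries c (q - X * p) := by
  rw [map_sub, map_mul, h.fst.restrict_eq ha, h.snd.restrict_eq hb, restrict_algebraMap_add_y,
    map_sub, map_mul]

theorem IsLeadingPair.restrict_mul_sub (h : G.IsLeadingPair n k a b p q)
    (ha : G.IsTransform c n a a') (hb : G.IsTransform c k b b') :
    G.restrict ((algebraMap K A c + G.y) * (b' - a')) = taylorSeries c (X * (q - p)) := by
  rw [map_mul, map_sub, h.fst.restrict_eq ha, h.snd.restrict_eq hb, restrict_algebraMap_add_y,
    map_mul, map_sub]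

theorem IsTransform.restrict_swap_eq (ha : G.IsTransform 0 n a a') :
    G.restrict (G.swap a) = PowerSeries.X ^ n * G.restrict (G.swap a') := by
  rw [← G.restrict_swap_chart_zero, ha, map_mul, map_mul, map_pow, map_pow, G.swap_x, G.restrict_y]

theorem IsLeadingPair.cornerIndex_sub (h : G.IsLeadingPair n k a b p q)
    (ha : G.IsTransform 0 n a a') (hb : G.IsTransform 0 k b b') :
    G.cornerIndex a' (b' - a') =
      residue (p : K⟦X⟧) (PowerSeries.X * ((q : K⟦X⟧) - (p : K⟦X⟧))) := by
  rw [cornerIndex, map_sub, h.fst.restrict_eq ha, h.snd.restrict_eq hb, taylorSeries_zero,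
    taylorSeries_zero]

/-- Blowing up lowers by one the index along a component through the centre. -/
theorem IsTransform.cornerIndex_swap_sub (ha : G.IsTransform 0 n a a')
    (h : G.restrict (G.swap b') ≠ 0) :
    G.cornerIndex (G.swap (a' - b')) (G.swap b') = residue (G.restrict (G.swap a))
      (PowerSeries.X * (PowerSeries.X ^ n * G.restrict (G.swap b'))) - 1 := by
  rw [cornerIndex, map_sub, map_sub, residue_X_mul_sub h, ha.restrict_swap_eq,
    mul_left_comm PowerSeries.X, residue_mul_left_mul_left (pow_ne_zero _ PowerSeries.X_ne_zero)]

variable {Curve PointCurve CornerCurve : A → A → Prop}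

/- Cano's condition is not symmetric, so both orders of the two branches have to be allowed. -/
theorem IsLeadingPair.cornerCurve_of_corner (h : G.IsLeadingPair n n a b p q)
    (R : G.SeparatrixRules Curve PointCurve CornerCurve) (hcof : G.IsCofinite (Ideal.span {a, b}))
    (hσa : G.restrict (G.swap a) ≠ 0) {i j : K}
    (hi : i = residue (p : K⟦X⟧) (PowerSeries.X * ((q : K⟦X⟧) - (p : K⟦X⟧))))
    (hj : j = G.cornerIndex (G.swap b) (G.swap a) - 1)
    (hcano : CanoCondition i j ∨ CanoCondition j i)
    (ih : ∀ a' b', G.IsAdmissibleCorner a' b' →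
      intersectionNumber K a' b' + n * n ≤ intersectionNumber K a b → CornerCurve a' b') :
    CornerCurve a b := by
  obtain ⟨a', ha⟩ := G.exists_isTransform 0 h.fst.mem
  obtain ⟨b', hb⟩ := G.exists_isTransform 0 h.snd.mem
  have hcof' : G.IsCofinite (Ideal.span {a', b' - a'}) := by
    rw [Ideal.span_pair_sub_left]
    exact hcof.transform h ha hb
  have hdrop : intersectionNumber K a' (b' - a') + n * n ≤ intersectionNumber K a b := by
    rw [intersectionNumber, Ideal.span_pair_sub_left]
    exact G.intersectionNumber_transform_add_mul_le hcof h ha hb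
  rw [← h.cornerIndex_sub ha hb] at hi
  replace hj : j = G.cornerIndex (G.swap (b' - a')) (G.swap a') := by
    rw [hb.cornerIndex_swap_sub fun h0 => hσa (by rw [ha.restrict_swap_eq, h0, mul_zero]),
      ← ha.restrict_swap_eq, hj, cornerIndex]
  subst hi hj
  refine R.cornerCurve_of_cornerCurve n a b a' b' ha hb ?_
  rcases hcano with hcano | hcano
  · exact ih _ _ ⟨hcof', hcano⟩ hdrop
  · refine R.cornerCurve_of_swap _ _ (ih _ _ ⟨?_, ?_⟩ ?_)
    · exact (Ideal.span_pair_comm (x := b' - a') ▸ hcof').swap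
    · rwa [G.swap_swap, G.swap_swap]
    · rwa [intersectionNumber_swap, intersectionNumber_comm]

variable [CharZero K]

variable (G) in
/-- The field `x a ∂x + b ∂y` has at the origin a Camacho–Sad index along the component `x = 0` of
the exceptional divisor which is not a nonnegative rational. -/
structure IsAdmissiblePoint (a b : A) : Prop where
  isCofinite : G.IsCofinite (Ideal.span {a, b})
  residue_notMem : residue (G.restrict a) (G.restrict b) ∉ nonnegRat K

namespace IsAdmissiblePoint

theorem value_right_eq_zero (h : G.IsAdmissiblePoint a b) : G.value b = 0 := by
  by_contra hb
  exact h.residue_notMem (residue_eq_zero hb ▸ zero_mem _)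

theorem restrict_right_ne_zero (h : G.IsAdmissiblePoint a b) : G.restrict b ≠ 0 := fun hb =>
  h.residue_notMem (by rw [hb, residue_zero_right]; exact zero_mem _)

/- If `b = y λ + ⋯` along `x = 0`, then the index is `a(0) / λ`. -/
theorem coeff_one_restrict_ne (h : G.IsAdmissiblePoint a b) (ha : G.value a ≠ 0) {n : ℕ}
    (hn : 1 ≤ n) :
    PowerSeries.coeff 1 (G.restrict b) ≠ n * G.value a := by
  intro hcoeff
  apply h.residue_notMem
  obtain ⟨g, hg⟩ := PowerSeries.X_dvd_iff.2 h.value_right_eq_zero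
  rw [hg, ← zero_add 1, PowerSeries.coeff_succ_X_mul, PowerSeries.coeff_zero_eq_constantCoeff]
    at hcoeff
  have hn0 : (n : K) ≠ 0 := by exact_mod_cast (zero_lt_one.trans_le hn).ne'
  rw [hg, residue_X_mul _ (by rw [hcoeff]; exact mul_ne_zero hn0 ha), hcoeff, ← value,
    div_mul_cancel_right₀ ha]
  exact mem_nonnegRat_iff.2 ⟨(n : ℚ)⁻¹, by positivity, by simp⟩

end IsAdmissiblePoint

namespace IsAdmissibleCorner

theorem value_right_eq_zero (h : G.IsAdmissibleCorner a b) : G.value b = 0 := by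
  by_contra hb
  have hcorner := residue_X_mul (G.restrict a) hb
  rw [← cornerIndex, ← value, ← value] at hcorner
  have ha : G.value a ≠ 0 := fun ha =>
    h.canoCondition.left_ne_zero (by rw [hcorner, ha, zero_div])
  refine h.canoCondition.right_ne_inv ?_
  rw [hcorner, cornerIndex, residue_X_mul _ (by rwa [← value, value_swap]), ← value, ← value,
    value_swap, value_swap, inv_div]

theorem value_left_eq_zero (h : G.IsAdmissibleCorner a b) : G.value a = 0 := by
  by_contra ha
  refine h.canoCondition.right_ne_zero ?_
  rw [cornerIndex, residue_X_mul _ (by rwa [← value, value_swap]), ← value, value_swap,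
    h.value_right_eq_zero, zero_div]

theorem restrict_right_ne_zero (h : G.IsAdmissibleCorner a b) : G.restrict b ≠ 0 := fun hb =>
  h.canoCondition.left_ne_zero (by rw [cornerIndex, hb, mul_zero, residue_zero_right])

end IsAdmissibleCorner

theorem SeparatrixRules.pointCurve_of_restrict_eq_zero
    (R : G.SeparatrixRules Curve PointCurve CornerCurve) (ha : G.value a ≠ 0)
    (hb : G.restrict b = 0) : PointCurve a b :=
  R.pointCurve_of_nonresonant a b ha (by rw [value, hb, map_zero]) fun n hn => by
    rw [hb, map_zero]
    exact (mul_ne_zero (Nat.cast_ne_zero.2 (by lia)) ha).symm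

/- If `q = X p`, then the exceptional divisor is transverse to the foliation at a general point. -/
theorem IsLeadingPair.exists_pointCurve (h : G.IsLeadingPair n k a b p q)
    (R : G.SeparatrixRules Curve PointCurve CornerCurve) (hcof : G.IsCofinite (Ideal.span {a, b}))
    (hpq : q - X * p = 0 ∨
      ∃ c, residue (taylorSeries c p) (taylorSeries c (q - X * p)) ∉ nonnegRat K)
    (ih : ∀ a' b', G.IsAdmissiblePoint a' b' →
      intersectionNumber K a' b' + n * k ≤ intersectionNumber K a b → PointCurve a' b') :
    ∃ c a' b', G.IsTransform c n a a' ∧ G.IsTransform c k b b' ∧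
      PointCurve a' (b' - (algebraMap K A c + G.y) * a') := by
  rcases hpq with hD | ⟨c, hc⟩
  · have hp : p ≠ 0 := by
      rintro rfl
      exact h.ne_zero.elim (· rfl) (· (by simpa using hD))
    obtain ⟨c, -, hc⟩ := exists_ne_zero_eval_ne_zero hp
    obtain ⟨a', ha⟩ := G.exists_isTransform c h.fst.mem
    obtain ⟨b', hb⟩ := G.exists_isTransform c h.snd.mem
    refine ⟨c, a', b', ha, hb, R.pointCurve_of_restrict_eq_zero ?_ ?_⟩
    · rwa [h.fst.value_eq ha]
    · rw [h.restrict_sub_mul ha hb, hD, map_zero]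
  · obtain ⟨a', ha⟩ := G.exists_isTransform c h.fst.mem
    obtain ⟨b', hb⟩ := G.exists_isTransform c h.snd.mem
    refine ⟨c, a', b', ha, hb, ih _ _ ⟨?_, ?_⟩ ?_⟩
    · rw [Ideal.span_pair_sub_mul_left]
      exact hcof.transform h ha hb
    · rwa [h.fst.restrict_eq ha, h.restrict_sub_mul ha hb]
    · rw [intersectionNumber, Ideal.span_pair_sub_mul_left]
      exact G.intersectionNumber_transform_add_mul_le hcof h ha hb

theorem IsLeadingPair.cornerCurve_of_point (h : G.IsLeadingPair n n a b p q)
    (R : G.SeparatrixRules Curve PointCurve CornerCurve) (hcof : G.IsCofinite (Ideal.span {a, b}))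
    (hpq : q - p = 0 ∨ ∃ c, c ≠ 0 ∧
      residue (taylorSeries c p) (taylorSeries c (X * (q - p))) ∉ nonnegRat K)
    (ih : ∀ a' b', G.IsAdmissiblePoint a' b' →
      intersectionNumber K a' b' + n * n ≤ intersectionNumber K a b → PointCurve a' b') :
    CornerCurve a b := by
  rcases hpq with hD | ⟨c, hc0, hc⟩
  · have hp : p ≠ 0 := by
      rintro rfl
      exact h.ne_zero.elim (· rfl) (· (by simpa using hD))
    obtain ⟨c, hc0, hc⟩ := exists_ne_zero_eval_ne_zero hp
    obtain ⟨a', ha⟩ := G.exists_isTransform c h.fst.mem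
    obtain ⟨b', hb⟩ := G.exists_isTransform c h.snd.mem
    refine R.cornerCurve_of_pointCurve c n a b a' b' hc0 ha hb
      (R.pointCurve_of_restrict_eq_zero ?_ ?_)
    · rwa [h.fst.value_eq ha]
    · rw [h.restrict_mul_sub ha hb, hD, mul_zero, map_zero]
  · obtain ⟨a', ha⟩ := G.exists_isTransform c h.fst.mem
    obtain ⟨b', hb⟩ := G.exists_isTransform c h.snd.mem
    have hu : IsUnit (algebraMap K A c + G.y) := by
      apply G.isUnit_of_constantCoeff_restrict_ne_zero
      rwa [restrict_algebraMap_add_y, constantCoeff_taylorSeries, eval_X]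
    have hspan := span_pair_mul_sub_of_isUnit hu a' b'
    refine R.cornerCurve_of_pointCurve c n a b a' b' hc0 ha hb (ih _ _ ⟨?_, ?_⟩ ?_)
    · exact hspan ▸ hcof.transform h ha hb
    · rwa [h.fst.restrict_eq ha, h.restrict_mul_sub ha hb]
    · rw [intersectionNumber, hspan]
      exact G.intersectionNumber_transform_add_mul_le hcof h ha hb

theorem IsLeadingPair.pointCurve_of_corner (h : G.IsLeadingPair n (n + 1) a b p q)
    (R : G.SeparatrixRules Curve PointCurve CornerCurve) (hadm : G.IsAdmissiblePoint a b)
    {s : K} (hs : s ∈ nonnegRat K)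
    (hres : residue (reflect (n + 1) q : K⟦X⟧) ((reflect (n + 1) p : K⟦X⟧) -
      PowerSeries.X * (reflect (n + 1) q : K⟦X⟧)) = -1 - s)
    (ih : ∀ a' b', G.IsAdmissibleCorner a' b' →
      intersectionNumber K a' b' ≤ intersectionNumber K a b → CornerCurve a' b') :
    PointCurve a b := by
  obtain ⟨a', ha⟩ := G.exists_isTransform 0 h.swap.fst.mem
  obtain ⟨b', hb⟩ := G.exists_isTransform 0 h.swap.snd.mem
  have hspan : Ideal.span {b', a' - b'} = Ideal.span {a', b'} := by
    rw [Ideal.span_pair_sub_left, Ideal.span_pair_comm]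
  have hρb := hb.restrict_swap_eq
  rw [G.swap_swap] at hρb
  refine R.pointCurve_of_cornerCurve n a b a' b' ha hb (ih _ _ ⟨?_, ?_⟩ ?_)
  · exact hspan ▸ hadm.isCofinite.swap.transform h.swap ha hb
  · refine .of_left_eq hs ?_ ?_
    · rw [h.swap.symm.cornerIndex_sub hb ha, ← hres, reflect_succ h.fst.natDegree_le,
        Polynomial.coe_mul, Polynomial.coe_X, mul_sub]
    · rw [ha.cornerIndex_swap_sub fun h0 => hadm.restrict_right_ne_zero (by
        rw [hρb, h0, mul_zero]), ← mul_assoc, ← pow_succ', ← hρb, G.swap_swap, sub_add_cancel]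
      exact hadm.residue_notMem
  · rw [intersectionNumber, hspan]
    have hdrop := G.intersectionNumber_transform_add_mul_le hadm.isCofinite.swap h.swap ha hb
    rw [intersectionNumber_swap] at hdrop
    exact le_of_add_le_left hdrop

variable [IsAlgClosed K]

/- If `a` is a unit, then the hypothesis on the index is the nonresonance condition of the
Briot–Bouquet theorem. Otherwise blow up: if the exceptional divisor carries neither a transverse
point nor a point to which the induction hypothesis applies, then its indices off the corner are
all nonnegative rationals, and by the residue theorem the corner satisfies Cano's condition with
`α = 1`. In this case the intersection number need not decrease. -/
theorem IsAdmissiblePoint.pointCurve (h : G.IsAdmissiblePoint a b)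
    (R : G.SeparatrixRules Curve PointCurve CornerCurve)
    (ihPoint : ∀ a' b', G.IsAdmissiblePoint a' b' →
      intersectionNumber K a' b' < intersectionNumber K a b → PointCurve a' b')
    (ihCorner : ∀ a' b', G.IsAdmissibleCorner a' b' →
      intersectionNumber K a' b' ≤ intersectionNumber K a b → CornerCurve a' b') :
    PointCurve a b := by
  by_cases ha : G.value a = 0
  swap
  · exact R.pointCurve_of_nonresonant a b ha h.value_right_eq_zero
      fun _ => h.coeff_one_restrict_ne ha
  have hb := G.mem_maxIdeal_iff_value_eq_zero.2 h.value_right_eq_zero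
  obtain ⟨n, p, q, hpq⟩ := exists_isLeadingPair (j := 1) h.isCofinite (by rwa [pow_one])
  by_cases hpt : q - X * p = 0 ∨
      ∃ c, residue (taylorSeries c p) (taylorSeries c (q - X * p)) ∉ nonnegRat K
  · have hn : n ≠ 0 := by
      rintro rfl
      obtain rfl : p = 0 := hpq.fst.eq_zero_of_mem
        (by simpa using G.mem_maxIdeal_iff_value_eq_zero.2 ha)
      rcases hpt with hq | ⟨c, hc⟩
      · exact hpq.ne_zero.elim (· rfl) (· (by simpa using hq))
      · exact hc (by rw [map_zero, residue_zero_left]; exact zero_mem _)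
    obtain ⟨c, a', b', ha', hb', hcurve⟩ := hpq.exists_pointCurve R h.isCofinite hpt
      fun a' b' hadm hle => ihPoint a' b' hadm
        (lt_of_lt_of_le (Nat.lt_add_of_pos_right (by positivity)) hle)
    exact R.pointCurve_of_pointCurve c n a b a' b' ha' hb' hcurve
  · push Not at hpt
    obtain ⟨s, hs, hres⟩ := residue_reflect_add_one_mem (hpq.fst.natDegree_le.trans n.le_succ)
      hpq.snd.natDegree_le hpt.1 hpt.2
    exact hpq.pointCurve_of_corner R h hs hres ihCorner

/- Here the intersection number always decreases, because both germs vanish at the corner. -/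
theorem IsAdmissibleCorner.cornerCurve (h : G.IsAdmissibleCorner a b)
    (R : G.SeparatrixRules Curve PointCurve CornerCurve)
    (ihPoint : ∀ a' b', G.IsAdmissiblePoint a' b' →
      intersectionNumber K a' b' < intersectionNumber K a b → PointCurve a' b')
    (ihCorner : ∀ a' b', G.IsAdmissibleCorner a' b' →
      intersectionNumber K a' b' < intersectionNumber K a b → CornerCurve a' b') :
    CornerCurve a b := by
  obtain ⟨n, p, q, (hpq : G.IsLeadingPair n n a b p q)⟩ :=
    exists_isLeadingPair (j := 0) h.isCofinite (by simp)
  have hn : n ≠ 0 := by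
    rintro rfl
    refine hpq.ne_zero.elim (· (hpq.fst.eq_zero_of_mem ?_)) (· (hpq.snd.eq_zero_of_mem ?_))
    · simpa using G.mem_maxIdeal_iff_value_eq_zero.2 h.value_left_eq_zero
    · simpa using G.mem_maxIdeal_iff_value_eq_zero.2 h.value_right_eq_zero
  have hdrop : ∀ m, m + n * n ≤ intersectionNumber K a b → m < intersectionNumber K a b :=
    fun m => lt_of_lt_of_le (Nat.lt_add_of_pos_right (by positivity))
  by_cases hpt : q - p = 0 ∨ ∃ c, c ≠ 0 ∧
      residue (taylorSeries c p) (taylorSeries c (X * (q - p))) ∉ nonnegRat K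
  · exact hpq.cornerCurve_of_point R h.isCofinite hpt
      fun a' b' hadm hle => ihPoint a' b' hadm (hdrop _ hle)
  push Not at hpt
  obtain ⟨s, hs, hsum⟩ := residue_zero_add_residue_reflect hpq.fst.natDegree_le
    hpq.snd.natDegree_le hpt.1 hpt.2
  rcases h.canoCondition.blowUp hs hsum with hcano | hcano
  · exact hpq.cornerCurve_of_corner R h.isCofinite h.restrict_swap_left_ne_zero rfl rfl
      (.inl hcano) fun a' b' hadm hle => ihCorner a' b' hadm (hdrop _ hle)
  · refine R.cornerCurve_of_swap a b (hpq.symm.swap.cornerCurve_of_corner R ?_ ?_ rfl ?_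
      (.inr hcano) fun a' b' hadm hle => ihCorner a' b' hadm (hdrop _ ?_))
    · exact (Ideal.span_pair_comm (x := a) ▸ h.isCofinite).swap
    · simpa only [G.swap_swap] using h.restrict_right_ne_zero
    · rw [G.swap_swap, G.swap_swap]
    · rwa [intersectionNumber_swap, intersectionNumber_comm b] at hle

/- Corners are treated first, since a point may lead to a corner of the same intersection number,
whereas corners always lower it. -/
theorem SeparatrixRules.pointCurve_and_cornerCurve
    (R : G.SeparatrixRules Curve PointCurve CornerCurve) (d : ℕ) :
    (∀ a b, G.IsAdmissiblePoint a b → intersectionNumber K a b = d → PointCurve a b) ∧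
      ∀ a b, G.IsAdmissibleCorner a b → intersectionNumber K a b = d → CornerCurve a b := by
  induction d using Nat.strong_induction_on with
  | _ d ih =>
    have hcorner : ∀ a b, G.IsAdmissibleCorner a b → intersectionNumber K a b ≤ d →
        CornerCurve a b := fun a b h hle =>
      h.cornerCurve R (fun a' b' h' hlt => (ih _ (hlt.trans_le hle)).1 a' b' h' rfl)
        fun a' b' h' hlt => (ih _ (hlt.trans_le hle)).2 a' b' h' rfl
    refine ⟨?_, fun a b h hd => hcorner a b h hd.le⟩
    rintro a b h rfl
    exact h.pointCurve R (fun a' b' h' hlt => (ih _ hlt).1 a' b' h' rfl) hcorner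

/- After one blow-up the indices along the exceptional divisor add up to `-1`, so they are not all
nonnegative rationals. -/
theorem SeparatrixRules.curve (R : G.SeparatrixRules Curve PointCurve CornerCurve)
    (hcof : G.IsCofinite (Ideal.span {a, b})) : Curve a b := by
  have hcurve : ∀ {n a b p q}, G.IsCofinite (Ideal.span {a, b}) → G.IsLeadingPair n n a b p q →
      (q - X * p = 0 ∨
        ∃ c, residue (taylorSeries c p) (taylorSeries c (q - X * p)) ∉ nonnegRat K) →
      Curve a b := by
    intro n a b p q hcof hpq hpt
    obtain ⟨c, a', b', ha, hb, h⟩ := hpq.exists_pointCurve R hcof hpt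
      fun a' b' hadm _ => (R.pointCurve_and_cornerCurve _).1 a' b' hadm rfl
    exact R.curve_of_pointCurve c n a b a' b' ha hb h
  obtain ⟨n, p, q, (hpq : G.IsLeadingPair n n a b p q)⟩ :=
    exists_isLeadingPair (j := 0) hcof (by simp)
  by_cases hpt : q - X * p = 0 ∨
      ∃ c, residue (taylorSeries c p) (taylorSeries c (q - X * p)) ∉ nonnegRat K
  · exact hcurve hcof hpq hpt
  push Not at hpt
  obtain ⟨s, hs, hres⟩ := residue_reflect_add_one_mem hpq.fst.natDegree_le
    hpq.snd.natDegree_le hpt.1 hpt.2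
  refine R.curve_of_swap a b
    (hcurve (Ideal.span_pair_comm (x := b) ▸ hcof).swap hpq.symm.swap (.inr ⟨0, fun hmem => ?_⟩))
  rw [map_sub, map_mul, taylorSeries_zero, taylorSeries_zero, taylorSeries_zero, Polynomial.coe_X,
    hres] at hmem
  obtain ⟨t, ht, hst⟩ := mem_nonnegRat_iff.1 hmem
  obtain ⟨s, hs, rfl⟩ := mem_nonnegRat_iff.1 hs
  have : -1 - s = t := by exact_mod_cast hst
  linarith

end PlaneGermRing

end

/-! ### Convergent power series in one variable -/

section

variable {f g : ℂ⟦X⟧} {F G : ℂ → ℂ} {y u v : ℂ}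

/-- The power series `f` converges at `y`, with sum `u`. -/
def EvaluatesTo (f : ℂ⟦X⟧) (y u : ℂ) : Prop :=
  HasSum (fun n => PowerSeries.coeff n f * y ^ n) u

namespace EvaluatesTo

theorem unique (hu : EvaluatesTo f y u) (hv : EvaluatesTo f y v) : u = v := HasSum.unique hu hv

theorem add (hf : EvaluatesTo f y u) (hg : EvaluatesTo g y v) : EvaluatesTo (f + g) y (u + v) := by
  simpa only [EvaluatesTo, map_add, add_mul] using HasSum.add hf hg

theorem mul (hf : EvaluatesTo f y u) (hg : EvaluatesTo g y v) :
    EvaluatesTo (f * g) y (u * v) := by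
  have hf' := hf.summable.norm
  have hg' := hg.summable.norm
  have h := (summable_norm_sum_mul_antidiagonal_of_summable_norm hf' hg').of_norm.hasSum
  rw [← tsum_mul_tsum_eq_tsum_sum_antidiagonal_of_summable_norm hf' hg', hf.tsum_eq,
    hg.tsum_eq] at h
  refine h.congr_fun fun n => ?_
  rw [PowerSeries.coeff_mul, Finset.sum_mul]
  refine Finset.sum_congr rfl fun ij hij => ?_
  rw [← Finset.HasAntidiagonal.mem_antidiagonal.1 hij, pow_add]
  ring

theorem C (c y : ℂ) : EvaluatesTo (PowerSeries.C c) y c := by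
  simpa [EvaluatesTo] using
    hasSum_single (f := fun n => PowerSeries.coeff n (PowerSeries.C c) * y ^ n) 0
      fun n hn => by simp [PowerSeries.coeff_C, hn]

theorem X (y : ℂ) : EvaluatesTo PowerSeries.X y y := by
  simpa [EvaluatesTo] using
    hasSum_single (f := fun n => PowerSeries.coeff n PowerSeries.X * y ^ n) 1
      fun n hn => by simp [PowerSeries.coeff_X, hn]

theorem pow (hf : EvaluatesTo f y u) (j : ℕ) : EvaluatesTo (f ^ j) y (u ^ j) := by
  induction j with
  | zero => simpa using EvaluatesTo.C 1 y
  | succ j ih => simpa only [pow_succ] using ih.mul hf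

theorem sum {ι : Type*} {s : Finset ι} {f : ι → ℂ⟦X⟧} {u : ι → ℂ}
    (h : ∀ i ∈ s, EvaluatesTo (f i) y (u i)) : EvaluatesTo (∑ i ∈ s, f i) y (∑ i ∈ s, u i) := by
  simpa only [EvaluatesTo, map_sum, Finset.sum_mul] using hasSum_sum h

end EvaluatesTo

/-- The Taylor series at the origin of a function of one variable. -/
def maclaurin (F : ℂ → ℂ) : ℂ⟦X⟧ := PowerSeries.mk fun n => iteratedDeriv n F 0 / n.factorial

theorem eventually_evaluatesTo_maclaurin (hF : AnalyticAt ℂ F 0) :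
    ∀ᶠ y in 𝓝 0, EvaluatesTo (maclaurin F) y (F y) := by
  filter_upwards [hasFPowerSeriesAt_iff.1 hF.hasFPowerSeriesAt] with y hy
  simpa [EvaluatesTo, maclaurin, mul_comm, FormalMultilinearSeries.coeff_ofScalars] using hy

theorem hasFPowerSeriesAt_of_eventually_evaluatesTo (h : ∀ᶠ y in 𝓝 0, EvaluatesTo f y (F y)) :
    HasFPowerSeriesAt F
      (FormalMultilinearSeries.ofScalars ℂ fun n => PowerSeries.coeff n f) 0 := by
  rw [hasFPowerSeriesAt_iff]
  filter_upwards [h] with y hy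
  simpa [EvaluatesTo, mul_comm, FormalMultilinearSeries.coeff_ofScalars] using hy

theorem maclaurin_eq (h : ∀ᶠ y in 𝓝 0, EvaluatesTo f y (F y)) : maclaurin F = f := by
  have hf := hasFPowerSeriesAt_of_eventually_evaluatesTo h
  have h := FormalMultilinearSeries.ofScalars_series_injective ℂ ℂ
    (hf.analyticAt.hasFPowerSeriesAt.eq_formalMultilinearSeries hf)
  ext n
  rw [maclaurin, PowerSeries.coeff_mk]
  exact congrFun h n

theorem maclaurin_congr (h : F =ᶠ[𝓝 0] G) : maclaurin F = maclaurin G := by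
  ext n
  rw [maclaurin, maclaurin, PowerSeries.coeff_mk, PowerSeries.coeff_mk, h.iteratedDeriv_eq]

theorem maclaurin_mul (hF : AnalyticAt ℂ F 0) (hG : AnalyticAt ℂ G 0) :
    maclaurin (F * G) = maclaurin F * maclaurin G := by
  apply maclaurin_eq
  filter_upwards [eventually_evaluatesTo_maclaurin hF, eventually_evaluatesTo_maclaurin hG]
    with y hy hy' using hy.mul hy'

theorem maclaurin_add (hF : AnalyticAt ℂ F 0) (hG : AnalyticAt ℂ G 0) :
    maclaurin (F + G) = maclaurin F + maclaurin G := by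
  apply maclaurin_eq
  filter_upwards [eventually_evaluatesTo_maclaurin hF, eventually_evaluatesTo_maclaurin hG]
    with y hy hy' using hy.add hy'

theorem maclaurin_const (c : ℂ) : maclaurin (fun _ => c) = PowerSeries.C c :=
  maclaurin_eq (.of_forall (.C c))

theorem maclaurin_zero : maclaurin (fun _ => 0) = 0 := by simpa using maclaurin_const 0

theorem maclaurin_id : maclaurin (fun y => y) = PowerSeries.X := maclaurin_eq (.of_forall .X)

theorem constantCoeff_maclaurin (F : ℂ → ℂ) : PowerSeries.constantCoeff (maclaurin F) = F 0 := by
  rw [← PowerSeries.coeff_zero_eq_constantCoeff_apply, maclaurin, PowerSeries.coeff_mk]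
  simp

theorem eventually_eq_zero_of_maclaurin_eq_zero (hF : AnalyticAt ℂ F 0) (h : maclaurin F = 0) :
    ∀ᶠ y in 𝓝 0, F y = 0 := by
  filter_upwards [eventually_evaluatesTo_maclaurin hF] with y hy
  rw [h, ← map_zero PowerSeries.C] at hy
  exact hy.unique (.C 0 y)

theorem coeff_X_mul_maclaurin_deriv (F : ℂ → ℂ) (n : ℕ) :
    PowerSeries.coeff n (PowerSeries.X * maclaurin (deriv F)) =
      n * PowerSeries.coeff n (maclaurin F) := by
  rcases n with _ | n
  · simp
  rw [PowerSeries.coeff_succ_X_mul, maclaurin, maclaurin, PowerSeries.coeff_mk,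
    PowerSeries.coeff_mk, ← iteratedDeriv_succ', Nat.factorial_succ]
  have : (n.factorial : ℂ) ≠ 0 := by exact_mod_cast n.factorial_ne_zero
  have : (n : ℂ) + 1 ≠ 0 := by exact_mod_cast n.succ_ne_zero
  push_cast
  field_simp

theorem exists_analyticAt_evaluatesTo {C R : ℝ}
    (h : ∀ n, ‖PowerSeries.coeff n f‖ ≤ C * R ^ n) :
    ∃ F : ℂ → ℂ, AnalyticAt ℂ F 0 ∧ ∀ᶠ y in 𝓝 0, EvaluatesTo f y (F y) := by
  have hsum : ∀ᶠ y : ℂ in 𝓝 0, EvaluatesTo f y (∑' n, PowerSeries.coeff n f * y ^ n) := by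
    have hcont : ContinuousAt (fun y : ℂ => |R| * ‖y‖) 0 := by fun_prop
    filter_upwards [hcont.eventually_lt_const (by simp : |R| * ‖(0 : ℂ)‖ < 1)] with y hy
    refine (Summable.of_norm_bounded
      ((summable_geometric_of_lt_one (by positivity) hy).mul_left |C|) fun n => ?_).hasSum
    rw [norm_mul, norm_pow, mul_pow, ← mul_assoc, ← abs_pow, ← abs_mul]
    gcongr
    exact (h n).trans (le_abs_self _)
  exact ⟨_, (hasFPowerSeriesAt_of_eventually_evaluatesTo hsum).analyticAt, hsum⟩

end

/-! ### Convergent power series in two variables -/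

section

variable {Φ : ℂ⟦X⟧⟦X⟧} {F G : ℂ × ℂ → ℂ} {C R : ℝ} {p : ℂ × ℂ}

/-- The coefficient of `x ^ i * y ^ j` in `Φ`, where the outer variable of `Φ` is `x` and the
inner one is `y`. -/
def coeff₂ (i j : ℕ) (Φ : ℂ⟦X⟧⟦X⟧) : ℂ := PowerSeries.coeff j (PowerSeries.coeff i Φ)

@[simp]
theorem coeff₂_mk (a : ℕ → ℕ → ℂ) (i j : ℕ) :
    coeff₂ i j (PowerSeries.mk fun i => PowerSeries.mk (a i)) = a i j := by
  simp [coeff₂]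

/-- The coefficients of `Φ` grow at most geometrically, that is, `Φ` converges near the origin. -/
def IsConvergent (Φ : ℂ⟦X⟧⟦X⟧) : Prop :=
  ∃ C R : ℝ, 0 < C ∧ 0 < R ∧ ∀ i j, ‖coeff₂ i j Φ‖ ≤ C * R ^ (i + j)

/-- The value at `p` of the monomial of `Φ` of bidegree `ij`. -/
def monomialTerm (Φ : ℂ⟦X⟧⟦X⟧) (p : ℂ × ℂ) (ij : ℕ × ℕ) : ℂ :=
  coeff₂ ij.1 ij.2 Φ * (p.1 ^ ij.1 * p.2 ^ ij.2)

/-- Near the origin `F` is the sum of the convergent double power series `Φ`. -/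
def HasExpansion (Φ : ℂ⟦X⟧⟦X⟧) (F : ℂ × ℂ → ℂ) : Prop :=
  IsConvergent Φ ∧ ∀ᶠ p in 𝓝 0, HasSum (monomialTerm Φ p) (F p)

theorem summable_const_mul_pow_mul_pow {u v : ℝ} (hu₀ : 0 ≤ u) (hu : u < 1) (hv₀ : 0 ≤ v)
    (hv : v < 1) (C : ℝ) : Summable fun ij : ℕ × ℕ => C * (u ^ ij.1 * v ^ ij.2) :=
  ((summable_geometric_of_lt_one hu₀ hu).mul_of_nonneg (summable_geometric_of_lt_one hv₀ hv)
    (fun _ => by positivity) fun _ => by positivity).mul_left C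

theorem norm_monomialTerm_le (h : ∀ i j, ‖coeff₂ i j Φ‖ ≤ C * R ^ (i + j)) (p : ℂ × ℂ)
    (ij : ℕ × ℕ) : ‖monomialTerm Φ p ij‖ ≤ C * ((R * ‖p.1‖) ^ ij.1 * (R * ‖p.2‖) ^ ij.2) :=
  calc ‖monomialTerm Φ p ij‖ = ‖coeff₂ ij.1 ij.2 Φ‖ * (‖p.1‖ ^ ij.1 * ‖p.2‖ ^ ij.2) := by
        rw [monomialTerm, norm_mul, norm_mul, norm_pow, norm_pow]
    _ ≤ C * R ^ (ij.1 + ij.2) * (‖p.1‖ ^ ij.1 * ‖p.2‖ ^ ij.2) := by gcongr; exact h _ _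
    _ = C * ((R * ‖p.1‖) ^ ij.1 * (R * ‖p.2‖) ^ ij.2) := by rw [mul_pow, mul_pow, pow_add]; ring

theorem summable_norm_monomialTerm (hR : 0 < R) (h : ∀ i j, ‖coeff₂ i j Φ‖ ≤ C * R ^ (i + j))
    (h₁ : R * ‖p.1‖ < 1) (h₂ : R * ‖p.2‖ < 1) : Summable fun ij => ‖monomialTerm Φ p ij‖ :=
  .of_nonneg_of_le (fun _ => norm_nonneg _) (norm_monomialTerm_le h p)
    (summable_const_mul_pow_mul_pow (by positivity) h₁ (by positivity) h₂ C)

theorem eventually_mul_norm_lt_one (R : ℝ) :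
    ∀ᶠ p : ℂ × ℂ in 𝓝 0, R * ‖p.1‖ < 1 ∧ R * ‖p.2‖ < 1 := by
  have h₁ : Continuous fun p : ℂ × ℂ => R * ‖p.1‖ := by fun_prop
  have h₂ : Continuous fun p : ℂ × ℂ => R * ‖p.2‖ := by fun_prop
  exact (h₁.continuousAt.eventually_lt_const (by simp)).and
    (h₂.continuousAt.eventually_lt_const (by simp))

theorem IsConvergent.eventually_summable_norm (h : IsConvergent Φ) :
    ∀ᶠ p in 𝓝 0, Summable fun ij => ‖monomialTerm Φ p ij‖ := by
  obtain ⟨C, R, -, hR, h⟩ := h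
  filter_upwards [eventually_mul_norm_lt_one R] with p hp
  exact summable_norm_monomialTerm hR h hp.1 hp.2

theorem IsConvergent.hasExpansion (h : IsConvergent Φ) :
    HasExpansion Φ fun p => ∑' ij, monomialTerm Φ p ij :=
  ⟨h, h.eventually_summable_norm.mono fun _ hp => hp.of_norm.hasSum⟩

theorem hasSum_sum_antidiagonal {f : ℕ × ℕ → ℂ} {s : ℂ} (h : HasSum f s) :
    HasSum (fun n => ∑ ij ∈ Finset.HasAntidiagonal.antidiagonal n, f ij) s := by
  refine ((Finset.HasAntidiagonal.sigmaAntidiagonalEquivProd (A := ℕ)).hasSum_iff.2 h).sigma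
    fun n => ?_
  rw [← Finset.sum_coe_sort]
  exact hasSum_fintype _

/-- The multilinear form `(v₁, …, vₙ) ↦ ∏_{k < i} (v_k)₁ * ∏_{k ≥ i} (v_k)₂`, whose diagonal is a
monomial of degree `n`. -/
def monomialForm (n i : ℕ) : ContinuousMultilinearMap ℂ (fun _ : Fin n => ℂ × ℂ) ℂ :=
  (ContinuousMultilinearMap.mkPiAlgebra ℂ (Fin n) ℂ).compContinuousLinearMap fun k =>
    if (k : ℕ) < i then ContinuousLinearMap.fst ℂ ℂ ℂ else ContinuousLinearMap.snd ℂ ℂ ℂ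

theorem monomialForm_diag (i j : ℕ) (v : ℂ × ℂ) :
    monomialForm (i + j) i (fun _ => v) = v.1 ^ i * v.2 ^ j := by
  rw [monomialForm, ContinuousMultilinearMap.compContinuousLinearMap_apply,
    ContinuousMultilinearMap.mkPiAlgebra_apply, Fin.prod_univ_add]
  simp

theorem norm_monomialForm_le (n i : ℕ) : ‖monomialForm n i‖ ≤ 1 := by
  refine ContinuousMultilinearMap.opNorm_le_bound zero_le_one fun v => ?_
  rw [monomialForm, ContinuousMultilinearMap.compContinuousLinearMap_apply,
    ContinuousMultilinearMap.mkPiAlgebra_apply, norm_prod, one_mul]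
  refine Finset.prod_le_prod (fun _ _ => norm_nonneg _) fun k _ => ?_
  split_ifs
  · exact norm_fst_le _
  · exact norm_snd_le _

/-- The formal multilinear series attached to a double power series. -/
def multilinearSeries (Φ : ℂ⟦X⟧⟦X⟧) : FormalMultilinearSeries ℂ (ℂ × ℂ) ℂ := fun n =>
  ∑ ij ∈ Finset.HasAntidiagonal.antidiagonal n, coeff₂ ij.1 ij.2 Φ • monomialForm n ij.1

theorem multilinearSeries_diag (Φ : ℂ⟦X⟧⟦X⟧) (n : ℕ) (v : ℂ × ℂ) :
    multilinearSeries Φ n (fun _ => v) =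
      ∑ ij ∈ Finset.HasAntidiagonal.antidiagonal n, monomialTerm Φ v ij := by
  rw [multilinearSeries, sum_apply]
  refine Finset.sum_congr rfl fun ij hij => ?_
  rw [Finset.HasAntidiagonal.mem_antidiagonal] at hij
  subst hij
  rw [smul_apply, monomialForm_diag, smul_eq_mul, monomialTerm]

theorem norm_multilinearSeries_le (hC : 0 < C) (hR : 0 < R)
    (h : ∀ i j, ‖coeff₂ i j Φ‖ ≤ C * R ^ (i + j)) (n : ℕ) :
    ‖multilinearSeries Φ n‖ ≤ C * (2 * R) ^ n := by
  have hterm : ∀ ij ∈ Finset.HasAntidiagonal.antidiagonal n,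
      ‖coeff₂ ij.1 ij.2 Φ • monomialForm n ij.1‖ ≤ C * R ^ n := by
    intro ij hij
    rw [norm_smul, ← Finset.HasAntidiagonal.mem_antidiagonal.1 hij]
    exact (mul_le_of_le_one_right (norm_nonneg _) (norm_monomialForm_le _ _)).trans (h _ _)
  calc ‖multilinearSeries Φ n‖ ≤ (n + 1) • (C * R ^ n) := by
        rw [← Finset.Nat.card_antidiagonal n]
        exact (norm_sum_le _ _).trans (Finset.sum_le_card_nsmul _ _ _ hterm)
    _ ≤ 2 ^ n * (C * R ^ n) := by
        rw [nsmul_eq_mul]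
        gcongr
        exact_mod_cast Nat.lt_two_pow_self
    _ = C * (2 * R) ^ n := by rw [mul_pow]; ring

theorem radius_multilinearSeries_pos (h : IsConvergent Φ) : 0 < (multilinearSeries Φ).radius := by
  obtain ⟨C, R, hC, hR, h⟩ := h
  refine lt_of_lt_of_le ?_ ((multilinearSeries Φ).le_radius_of_bound C
    (r := Real.toNNReal (1 / (2 * R))) fun n => ?_)
  · simpa using hR
  rw [Real.coe_toNNReal _ (by positivity)]
  calc _ ≤ C * (2 * R) ^ n * (1 / (2 * R)) ^ n := by
        gcongr
        exact norm_multilinearSeries_le hC hR h n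
    _ = C := by rw [mul_assoc, ← mul_pow, mul_one_div_cancel (by positivity), one_pow, mul_one]

theorem HasExpansion.analyticAt (h : HasExpansion Φ F) : AnalyticAt ℂ F 0 := by
  refine ((multilinearSeries Φ).hasFPowerSeriesOnBall
    (radius_multilinearSeries_pos h.1)).analyticAt.congr ?_
  filter_upwards [h.2] with p hp
  have hsum := hasSum_sum_antidiagonal hp
  simp_rw [← multilinearSeries_diag] at hsum
  exact hsum.tsum_eq

/-- The double power series of a formal multilinear series `p`: the coefficient of `x ^ i * y ^ j`
collects the values of `p (i + j)` at `i` vectors `(1, 0)` and `j` vectors `(0, 1)`. -/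
def doubleSeries (p : FormalMultilinearSeries ℂ (ℂ × ℂ) ℂ) : ℂ⟦X⟧⟦X⟧ :=
  PowerSeries.mk fun i => PowerSeries.mk fun j => ∑ s ∈ Finset.powersetCard i Finset.univ,
    p (i + j) (s.piecewise (fun _ => (1, 0)) fun _ => (0, 1))

theorem map_piecewise_smul_basis {n : ℕ}
    (f : ContinuousMultilinearMap ℂ (fun _ : Fin n => ℂ × ℂ) ℂ) (s : Finset (Fin n)) (c d : ℂ) :
    f (s.piecewise (fun _ => c • (1, 0)) fun _ => d • (0, 1)) =
      c ^ s.card * d ^ (n - s.card) * f (s.piecewise (fun _ => (1, 0)) fun _ => (0, 1)) := by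
  have hsmul : (s.piecewise (fun _ => c • (1, 0)) fun _ => d • (0, 1) : Fin n → ℂ × ℂ) = fun k =>
      s.piecewise (fun _ => c) (fun _ => d) k •
        s.piecewise (fun _ => (1, 0)) (fun _ => (0, 1)) k := by
    funext k
    by_cases hk : k ∈ s <;> simp [hk]
  rw [hsmul, ContinuousMultilinearMap.map_smul_univ, Finset.prod_piecewise]
  simp [Finset.card_sdiff]

theorem sum_antidiagonal_monomialTerm_doubleSeries (p : FormalMultilinearSeries ℂ (ℂ × ℂ) ℂ)
    (n : ℕ) (v : ℂ × ℂ) :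
    ∑ ij ∈ Finset.HasAntidiagonal.antidiagonal n, monomialTerm (doubleSeries p) v ij =
      p n fun _ => v := by
  have hv : (fun _ : Fin n => v) = (fun _ => v.1 • (1, 0)) + fun _ => v.2 • (0, 1) := by
    funext k
    simp
  rw [hv, ContinuousMultilinearMap.map_add_univ, Finset.Nat.sum_antidiagonal_eq_sum_range_succ_mk,
    ← Finset.powerset_univ, Finset.sum_powerset, Finset.card_univ, Fintype.card_fin]
  refine Finset.sum_congr rfl fun i hi => ?_
  have hin : i + (n - i) = n := Nat.add_sub_cancel' (Nat.lt_succ_iff.1 (Finset.mem_range.1 hi))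
  simp only [monomialTerm, doubleSeries, coeff₂_mk]
  rw [hin, Finset.sum_mul]
  refine Finset.sum_congr rfl fun s hs => ?_
  rw [map_piecewise_smul_basis, (Finset.mem_powersetCard.1 hs).2]
  ring

theorem norm_map_piecewise_basis_le {n : ℕ}
    (f : ContinuousMultilinearMap ℂ (fun _ : Fin n => ℂ × ℂ) ℂ) (s : Finset (Fin n)) :
    ‖f (s.piecewise (fun _ => (1, 0)) fun _ => (0, 1))‖ ≤ ‖f‖ := by
  refine f.unit_le_opNorm ((pi_norm_le_iff_of_nonneg zero_le_one).2 fun k => ?_)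
  by_cases hk : k ∈ s <;> simp [hk, Prod.norm_def]

theorem isConvergent_doubleSeries {p : FormalMultilinearSeries ℂ (ℂ × ℂ) ℂ} (hp : 0 < p.radius) :
    IsConvergent (doubleSeries p) := by
  obtain ⟨r, hr, hrp⟩ := ENNReal.lt_iff_exists_nnreal_btwn.1 hp
  obtain ⟨C, hC, hbound⟩ := p.norm_mul_pow_le_of_lt_radius hrp
  have hr : (0 : ℝ) < r := by exact_mod_cast hr
  refine ⟨C, 2 / r, hC, by positivity, fun i j => ?_⟩
  have hterm : ∀ s ∈ Finset.powersetCard i (Finset.univ : Finset (Fin (i + j))),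
      ‖p (i + j) (s.piecewise (fun _ => (1, 0)) fun _ => (0, 1))‖ ≤ C / r ^ (i + j) :=
    fun s _ => (norm_map_piecewise_basis_le _ s).trans
      ((le_div_iff₀ (by positivity)).2 (hbound _))
  rw [doubleSeries, coeff₂_mk]
  calc _ ≤ (i + j).choose i • (C / r ^ (i + j)) := by
        refine (norm_sum_le _ _).trans ((Finset.sum_le_card_nsmul _ _ _ hterm).trans_eq ?_)
        rw [Finset.card_powersetCard, Finset.card_univ, Fintype.card_fin]
    _ ≤ 2 ^ (i + j) * (C / r ^ (i + j)) := by
        rw [nsmul_eq_mul]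
        gcongr
        exact_mod_cast Nat.choose_le_two_pow _ _
    _ = C * (2 / r) ^ (i + j) := by rw [div_pow]; ring

theorem exists_hasExpansion (hF : AnalyticAt ℂ F 0) : ∃ Φ, HasExpansion Φ F := by
  obtain ⟨p, hp⟩ := hF
  have hconv := isConvergent_doubleSeries hp.radius_pos
  refine ⟨doubleSeries p, hconv, ?_⟩
  filter_upwards [hconv.eventually_summable_norm, hp.eventually_hasSum] with v hv hpv
  have hsum := hasSum_sum_antidiagonal hv.of_norm.hasSum
  simp_rw [sum_antidiagonal_monomialTerm_doubleSeries] at hsum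
  rw [zero_add] at hpv
  exact hpv.unique hsum ▸ hv.of_norm.hasSum

theorem tendsto_zero_prodMk : Tendsto (fun y : ℂ => ((0 : ℂ), y)) (𝓝 0) (𝓝 0) :=
  (Continuous.prodMk_right (0 : ℂ)).tendsto 0

theorem HasExpansion.maclaurin_eq (h : HasExpansion Φ F) :
    maclaurin (fun y => F (0, y)) = PowerSeries.coeff 0 Φ := by
  apply CamachoSad.maclaurin_eq
  filter_upwards [tendsto_zero_prodMk.eventually h.2] with y hy
  have hinj : Function.Injective fun j : ℕ => ((0 : ℕ), j) := fun _ _ h => by simpa using h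
  have hsum := (hinj.hasSum_iff fun ij hij => ?_).2 hy
  · simpa [EvaluatesTo, monomialTerm, coeff₂, Function.comp_def] using hsum
  · rcases ij with ⟨_ | i, j⟩
    · exact absurd ⟨j, rfl⟩ hij
    · simp [monomialTerm]

theorem HasExpansion.exists_eq_mul_fst (h : HasExpansion Φ F) (h₀ : PowerSeries.coeff 0 Φ = 0) :
    ∃ G, AnalyticAt ℂ G 0 ∧ F =ᶠ[𝓝 0] fun p => p.1 * G p := by
  let Ψ : ℂ⟦X⟧⟦X⟧ := PowerSeries.mk fun i => PowerSeries.coeff (i + 1) Φ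
  have hΨ (i j : ℕ) : coeff₂ i j Ψ = coeff₂ (i + 1) j Φ := by simp [coeff₂, Ψ]
  have hconv : IsConvergent Ψ := by
    obtain ⟨C, R, hC, hR, hb⟩ := h.1
    refine ⟨C * R, R, by positivity, hR, fun i j => hΨ i j ▸ (hb _ _).trans_eq ?_⟩
    ring
  refine ⟨_, hconv.hasExpansion.analyticAt, ?_⟩
  filter_upwards [h.2, hconv.hasExpansion.2] with p hp hp'
  have hinj : Function.Injective fun ij : ℕ × ℕ => (ij.1 + 1, ij.2) := fun _ _ h => by
    simpa [Prod.ext_iff] using h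
  have hsum := (hinj.hasSum_iff fun ij hij => ?_).2 hp
  · refine hsum.unique ((hp'.mul_left p.1).congr_fun fun ij => ?_)
    simp only [Function.comp, monomialTerm, hΨ, pow_succ]
    ring
  · rcases ij with ⟨_ | i, j⟩
    · simp [monomialTerm, coeff₂, h₀]
    · exact absurd ⟨(i, j), rfl⟩ hij

theorem exists_eq_fst_mul (hF : AnalyticAt ℂ F 0) (h₀ : maclaurin (fun y => F (0, y)) = 0) :
    ∃ G, AnalyticAt ℂ G 0 ∧ F =ᶠ[𝓝 0] fun p => p.1 * G p := by
  obtain ⟨Φ, hΦ⟩ := exists_hasExpansion hF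
  exact hΦ.exists_eq_mul_fst (hΦ.maclaurin_eq ▸ h₀)

theorem dense_fst_ne_zero : Dense {q : ℂ × ℂ | q.1 ≠ 0} := by
  have : {q : ℂ × ℂ | q.1 ≠ 0} = ({0}ᶜ : Set ℂ) ×ˢ Set.univ := by ext; simp
  exact this ▸ (dense_compl_singleton 0).prod dense_univ

theorem eventuallyEq_of_eventually_eq_of_fst_ne_zero (hF : AnalyticAt ℂ F 0)
    (hG : AnalyticAt ℂ G 0) (h : ∀ᶠ p in 𝓝 (0 : ℂ × ℂ), p.1 ≠ 0 → F p = G p) :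
    F =ᶠ[𝓝 0] G := by
  filter_upwards [hF.eventually_analyticAt, hG.eventually_analyticAt,
    eventually_eventually_nhds.2 h] with p hFp hGp hp
  have : (𝓝[{q : ℂ × ℂ | q.1 ≠ 0}] p).NeBot :=
    mem_closure_iff_nhdsWithin_neBot.1 (dense_fst_ne_zero p)
  have hFG : F =ᶠ[𝓝[{q : ℂ × ℂ | q.1 ≠ 0}] p] G := eventually_nhdsWithin_iff.2 hp
  exact tendsto_nhds_unique (hFp.continuousAt.tendsto.mono_left nhdsWithin_le_nhds)
    ((hGp.continuousAt.tendsto.mono_left nhdsWithin_le_nhds).congr' hFG.symm)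

end

/-! ### Rings of germs of holomorphic functions -/

section

variable {E E' : Type*} [NormedAddCommGroup E] [NormedSpace ℂ E] [NormedAddCommGroup E']
  [NormedSpace ℂ E']

/-- The algebra of the functions on `E` that are analytic at the origin. -/
def analyticSubalgebra (E : Type*) [NormedAddCommGroup E] [NormedSpace ℂ E] :
    Subalgebra ℂ (E → ℂ) where
  carrier := {F | AnalyticAt ℂ F 0}
  mul_mem' := AnalyticAt.mul
  add_mem' := AnalyticAt.add
  algebraMap_mem' _ := analyticAt_const

/-- The ideal of the analytic functions that vanish near the origin. -/
def nullIdeal (E : Type*) [NormedAddCommGroup E] [NormedSpace ℂ E] :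
    Ideal (analyticSubalgebra E) :=
  RingHom.ker ((Germ.coeRingHom (R := ℂ) (𝓝 (0 : E))).comp (analyticSubalgebra E).toSubring.subtype)

theorem mem_nullIdeal {F : analyticSubalgebra E} : F ∈ nullIdeal E ↔ F.1 =ᶠ[𝓝 0] 0 :=
  Germ.coe_eq

/-- The ring of germs of holomorphic functions at the origin of `E`. -/
def AnalyticGerm (E : Type*) [NormedAddCommGroup E] [NormedSpace ℂ E] : Type _ :=
  analyticSubalgebra E ⧸ nullIdeal E

instance : CommRing (AnalyticGerm E) :=
  inferInstanceAs (CommRing (analyticSubalgebra E ⧸ nullIdeal E))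

instance : Algebra ℂ (AnalyticGerm E) :=
  inferInstanceAs (Algebra ℂ (analyticSubalgebra E ⧸ nullIdeal E))

/-- The germ at the origin of an analytic function. -/
def germ (F : E → ℂ) (hF : AnalyticAt ℂ F 0) : AnalyticGerm E :=
  Ideal.Quotient.mk (nullIdeal E) ⟨F, hF⟩

theorem germ_eq_germ_iff {F G : E → ℂ} {hF : AnalyticAt ℂ F 0} {hG : AnalyticAt ℂ G 0} :
    germ F hF = germ G hG ↔ F =ᶠ[𝓝 0] G :=
  (Ideal.Quotient.eq.trans mem_nullIdeal).trans eventuallyEq_iff_sub.symm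

theorem exists_eq_germ (f : AnalyticGerm E) : ∃ F hF, f = germ F hF := by
  obtain ⟨⟨F, hF⟩, rfl⟩ := Ideal.Quotient.mk_surjective f
  exact ⟨F, hF, rfl⟩

theorem isUnit_germ {F : E → ℂ} (hF : AnalyticAt ℂ F 0) (h₀ : F 0 ≠ 0) : IsUnit (germ F hF) := by
  refine .of_mul_eq_one (germ _ (hF.inv h₀)) ?_
  refine germ_eq_germ_iff (hF := hF.mul (hF.inv h₀)) (hG := analyticAt_const).2 ?_
  filter_upwards [hF.continuousAt.eventually_ne h₀] with p hp using mul_inv_cancel₀ hp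

/-- The pullback of germs under an analytic map that fixes the origin. -/
def pullback (ψ : E → E') (hψ : AnalyticAt ℂ ψ 0) (h₀ : ψ 0 = 0) :
    AnalyticGerm E' →ₐ[ℂ] AnalyticGerm E :=
  Ideal.quotientMapₐ (nullIdeal E)
    { toFun F := ⟨F.1 ∘ ψ, AnalyticAt.comp (h₀.symm ▸ F.2) hψ⟩
      map_one' := rfl
      map_mul' _ _ := rfl
      map_zero' := rfl
      map_add' _ _ := rfl
      commutes' _ := rfl }
    fun F hF => mem_nullIdeal.2 <| by
      have hψ₀ : Tendsto ψ (𝓝 0) (𝓝 0) := by simpa only [h₀] using hψ.continuousAt.tendsto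
      exact hψ₀.eventually (mem_nullIdeal.1 hF)

end

/-! ### Germs in one and two variables -/

section

variable {F G : ℂ × ℂ → ℂ}

/-- The ring of germs of holomorphic functions at the origin of `ℂ`. -/
abbrev LineGerm : Type := AnalyticGerm ℂ

/-- The ring of germs of holomorphic functions at the origin of `ℂ²`. -/
abbrev PlaneGerm : Type := AnalyticGerm (ℂ × ℂ)

/-- The Taylor series of a germ in one variable. -/
def lineSeries : LineGerm →ₐ[ℂ] ℂ⟦X⟧ :=
  Ideal.Quotient.liftₐ (nullIdeal ℂ)
    { toFun F := maclaurin F.1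
      map_one' := (maclaurin_const 1).trans (map_one _)
      map_mul' F G := maclaurin_mul F.2 G.2
      map_zero' := maclaurin_zero
      map_add' F G := maclaurin_add F.2 G.2
      commutes' c := maclaurin_const c }
    fun _ hF => (maclaurin_congr (mem_nullIdeal.1 hF)).trans maclaurin_zero

theorem lineSeries_germ {F : ℂ → ℂ} (hF : AnalyticAt ℂ F 0) :
    lineSeries (germ F hF) = maclaurin F := rfl

theorem lineSeries_injective : Function.Injective lineSeries := by
  refine (injective_iff_map_eq_zero lineSeries).2 fun f hf => ?_
  obtain ⟨F, hF, rfl⟩ := exists_eq_germ f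
  exact germ_eq_germ_iff (hG := analyticAt_const).2 (eventually_eq_zero_of_maclaurin_eq_zero hF hf)

theorem analyticAt_prodMk_zero : AnalyticAt ℂ (fun y : ℂ => ((0 : ℂ), y)) 0 :=
  analyticAt_const.prod analyticAt_id

theorem analyticAt_restrict (hF : AnalyticAt ℂ F 0) : AnalyticAt ℂ (fun y => F (0, y)) 0 :=
  AnalyticAt.fun_comp (g := F) (f := fun y : ℂ => ((0 : ℂ), y)) hF analyticAt_prodMk_zero

/-- The Taylor series of the restriction of a germ to the line `x = 0`. -/
def restrictSeries : PlaneGerm →ₐ[ℂ] ℂ⟦X⟧ :=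
  lineSeries.comp (pullback _ analyticAt_prodMk_zero rfl)

theorem constantCoeff_restrictSeries_germ (hF : AnalyticAt ℂ F 0) :
    PowerSeries.constantCoeff (restrictSeries (germ F hF)) = F 0 :=
  constantCoeff_maclaurin _

/-- The blow-up chart `(x, y) ↦ (x, x (c + y))`. -/
def blowUp (c : ℂ) (p : ℂ × ℂ) : ℂ × ℂ := (p.1, p.1 * (c + p.2))

theorem blowUp_zero (c : ℂ) : blowUp c 0 = 0 := by simp [blowUp]

theorem analyticAt_blowUp (c : ℂ) : AnalyticAt ℂ (blowUp c) 0 :=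
  analyticAt_fst.prod (analyticAt_fst.mul (analyticAt_const.add analyticAt_snd))

theorem analyticAt_swap : AnalyticAt ℂ (Prod.swap : ℂ × ℂ → ℂ × ℂ) 0 :=
  analyticAt_snd.prod analyticAt_fst

theorem germ_fst_dvd_of_restrictSeries_eq_zero {f : PlaneGerm} (hf : restrictSeries f = 0) :
    germ Prod.fst analyticAt_fst ∣ f := by
  obtain ⟨F, hF, rfl⟩ := exists_eq_germ f
  obtain ⟨G, hG, h⟩ := exists_eq_fst_mul hF hf
  exact ⟨germ G hG, germ_eq_germ_iff.2 h⟩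

theorem eq_zero_of_germ_fst_mul_eq_zero {f : PlaneGerm}
    (hf : germ Prod.fst analyticAt_fst * f = 0) : f = 0 := by
  obtain ⟨F, hF, rfl⟩ := exists_eq_germ f
  have hf : (fun p => p.1 * F p) =ᶠ[𝓝 0] 0 :=
    germ_eq_germ_iff (hF := analyticAt_fst.mul hF) (hG := analyticAt_const).1 hf
  refine germ_eq_germ_iff.2 (eventuallyEq_of_eventually_eq_of_fst_ne_zero hF analyticAt_const ?_)
  filter_upwards [hf] with p hp hp₀
  exact (mul_eq_zero.1 hp).resolve_left hp₀

theorem isUnit_of_constantCoeff_restrictSeries_ne_zero {f : PlaneGerm}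
    (hf : PowerSeries.constantCoeff (restrictSeries f) ≠ 0) : IsUnit f := by
  obtain ⟨F, hF, rfl⟩ := exists_eq_germ f
  rw [constantCoeff_restrictSeries_germ] at hf
  exact isUnit_germ hF hf

theorem exists_eq_germ_fst_mul_add_germ_snd_mul {f : PlaneGerm}
    (hf : PowerSeries.constantCoeff (restrictSeries f) = 0) :
    ∃ f₁ f₂, f = germ Prod.fst analyticAt_fst * f₁ + germ Prod.snd analyticAt_snd * f₂ := by
  obtain ⟨F, hF, rfl⟩ := exists_eq_germ f
  rw [constantCoeff_restrictSeries_germ] at hf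
  have hsnd : AnalyticAt ℂ (fun p : ℂ × ℂ => F (0, p.2)) 0 :=
    (analyticAt_restrict hF).fun_comp (f := Prod.snd) (x := (0 : ℂ × ℂ)) analyticAt_snd
  have hfst : AnalyticAt ℂ (fun p : ℂ × ℂ => F (0, p.1)) 0 :=
    (analyticAt_restrict hF).fun_comp (f := Prod.fst) (x := (0 : ℂ × ℂ)) analyticAt_fst
  obtain ⟨G₁, hG₁, h₁⟩ := exists_eq_fst_mul (hF.sub hsnd) (by simp [maclaurin_zero])
  obtain ⟨G₂, hG₂, h₂⟩ := exists_eq_fst_mul hfst (by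
    rw [show (0 : ℂ × ℂ) = (0, 0) from rfl] at hf
    simp [hf, maclaurin_zero])
  have hG₂' : AnalyticAt ℂ (G₂ ∘ Prod.swap) 0 := AnalyticAt.comp hG₂ analyticAt_swap
  refine ⟨germ G₁ hG₁, germ _ hG₂', germ_eq_germ_iff
    (hG := (analyticAt_fst.mul hG₁).add (analyticAt_snd.mul hG₂')).2 ?_⟩
  filter_upwards [h₁, (continuous_swap.tendsto (0 : ℂ × ℂ)).eventually h₂] with p hp₁ hp₂
  simp only [Pi.sub_apply, Prod.fst_swap] at hp₁ hp₂
  simp only [Pi.add_apply, Pi.mul_apply, Function.comp, ← hp₁, ← hp₂, sub_add_cancel]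

/-- The germs of holomorphic functions at the origin of `ℂ²`, with their geometric operations. -/
def planeGermRing : PlaneGermRing ℂ PlaneGerm where
  x := germ Prod.fst analyticAt_fst
  y := germ Prod.snd analyticAt_snd
  restrict := restrictSeries
  swap := pullback Prod.swap analyticAt_swap rfl
  chart c := pullback (blowUp c) (analyticAt_blowUp c) (blowUp_zero c)
  restrict_x := maclaurin_zero
  restrict_y := maclaurin_id
  x_dvd_of_restrict_eq_zero _ := germ_fst_dvd_of_restrictSeries_eq_zero
  eq_zero_of_x_mul_eq_zero _ := eq_zero_of_germ_fst_mul_eq_zero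
  swap_swap f := by
    obtain ⟨F, hF, rfl⟩ := exists_eq_germ f
    rfl
  swap_x := rfl
  chart_x _ := rfl
  chart_y _ := rfl
  isUnit_of_constantCoeff_restrict_ne_zero _ := isUnit_of_constantCoeff_restrictSeries_ne_zero
  exists_eq_x_mul_add_y_mul _ := exists_eq_germ_fst_mul_add_germ_snd_mul
  restrict_swap_chart_zero f := by
    obtain ⟨F, hF, rfl⟩ := exists_eq_germ f
    exact congrArg maclaurin (funext fun y => congrArg F (by simp [blowUp]))

end

/-! ### Briot–Bouquet equations -/

section

variable {r s : ℝ} {f g A B : ℂ⟦X⟧} {Φ : ℂ⟦X⟧⟦X⟧} {C R : ℝ} {l : ℂ} {n N : ℕ}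

/-- The partial sum up to degree `N` of the weighted `ℓ¹`-norm `∑ n, ‖fₙ‖ * r ^ n`. Uniform bounds
in `N` express convergence estimates without any summability. -/
def partialNorm (r : ℝ) (N : ℕ) (f : ℂ⟦X⟧) : ℝ :=
  ∑ n ∈ Finset.range (N + 1), ‖PowerSeries.coeff n f‖ * r ^ n

theorem partialNorm_nonneg (hr : 0 ≤ r) (N : ℕ) (f : ℂ⟦X⟧) : 0 ≤ partialNorm r N f :=
  Finset.sum_nonneg fun _ _ => by positivity

theorem norm_coeff_mul_pow_le_partialNorm (hr : 0 ≤ r) (h : n ≤ N) (f : ℂ⟦X⟧) :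
    ‖PowerSeries.coeff n f‖ * r ^ n ≤ partialNorm r N f :=
  Finset.single_le_sum (f := fun n => ‖PowerSeries.coeff n f‖ * r ^ n)
    (fun _ _ => by positivity) (Finset.mem_range_succ_iff.2 h)

theorem partialNorm_mul_le (hr : 0 ≤ r) (N : ℕ) (f g : ℂ⟦X⟧) :
    partialNorm r N (f * g) ≤ partialNorm r N f * partialNorm r N g := by
  let term (h : ℂ⟦X⟧) (n : ℕ) : ℝ := ‖PowerSeries.coeff n h‖ * r ^ n
  let lower := Finset.range (N + 1) ×ˢ Finset.range (N + 1) |>.filter fun ij => ij.1 + ij.2 ≤ N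
  have hmaps : ∀ ij ∈ lower, ij.1 + ij.2 ∈ Finset.range (N + 1) := fun ij hij =>
    Finset.mem_range_succ_iff.2 (Finset.mem_filter.1 hij).2
  have hfiber : ∀ n ∈ Finset.range (N + 1), lower.filter (fun ij => ij.1 + ij.2 = n) =
      Finset.HasAntidiagonal.antidiagonal n := by
    intro n hn
    ext ij
    simp only [lower, Finset.mem_filter, Finset.mem_product, Finset.mem_range,
      Finset.HasAntidiagonal.mem_antidiagonal] at hn ⊢
    lia
  calc partialNorm r N (f * g)
      ≤ ∑ n ∈ Finset.range (N + 1), ∑ ij ∈ Finset.HasAntidiagonal.antidiagonal n,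
          term f ij.1 * term g ij.2 := by
        refine Finset.sum_le_sum fun n _ => ?_
        rw [PowerSeries.coeff_mul]
        refine (mul_le_mul_of_nonneg_right (norm_sum_le _ _) (by positivity)).trans_eq ?_
        rw [Finset.sum_mul]
        refine Finset.sum_congr rfl fun ij hij => ?_
        rw [← Finset.HasAntidiagonal.mem_antidiagonal.1 hij, norm_mul, pow_add]
        ring
    _ = ∑ ij ∈ lower, term f ij.1 * term g ij.2 := by
        rw [← Finset.sum_fiberwise_of_maps_to hmaps]
        exact Finset.sum_congr rfl fun n hn => by rw [hfiber n hn]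
    _ ≤ ∑ ij ∈ Finset.range (N + 1) ×ˢ Finset.range (N + 1), term f ij.1 * term g ij.2 :=
        Finset.sum_le_sum_of_subset_of_nonneg (Finset.filter_subset _ _)
          fun _ _ _ => by positivity
    _ = partialNorm r N f * partialNorm r N g := by
        rw [partialNorm, partialNorm, Finset.sum_mul_sum, Finset.sum_product]

theorem partialNorm_X_pow_le (hr : 0 ≤ r) (N i : ℕ) :
    partialNorm r N (PowerSeries.X ^ i) ≤ r ^ i := by
  simp only [partialNorm, PowerSeries.coeff_X_pow, apply_ite norm, norm_one, norm_zero, ite_mul,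
    one_mul, zero_mul, Finset.sum_ite_eq']
  split_ifs
  · rfl
  · positivity

theorem partialNorm_pow_le (hr : 0 ≤ r) (N : ℕ) (f : ℂ⟦X⟧) (j : ℕ) :
    partialNorm r N (f ^ j) ≤ partialNorm r N f ^ j := by
  induction j with
  | zero => simpa using partialNorm_X_pow_le hr N 0
  | succ j ih =>
    rw [pow_succ, pow_succ]
    exact (partialNorm_mul_le hr N _ _).trans
      (mul_le_mul_of_nonneg_right ih (partialNorm_nonneg hr N f))

theorem partialNorm_X_pow_mul_pow_le (hr : 0 ≤ r) (hA : partialNorm r N A ≤ s) (i j : ℕ) :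
    partialNorm r N (PowerSeries.X ^ i * A ^ j) ≤ r ^ i * s ^ j := by
  have hA₀ := partialNorm_nonneg hr N A
  calc _ ≤ partialNorm r N (PowerSeries.X ^ i) * partialNorm r N (A ^ j) :=
        partialNorm_mul_le hr _ _ _
    _ ≤ r ^ i * partialNorm r N A ^ j :=
        mul_le_mul (partialNorm_X_pow_le hr _ _) (partialNorm_pow_le hr _ _ _)
          (partialNorm_nonneg hr _ _) (by positivity)
    _ ≤ r ^ i * s ^ j := by gcongr

theorem coeff_X_pow_mul_pow_eq_zero (hA : PowerSeries.X ∣ A) {i j : ℕ} (hij : n < i + j) :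
    PowerSeries.coeff n (PowerSeries.X ^ i * A ^ j) = 0 := by
  refine PowerSeries.X_pow_dvd_iff.1 ?_ n hij
  rw [pow_add]
  exact mul_dvd_mul_left _ (pow_dvd_pow_of_dvd hA j)

theorem coeff_X_pow_mul_pow_congr (hA : PowerSeries.X ∣ A) (hB : PowerSeries.X ∣ B)
    (hAB : PowerSeries.X ^ n ∣ A - B) {i j : ℕ} (hij : ¬(i = 0 ∧ j = 1)) :
    PowerSeries.coeff n (PowerSeries.X ^ i * A ^ j) =
      PowerSeries.coeff n (PowerSeries.X ^ i * B ^ j) := by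
  suffices h : PowerSeries.X ^ (n + 1) ∣ PowerSeries.X ^ i * A ^ j - PowerSeries.X ^ i * B ^ j by
    simpa [sub_eq_zero] using PowerSeries.X_pow_dvd_iff.1 h n n.lt_succ_self
  rw [← mul_sub]
  rcases i with _ | i
  · rw [pow_zero, one_mul, ← geom_sum₂_mul, mul_comm, pow_succ]
    refine mul_dvd_mul hAB (Finset.dvd_sum fun k hk => ?_)
    have hj : k < j := Finset.mem_range.1 hk
    rcases k with _ | k
    · exact Dvd.dvd.mul_left (dvd_pow hB (by lia)) _
    · exact Dvd.dvd.mul_right (dvd_pow hA k.succ_ne_zero) _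
  · rw [add_comm, pow_add, pow_one]
    exact mul_dvd_mul (dvd_pow_self _ i.succ_ne_zero) (hAB.trans (sub_dvd_pow_sub_pow _ _ _))

/-- The series `Φ(X, A)`, for a series `A` without constant term: then only the monomials of `Φ`
with both exponents at most `n` contribute to the coefficient of degree `n`. -/
def substSeries (Φ : ℂ⟦X⟧⟦X⟧) (A : ℂ⟦X⟧) : ℂ⟦X⟧ :=
  PowerSeries.mk fun n => ∑ ij ∈ Finset.range (n + 1) ×ˢ Finset.range (n + 1),
    coeff₂ ij.1 ij.2 Φ * PowerSeries.coeff n (PowerSeries.X ^ ij.1 * A ^ ij.2)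

theorem coeff_substSeries (hA : PowerSeries.X ∣ A) (hn : n ≤ N) :
    PowerSeries.coeff n (substSeries Φ A) = ∑ ij ∈ Finset.range (N + 1) ×ˢ Finset.range (N + 1),
      coeff₂ ij.1 ij.2 Φ * PowerSeries.coeff n (PowerSeries.X ^ ij.1 * A ^ ij.2) := by
  rw [substSeries, PowerSeries.coeff_mk]
  have hsub : Finset.range (n + 1) ⊆ Finset.range (N + 1) :=
    Finset.range_subset_range.2 (by lia)
  refine Finset.sum_subset (Finset.product_subset_product hsub hsub) fun ij _ h => ?_
  simp only [Finset.mem_product, Finset.mem_range, not_and_or, not_lt] at h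
  rw [coeff_X_pow_mul_pow_eq_zero hA (by lia), mul_zero]

theorem coeff_substSeries_congr (h₁ : coeff₂ 0 1 Φ = 0) (hA : PowerSeries.X ∣ A)
    (hB : PowerSeries.X ∣ B) (hAB : PowerSeries.X ^ n ∣ A - B) :
    PowerSeries.coeff n (substSeries Φ A) = PowerSeries.coeff n (substSeries Φ B) := by
  simp only [substSeries, PowerSeries.coeff_mk]
  refine Finset.sum_congr rfl fun ij _ => ?_
  by_cases hij : ij.1 = 0 ∧ ij.2 = 1
  · rw [hij.1, hij.2, h₁, zero_mul, zero_mul]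
  · rw [coeff_X_pow_mul_pow_congr hA hB hAB hij]

theorem coeff_zero_substSeries (h₀ : coeff₂ 0 0 Φ = 0) :
    PowerSeries.coeff 0 (substSeries Φ A) = 0 := by
  simp [substSeries, h₀]

theorem partialNorm_substSeries_le_sum (hr : 0 ≤ r) (hX : PowerSeries.X ∣ A)
    (hA : partialNorm r N A ≤ s) :
    partialNorm r N (substSeries Φ A) ≤ ∑ ij ∈ Finset.range (N + 1) ×ˢ Finset.range (N + 1),
      ‖coeff₂ ij.1 ij.2 Φ‖ * (r ^ ij.1 * s ^ ij.2) := by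
  calc partialNorm r N (substSeries Φ A)
      ≤ ∑ n ∈ Finset.range (N + 1), ∑ ij ∈ Finset.range (N + 1) ×ˢ Finset.range (N + 1),
          ‖coeff₂ ij.1 ij.2 Φ‖ *
            (‖PowerSeries.coeff n (PowerSeries.X ^ ij.1 * A ^ ij.2)‖ * r ^ n) := by
        refine Finset.sum_le_sum fun n hn => ?_
        rw [coeff_substSeries hX (Finset.mem_range_succ_iff.1 hn)]
        refine (mul_le_mul_of_nonneg_right (norm_sum_le _ _) (by positivity)).trans_eq ?_
        simp only [Finset.sum_mul, norm_mul, mul_assoc]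
    _ ≤ _ := by
        rw [Finset.sum_comm]
        refine Finset.sum_le_sum fun ij _ => ?_
        rw [← Finset.mul_sum]
        exact mul_le_mul_of_nonneg_left (partialNorm_X_pow_mul_pow_le hr hA _ _) (norm_nonneg _)

theorem pow_mul_pow_le {a b : ℝ} (ha₀ : 0 ≤ a) (ha : a ≤ 1 / 2) (hb₀ : 0 ≤ b) (hb : b ≤ 1 / 2)
    {i j : ℕ} (hij : i ≠ 0 ∨ 2 ≤ j) :
    a ^ i * b ^ j ≤ (2 * a + 4 * b ^ 2) * ((1 / 2) ^ i * (1 / 2) ^ j) := by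
  have hhalf : (0 : ℝ) ≤ (1 / 2) ^ i * (1 / 2) ^ j := by positivity
  rcases hij with hi | hj
  · obtain ⟨i, rfl⟩ := Nat.exists_eq_succ_of_ne_zero hi
    calc a ^ (i + 1) * b ^ j ≤ a * ((1 / 2) ^ i * (1 / 2) ^ j) := by
          rw [pow_succ', mul_assoc]
          gcongr
      _ = 2 * a * ((1 / 2) ^ (i + 1) * (1 / 2) ^ j) := by ring
      _ ≤ _ := by gcongr; linarith [sq_nonneg b]
  · obtain ⟨j, rfl⟩ := Nat.exists_eq_add_of_le hj
    calc a ^ i * b ^ (2 + j) ≤ b ^ 2 * ((1 / 2) ^ i * (1 / 2) ^ j) := by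
          rw [pow_add, mul_left_comm]
          gcongr
      _ = 4 * b ^ 2 * ((1 / 2) ^ i * (1 / 2) ^ (2 + j)) := by ring
      _ ≤ _ := by gcongr; linarith

theorem partialNorm_substSeries_le (hΦ : ∀ i j, ‖coeff₂ i j Φ‖ ≤ C * R ^ (i + j)) (hR : 0 ≤ R)
    (h₀ : coeff₂ 0 0 Φ = 0) (h₁ : coeff₂ 0 1 Φ = 0) (hr : 0 ≤ r) (hRr : R * r ≤ 1 / 2)
    (hs : 0 ≤ s) (hRs : R * s ≤ 1 / 2) (hX : PowerSeries.X ∣ A) (hA : partialNorm r N A ≤ s) :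
    partialNorm r N (substSeries Φ A) ≤ 8 * C * (R * r) + 16 * C * (R * s) ^ 2 := by
  have hC : 0 ≤ C := by simpa [h₀] using hΦ 0 0
  have hterm (i j : ℕ) : ‖coeff₂ i j Φ‖ * (r ^ i * s ^ j) ≤
      C * (2 * (R * r) + 4 * (R * s) ^ 2) * ((1 / 2) ^ i * (1 / 2) ^ j) := by
    rcases em (i ≠ 0 ∨ 2 ≤ j) with hij | hij
    · calc _ ≤ C * R ^ (i + j) * (r ^ i * s ^ j) := by gcongr; exact hΦ i j
        _ = C * ((R * r) ^ i * (R * s) ^ j) := by rw [mul_pow, mul_pow, pow_add]; ring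
        _ ≤ C * ((2 * (R * r) + 4 * (R * s) ^ 2) * ((1 / 2) ^ i * (1 / 2) ^ j)) := by
            refine mul_le_mul_of_nonneg_left ?_ hC
            exact pow_mul_pow_le (by positivity) hRr (by positivity) hRs hij
        _ = _ := by ring
    · have hij : i = 0 ∧ (j = 0 ∨ j = 1) := by lia
      have hzero : coeff₂ i j Φ = 0 := by rcases hij with ⟨rfl, rfl | rfl⟩ <;> assumption
      rw [hzero, norm_zero, zero_mul]
      positivity
  have hgeom := sum_geometric_two_le (N + 1)
  calc _ ≤ ∑ ij ∈ Finset.range (N + 1) ×ˢ Finset.range (N + 1),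
          C * (2 * (R * r) + 4 * (R * s) ^ 2) * ((1 / 2) ^ ij.1 * (1 / 2) ^ ij.2) :=
        (partialNorm_substSeries_le_sum hr hX hA).trans (Finset.sum_le_sum fun _ _ => hterm _ _)
    _ = C * (2 * (R * r) + 4 * (R * s) ^ 2) * ((∑ i ∈ Finset.range (N + 1), (1 / 2) ^ i) *
          ∑ j ∈ Finset.range (N + 1), (1 / 2) ^ j) := by
        rw [← Finset.mul_sum, Finset.sum_mul_sum, Finset.sum_product]
    _ ≤ C * (2 * (R * r) + 4 * (R * s) ^ 2) * (2 * 2) := by gcongr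
    _ = 8 * C * (R * r) + 16 * C * (R * s) ^ 2 := by ring

/-- The truncation in degrees less than `n` of the formal solution `Y` of the Briot–Bouquet equation
`X * Y' = l * Y + Φ(X, Y)`. -/
def truncatedSolution (Φ : ℂ⟦X⟧⟦X⟧) (l : ℂ) : ℕ → ℂ⟦X⟧
  | 0 => 0
  | n + 1 => truncatedSolution Φ l n + PowerSeries.C
      ((n - l)⁻¹ * PowerSeries.coeff n (substSeries Φ (truncatedSolution Φ l n))) *
        PowerSeries.X ^ n

/-- The formal solution of the Briot–Bouquet equation `X * Y' = l * Y + Φ(X, Y)`. -/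
def formalSolution (Φ : ℂ⟦X⟧⟦X⟧) (l : ℂ) : ℂ⟦X⟧ := PowerSeries.mk fun n =>
  (n - l)⁻¹ * PowerSeries.coeff n (substSeries Φ (truncatedSolution Φ l n))

theorem coeff_truncatedSolution (Φ : ℂ⟦X⟧⟦X⟧) (l : ℂ) (n m : ℕ) :
    PowerSeries.coeff m (truncatedSolution Φ l n) =
      if m < n then PowerSeries.coeff m (formalSolution Φ l) else 0 := by
  induction n with
  | zero => simp [truncatedSolution]
  | succ n ih =>
    rw [truncatedSolution, map_add, ih, PowerSeries.coeff_C_mul_X_pow]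
    rcases lt_trichotomy m n with h | rfl | h
    · simp [h, h.ne, h.trans n.lt_succ_self]
    · simp [formalSolution]
    · simp [h.not_gt, h.ne', show ¬m < n + 1 by lia]

theorem X_pow_dvd_truncatedSolution_sub (Φ : ℂ⟦X⟧⟦X⟧) (l : ℂ) (n : ℕ) :
    PowerSeries.X ^ n ∣ truncatedSolution Φ l n - formalSolution Φ l := by
  refine PowerSeries.X_pow_dvd_iff.2 fun m hm => ?_
  rw [map_sub, coeff_truncatedSolution, if_pos hm, sub_self]

theorem X_dvd_formalSolution (h₀ : coeff₂ 0 0 Φ = 0) : PowerSeries.X ∣ formalSolution Φ l := by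
  rw [PowerSeries.X_dvd_iff, ← PowerSeries.coeff_zero_eq_constantCoeff_apply, formalSolution,
    PowerSeries.coeff_mk, coeff_zero_substSeries h₀, mul_zero]

theorem X_dvd_truncatedSolution (h₀ : coeff₂ 0 0 Φ = 0) (n : ℕ) :
    PowerSeries.X ∣ truncatedSolution Φ l n := by
  rw [PowerSeries.X_dvd_iff, ← PowerSeries.coeff_zero_eq_constantCoeff_apply,
    coeff_truncatedSolution, PowerSeries.coeff_zero_eq_constantCoeff_apply,
    PowerSeries.X_dvd_iff.1 (X_dvd_formalSolution h₀), ite_self]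

theorem sub_mul_coeff_formalSolution (h₀ : coeff₂ 0 0 Φ = 0) (h₁ : coeff₂ 0 1 Φ = 0)
    (hl : ∀ n : ℕ, 1 ≤ n → l ≠ n) (n : ℕ) :
    (n - l) * PowerSeries.coeff n (formalSolution Φ l) =
      PowerSeries.coeff n (substSeries Φ (formalSolution Φ l)) := by
  rcases n.eq_zero_or_pos with rfl | hn
  · rw [coeff_zero_substSeries h₀, PowerSeries.coeff_zero_eq_constantCoeff_apply,
      PowerSeries.X_dvd_iff.1 (X_dvd_formalSolution h₀), mul_zero]
  · rw [← coeff_substSeries_congr h₁ (X_dvd_truncatedSolution h₀ n) (X_dvd_formalSolution h₀)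
        (X_pow_dvd_truncatedSolution_sub Φ l n), formalSolution, PowerSeries.coeff_mk,
      mul_inv_cancel_left₀ (sub_ne_zero.2 (hl n hn).symm)]

theorem exists_pos_le_norm_natCast_sub (hl : ∀ n : ℕ, 1 ≤ n → l ≠ n) :
    ∃ δ > (0 : ℝ), ∀ n : ℕ, 1 ≤ n → δ ≤ ‖(n : ℂ) - l‖ := by
  have hclosed : IsClosed ((fun n : ℕ => ((n : ℝ) : ℂ)) '' Set.Ici 1) :=
    (Complex.isometry_ofReal.isClosedEmbedding.comp Nat.isClosedEmbedding_coe_real).isClosedMap _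
      (isClosed_discrete _)
  have hmem : l ∈ ((fun n : ℕ => ((n : ℝ) : ℂ)) '' Set.Ici 1)ᶜ := by
    rintro ⟨n, hn, rfl⟩
    exact hl n hn (Complex.ofReal_natCast n)
  obtain ⟨δ, hδ, hball⟩ := Metric.isOpen_iff.1 hclosed.isOpen_compl l hmem
  refine ⟨δ, hδ, fun n hn => le_of_not_gt fun hlt => hball ?_ ⟨n, hn, rfl⟩⟩
  simpa [Metric.mem_ball, dist_eq_norm] using hlt

theorem partialNorm_truncatedSolution_succ_le {δ : ℝ} (h₀ : coeff₂ 0 0 Φ = 0)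
    (h₁ : coeff₂ 0 1 Φ = 0) (hl : ∀ n : ℕ, 1 ≤ n → l ≠ n)
    (hδ : ∀ n : ℕ, 1 ≤ n → δ ≤ ‖(n : ℂ) - l‖) (hr : 0 ≤ r) (N : ℕ) :
    δ * partialNorm r (N + 1) (truncatedSolution Φ l (N + 1)) ≤
      partialNorm r N (substSeries Φ (truncatedSolution Φ l N)) := by
  rw [partialNorm, partialNorm, Finset.sum_range_succ, coeff_truncatedSolution,
    if_neg (lt_irrefl _), norm_zero, zero_mul, add_zero, Finset.mul_sum]
  refine Finset.sum_le_sum fun n hn => ?_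
  have hnN := Finset.mem_range_succ_iff.1 hn
  have htrunc : PowerSeries.X ^ n ∣ truncatedSolution Φ l N - formalSolution Φ l :=
    (pow_dvd_pow _ hnN).trans (X_pow_dvd_truncatedSolution_sub Φ l N)
  rw [coeff_truncatedSolution, if_pos (Finset.mem_range.1 hn), ← mul_assoc,
    coeff_substSeries_congr h₁ (X_dvd_truncatedSolution h₀ N) (X_dvd_formalSolution h₀) htrunc,
    ← sub_mul_coeff_formalSolution h₀ h₁ hl, norm_mul]
  rcases n.eq_zero_or_pos with rfl | hn
  · simp [PowerSeries.X_dvd_iff.1 (X_dvd_formalSolution h₀)]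
  · gcongr
    exact hδ n hn

theorem exists_radius (K R : ℝ) :
    ∃ r > 0, R * r ≤ 1 / 2 ∧ R * (K * r) ≤ 1 / 2 ∧ R * K ^ 2 * r ≤ 1 / 2 := by
  have h (c : ℝ) : Tendsto (fun r => c * r) (𝓝[>] 0) (𝓝 0) :=
    tendsto_nhdsWithin_of_tendsto_nhds (by simpa using (continuous_const_mul c).tendsto 0)
  have hsmall (c : ℝ) : ∀ᶠ r in 𝓝[>] 0, c * r ≤ 1 / 2 := (h c).eventually_le_const (by norm_num)
  obtain ⟨r, ⟨h₁, h₂, h₃⟩, hr⟩ :=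
    (((hsmall R).and ((hsmall (R * K)).and (hsmall (R * K ^ 2)))).and self_mem_nhdsWithin).exists
  exact ⟨r, hr, h₁, by rwa [← mul_assoc], h₃⟩

theorem exists_partialNorm_formalSolution_le (hC : 0 < C) (hR : 0 < R)
    (hΦ : ∀ i j, ‖coeff₂ i j Φ‖ ≤ C * R ^ (i + j)) (h₀ : coeff₂ 0 0 Φ = 0)
    (h₁ : coeff₂ 0 1 Φ = 0) (hl : ∀ n : ℕ, 1 ≤ n → l ≠ n) :
    ∃ r > 0, ∃ s > 0, R * r ≤ 1 / 2 ∧ R * s ≤ 1 / 2 ∧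
      ∀ N, partialNorm r N (formalSolution Φ l) ≤ s := by
  obtain ⟨δ, hδ, hgap⟩ := exists_pos_le_norm_natCast_sub hl
  let K := 16 * C * R / δ
  have : 0 < K := by positivity
  obtain ⟨r, hr, hRr, hRKr, hRK⟩ := exists_radius K R
  have hmaj : 8 * C * (R * r) + 16 * C * (R * (K * r)) ^ 2 ≤ δ * (K * r) := by
    calc 8 * C * (R * r) + 16 * C * (R * (K * r)) ^ 2
        = 8 * C * R * r + 16 * C * R * r * (R * K ^ 2 * r) := by ring
      _ ≤ 8 * C * R * r + 16 * C * R * r * (1 / 2) := by gcongr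
      _ = δ * (K * r) := by simp only [K]; field_simp; ring
  have hbound : ∀ N, partialNorm r N (truncatedSolution Φ l N) ≤ K * r := by
    intro N
    induction N with
    | zero => simpa [partialNorm, truncatedSolution] using (by positivity : 0 ≤ K * r)
    | succ N ih =>
      exact le_of_mul_le_mul_left
        ((partialNorm_truncatedSolution_succ_le h₀ h₁ hl hgap hr.le N).trans
          ((partialNorm_substSeries_le hΦ hR.le h₀ h₁ hr.le hRr (by positivity) hRKr
            (X_dvd_truncatedSolution h₀ N) ih).trans hmaj)) hδ
  refine ⟨r, hr, K * r, by positivity, hRr, hRKr, fun N => ?_⟩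
  calc partialNorm r N (formalSolution Φ l)
      = ∑ n ∈ Finset.range (N + 1),
          ‖PowerSeries.coeff n (truncatedSolution Φ l (N + 1))‖ * r ^ n := by
        refine Finset.sum_congr rfl fun n hn => ?_
        rw [coeff_truncatedSolution, if_pos (Finset.mem_range.1 hn)]
    _ ≤ partialNorm r (N + 1) (truncatedSolution Φ l (N + 1)) :=
        Finset.sum_le_sum_of_subset_of_nonneg (Finset.range_subset_range.2 (N + 1).le_succ)
          fun _ _ _ => by positivity
    _ ≤ K * r := hbound (N + 1)

theorem sum_range_norm_le_of_partialNorm_le (hr : 0 ≤ r)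
    (hΦ : ∀ i j, ‖coeff₂ i j Φ‖ ≤ C * R ^ (i + j)) (hA : ∀ N, partialNorm r N A ≤ s) {t : ℂ}
    (ht : ‖t‖ ≤ r) (i j M : ℕ) :
    ∑ n ∈ Finset.range M, ‖coeff₂ i j Φ *
      (PowerSeries.coeff n (PowerSeries.X ^ i * A ^ j) * t ^ n)‖ ≤
        C * ((R * r) ^ i * (R * s) ^ j) := by
  have : 0 ≤ s := (partialNorm_nonneg hr 0 A).trans (hA 0)
  calc _ ≤ ∑ n ∈ Finset.range (M + 1), ‖coeff₂ i j Φ *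
          (PowerSeries.coeff n (PowerSeries.X ^ i * A ^ j) * t ^ n)‖ :=
        Finset.sum_le_sum_of_subset_of_nonneg (Finset.range_subset_range.2 M.le_succ)
          fun _ _ _ => norm_nonneg _
    _ ≤ ‖coeff₂ i j Φ‖ * partialNorm r M (PowerSeries.X ^ i * A ^ j) := by
        rw [partialNorm, Finset.mul_sum]
        refine Finset.sum_le_sum fun n _ => ?_
        rw [norm_mul, norm_mul, norm_pow]
        gcongr
    _ ≤ C * R ^ (i + j) * (r ^ i * s ^ j) :=
        mul_le_mul (hΦ i j) (partialNorm_X_pow_mul_pow_le hr (hA M) i j)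
          (partialNorm_nonneg hr _ _) ((norm_nonneg _).trans (hΦ i j))
    _ = C * ((R * r) ^ i * (R * s) ^ j) := by rw [mul_pow, mul_pow, pow_add]; ring

theorem evaluatesTo_substSeries (hR : 0 ≤ R) (hΦ : ∀ i j, ‖coeff₂ i j Φ‖ ≤ C * R ^ (i + j))
    (hr : 0 ≤ r) (hRr : R * r < 1) (hRs : R * s < 1) (hX : PowerSeries.X ∣ A)
    (hA : ∀ N, partialNorm r N A ≤ s) {t u w : ℂ} (ht : ‖t‖ ≤ r) (hu : EvaluatesTo A t u)
    (hw : HasSum (monomialTerm Φ (t, u)) w) : EvaluatesTo (substSeries Φ A) t w := by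
  let term : (ℕ × ℕ) × ℕ → ℂ := fun q => coeff₂ q.1.1 q.1.2 Φ *
    (PowerSeries.coeff q.2 (PowerSeries.X ^ q.1.1 * A ^ q.1.2) * t ^ q.2)
  have hs : 0 ≤ s := (partialNorm_nonneg hr 0 A).trans (hA 0)
  have hrow (ij : ℕ × ℕ) : HasSum (fun n => term (ij, n)) (monomialTerm Φ (t, u) ij) := by
    have hmonomial := ((EvaluatesTo.X t).pow ij.1).mul (hu.pow ij.2)
    exact HasSum.mul_left (coeff₂ ij.1 ij.2 Φ) hmonomial
  have hsummable : Summable fun q => ‖term q‖ := by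
    rw [summable_prod_of_nonneg fun _ => norm_nonneg _]
    exact ⟨fun ij => (hrow ij).summable.norm, .of_nonneg_of_le
      (fun _ => tsum_nonneg fun _ => norm_nonneg _)
      (fun ij => Real.tsum_le_of_sum_range_le (fun _ => norm_nonneg _)
        (sum_range_norm_le_of_partialNorm_le hr hΦ hA ht ij.1 ij.2))
      (summable_const_mul_pow_mul_pow (by positivity) hRr (by positivity) hRs C)⟩
  have hterm : HasSum term w := by
    rw [← (hsummable.of_norm.hasSum.prod_fiberwise hrow).unique hw]
    exact hsummable.of_norm.hasSum
  have hswap : HasSum (fun q : ℕ × ℕ × ℕ => term (q.2, q.1)) w :=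
    (Equiv.prodComm ℕ (ℕ × ℕ)).hasSum_iff.2 hterm
  refine hswap.prod_fiberwise fun n => ?_
  rw [substSeries, PowerSeries.coeff_mk, Finset.sum_mul]
  simp only [mul_assoc]
  refine hasSum_sum_of_ne_finset_zero fun ij hij => ?_
  simp only [Finset.mem_product, Finset.mem_range, not_and_or, not_lt] at hij
  simp only [term]
  rw [coeff_X_pow_mul_pow_eq_zero hX (by lia), zero_mul, mul_zero]

theorem exists_analyticAt_of_partialNorm_le (hr : 0 < r) (hA : ∀ N, partialNorm r N A ≤ s) :
    ∃ F, AnalyticAt ℂ F 0 ∧ ∀ᶠ t in 𝓝 0, EvaluatesTo A t (F t) := by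
  refine exists_analyticAt_evaluatesTo (C := s) (R := 1 / r) fun n => ?_
  rw [one_div, inv_pow, ← div_eq_mul_inv, le_div_iff₀ (by positivity)]
  exact (norm_coeff_mul_pow_le_partialNorm hr.le le_rfl A).trans (hA n)

theorem exists_solution_of_coeff_ne_natCast {F : ℂ × ℂ → ℂ} (hF : AnalyticAt ℂ F 0)
    (hl : ∀ n : ℕ, 1 ≤ n → l ≠ n) (h₀ : F 0 = 0)
    (h₁ : PowerSeries.coeff 1 (maclaurin fun y => F (0, y)) = 0) :
    ∃ y : ℂ → ℂ, AnalyticAt ℂ y 0 ∧ y 0 = 0 ∧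
      ∀ᶠ t in 𝓝 0, t * deriv y t = l * y t + F (t, y t) := by
  obtain ⟨Φ, hΦF⟩ := exists_hasExpansion hF
  obtain ⟨⟨C, R, hC, hR, hΦ⟩, hsum⟩ := id hΦF
  have h₀' : coeff₂ 0 0 Φ = 0 := by
    rw [coeff₂, ← hΦF.maclaurin_eq, PowerSeries.coeff_zero_eq_constantCoeff_apply,
      constantCoeff_maclaurin]
    exact h₀
  have h₁' : coeff₂ 0 1 Φ = 0 := by rwa [coeff₂, ← hΦF.maclaurin_eq]
  obtain ⟨r, hr, s, -, hRr, hRs, hY⟩ :=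
    exists_partialNorm_formalSolution_le hC hR hΦ h₀' h₁' hl
  have hX : PowerSeries.X ∣ formalSolution Φ l := X_dvd_formalSolution h₀'
  obtain ⟨y, hy, hyY⟩ := exists_analyticAt_of_partialNorm_le hr hY
  have hy₀ : y 0 = 0 := by
    rw [← constantCoeff_maclaurin y, maclaurin_eq hyY]
    exact PowerSeries.X_dvd_iff.1 hX
  have hode : PowerSeries.X * maclaurin (deriv y) =
      PowerSeries.C l * formalSolution Φ l + substSeries Φ (formalSolution Φ l) := by
    ext n
    rw [coeff_X_mul_maclaurin_deriv, maclaurin_eq hyY, map_add, PowerSeries.coeff_C_mul,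
      ← sub_mul_coeff_formalSolution h₀' h₁' hl]
    ring
  have hcurve : Tendsto (fun t => (t, y t)) (𝓝 0) (𝓝 0) := by
    have h := (continuousAt_id (x := (0 : ℂ))).prodMk hy.continuousAt
    rwa [ContinuousAt, id, hy₀] at h
  refine ⟨y, hy, hy₀, ?_⟩
  filter_upwards [hyY, hcurve.eventually hsum, eventually_evaluatesTo_maclaurin hy.deriv,
    Metric.closedBall_mem_nhds (0 : ℂ) hr] with t hyt hFt hdt ht
  have hsubst := evaluatesTo_substSeries hR.le hΦ hr.le (by linarith) (by linarith) hX hY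
    (mem_closedBall_zero_iff.1 ht) hyt hFt
  exact ((EvaluatesTo.X t).mul hdt).unique (hode ▸ ((EvaluatesTo.C l t).mul hyt).add hsubst)

theorem briot_bouquet {h : ℂ × ℂ → ℂ} (hh : AnalyticAt ℂ h 0) (h₀ : h 0 = 0)
    (hl : ∀ n : ℕ, 1 ≤ n → PowerSeries.coeff 1 (maclaurin fun y => h (0, y)) ≠ n) :
    ∃ y : ℂ → ℂ, AnalyticAt ℂ y 0 ∧ y 0 = 0 ∧ ∀ᶠ t in 𝓝 0, t * deriv y t = h (t, y t) := by
  set l := PowerSeries.coeff 1 (maclaurin fun y => h (0, y)) with hl_def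
  have hF : AnalyticAt ℂ (fun p : ℂ × ℂ => h p - l * p.2) 0 :=
    hh.sub (analyticAt_const.mul analyticAt_snd)
  have hlin : maclaurin (fun y => l * y) = PowerSeries.C l * PowerSeries.X := by
    rw [← maclaurin_const, ← maclaurin_id]
    exact maclaurin_mul analyticAt_const analyticAt_id
  have hsplit : maclaurin (fun y => h (0, y)) =
      PowerSeries.C l * PowerSeries.X + maclaurin fun y => h (0, y) - l * y := by
    rw [← hlin]
    refine (maclaurin_congr (.of_forall fun y => ?_)).trans
      (maclaurin_add (analyticAt_const.mul analyticAt_id) (analyticAt_restrict hF))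
    simp
  have h₁ : PowerSeries.coeff 1 (maclaurin fun y => h (0, y) - l * y) = 0 := by
    simpa [← hl_def] using congrArg (PowerSeries.coeff 1) hsplit
  obtain ⟨y, hy, hy₀, hode⟩ := exists_solution_of_coeff_ne_natCast hF hl (by simp [h₀]) h₁
  exact ⟨y, hy, hy₀, hode.mono fun t ht => by linear_combination ht⟩

end

/-! ### Germs of functions of one variable -/

section

variable {f : LineGerm}

instance : IsDomain LineGerm :=
  lineSeries_injective.isDomain lineSeries.toRingHom

/-- The coordinate of the line. -/
def lineCoord : LineGerm := germ (fun t => t) analyticAt_id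

theorem lineSeries_lineCoord : lineSeries lineCoord = PowerSeries.X := maclaurin_id

theorem lineCoord_ne_zero : lineCoord ≠ 0 := fun h =>
  PowerSeries.X_ne_zero (R := ℂ) <| by rw [← lineSeries_lineCoord, h, map_zero]

theorem exists_associated_lineCoord_pow (hf : f ≠ 0) : ∃ n, Associated (lineCoord ^ n) f := by
  obtain ⟨F, hF, rfl⟩ := exists_eq_germ f
  have hF₀ : ¬∀ᶠ t in 𝓝 0, F t = 0 := fun h =>
    hf (germ_eq_germ_iff (hG := analyticAt_const).2 h)
  obtain ⟨n, U, hU, hU₀, hFU⟩ := hF.exists_eventuallyEq_pow_smul_nonzero_iff.2 hF₀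
  obtain ⟨u, hu⟩ := isUnit_germ hU hU₀
  refine ⟨n, u, ?_⟩
  rw [hu]
  refine germ_eq_germ_iff (hF := (analyticAt_id.pow n).mul hU).2 ?_
  filter_upwards [hFU] with t ht
  simp [ht]

instance : ValuationRing LineGerm := by
  refine ValuationRing.iff_dvd_total.2 ⟨fun f g => ?_⟩
  obtain rfl | hf := eq_or_ne f 0
  · exact .inr (dvd_zero g)
  obtain rfl | hg := eq_or_ne g 0
  · exact .inl (dvd_zero f)
  obtain ⟨m, hm⟩ := exists_associated_lineCoord_pow hf
  obtain ⟨n, hn⟩ := exists_associated_lineCoord_pow hg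
  rw [← hm.dvd_iff_dvd_left, ← hn.dvd_iff_dvd_right, ← hn.dvd_iff_dvd_left,
    ← hm.dvd_iff_dvd_right]
  exact (le_total m n).imp (pow_dvd_pow lineCoord) (pow_dvd_pow lineCoord)

/-- The value at the origin of a germ of functions of one variable. -/
def evalZero : LineGerm →+* ℂ := PowerSeries.constantCoeff.comp lineSeries.toRingHom

end

/-! ### Weierstrass division of convergent power series -/

section

variable {r A C R : ℝ} {P Φ Ψ : ℂ⟦X⟧⟦X⟧}

theorem partialNorm_sub_le (hr : 0 ≤ r) (N : ℕ) (f g : ℂ⟦X⟧) :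
    partialNorm r N (f - g) ≤ partialNorm r N f + partialNorm r N g := by
  rw [partialNorm, partialNorm, partialNorm, ← Finset.sum_add_distrib]
  refine Finset.sum_le_sum fun n _ => ?_
  rw [map_sub, ← add_mul]
  gcongr
  exact norm_sub_le _ _

theorem partialNorm_sum_le (hr : 0 ≤ r) (N : ℕ) {ι : Type*} (s : Finset ι) (f : ι → ℂ⟦X⟧) :
    partialNorm r N (∑ i ∈ s, f i) ≤ ∑ i ∈ s, partialNorm r N (f i) := by
  simp only [partialNorm, map_sum]
  rw [Finset.sum_comm]
  refine Finset.sum_le_sum fun n _ => ?_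
  rw [← Finset.sum_mul]
  gcongr
  exact norm_sum_le _ _

theorem partialNorm_coeff_le (hC : 0 < C) (hR : 0 < R)
    (h : ∀ i j, ‖coeff₂ i j Φ‖ ≤ C * R ^ (i + j)) (i N : ℕ) :
    partialNorm (1 / (2 * R)) N (PowerSeries.coeff i Φ) ≤ 2 * C * R ^ i :=
  calc partialNorm (1 / (2 * R)) N (PowerSeries.coeff i Φ)
      ≤ ∑ n ∈ Finset.range (N + 1), C * R ^ i * (1 / 2 : ℝ) ^ n := by
        refine Finset.sum_le_sum fun n _ => ?_
        calc _ ≤ C * R ^ (i + n) * (1 / (2 * R)) ^ n := by gcongr; exact h i n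
          _ = C * R ^ i * (R * (1 / (2 * R))) ^ n := by rw [mul_pow, pow_add]; ring
          _ = C * R ^ i * (1 / 2) ^ n := by congr 2; field_simp
    _ ≤ C * R ^ i * 2 := by
        rw [← Finset.mul_sum]
        gcongr
        exact (summable_geometric_two.sum_le_tsum _ fun _ _ => by positivity).trans_eq
          tsum_geometric_two
    _ = 2 * C * R ^ i := by ring

theorem isConvergent_of_partialNorm_coeff_le (hr : 0 < r) (hC : 0 < C) (hR : 0 < R)
    (h : ∀ i N, partialNorm r N (PowerSeries.coeff i Φ) ≤ C * R ^ i) : IsConvergent Φ := by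
  refine ⟨C, max R r⁻¹, hC, by positivity, fun i j => ?_⟩
  have hij := (norm_coeff_mul_pow_le_partialNorm hr.le le_rfl _).trans (h i j)
  calc ‖coeff₂ i j Φ‖ ≤ C * R ^ i * r⁻¹ ^ j := by
        rwa [inv_pow, ← div_eq_mul_inv, le_div_iff₀ (by positivity)]
    _ ≤ C * max R r⁻¹ ^ i * max R r⁻¹ ^ j := by
        gcongr
        · exact le_max_left _ _
        · exact le_max_right _ _
    _ = C * max R r⁻¹ ^ (i + j) := by rw [pow_add, mul_assoc]

theorem IsConvergent.exists_common_bound (hΦ : IsConvergent Φ) (hΨ : IsConvergent Ψ) :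
    ∃ C R : ℝ, 0 < C ∧ 0 < R ∧ (∀ i j, ‖coeff₂ i j Φ‖ ≤ C * R ^ (i + j)) ∧
      ∀ i j, ‖coeff₂ i j Ψ‖ ≤ C * R ^ (i + j) := by
  obtain ⟨C, R, hC, hR, hΦ⟩ := hΦ
  obtain ⟨D, S, _, _, hΨ⟩ := hΨ
  refine ⟨max C D, max R S, by positivity, by positivity, fun i j => (hΦ i j).trans ?_,
    fun i j => (hΨ i j).trans ?_⟩
  · gcongr
    · exact le_max_left _ _
    · exact le_max_left _ _
  · gcongr
    · exact le_max_right _ _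
    · exact le_max_right _ _

/-- The quotient of `f` by `X ^ k`, forgetting the terms of degree less than `k`. -/
def shift (k : ℕ) (f : ℂ⟦X⟧) : ℂ⟦X⟧ := PowerSeries.mk fun n => PowerSeries.coeff (n + k) f

theorem pow_mul_partialNorm_shift_le (hr : 0 ≤ r) (N k : ℕ) (f : ℂ⟦X⟧) :
    r ^ k * partialNorm r N (shift k f) ≤ partialNorm r (k + N) f := by
  rw [partialNorm, partialNorm, Finset.mul_sum, add_assoc k, Finset.sum_range_add _ k]
  refine le_add_of_nonneg_of_le (Finset.sum_nonneg fun _ _ => by positivity) (le_of_eq ?_)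
  refine Finset.sum_congr rfl fun n _ => ?_
  rw [shift, PowerSeries.coeff_mk, pow_add, add_comm n k]
  ring

/-- The coefficients of the series that remain to be divided by `y ^ k` in the division of `Φ`
by a series `P` with `P(0, y) = y ^ k`, when the powers of `x` are treated one after the other. -/
def weierstrassDividend (k : ℕ) (P Φ : ℂ⟦X⟧⟦X⟧) : ℕ → ℂ⟦X⟧
  | i => PowerSeries.coeff i Φ -
      ∑ j : Fin i, shift k (weierstrassDividend k P Φ j) * PowerSeries.coeff (i - j) P
decreasing_by exact j.2

theorem weierstrassDividend_eq (k : ℕ) (P Φ : ℂ⟦X⟧⟦X⟧) (i : ℕ) :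
    weierstrassDividend k P Φ i = PowerSeries.coeff i Φ -
      ∑ j ∈ Finset.range i,
        shift k (weierstrassDividend k P Φ j) * PowerSeries.coeff (i - j) P := by
  rw [weierstrassDividend, Finset.sum_range]

/-- The quotient of the Weierstrass division by a series `P` with `P(0, y) = y ^ k`. -/
def weierstrassQuotient (k : ℕ) (P Φ : ℂ⟦X⟧⟦X⟧) : ℂ⟦X⟧⟦X⟧ :=
  PowerSeries.mk fun i => shift k (weierstrassDividend k P Φ i)

/-- The remainder of the Weierstrass division by a series `P` with `P(0, y) = y ^ k`. -/
def weierstrassRemainder (k : ℕ) (P Φ : ℂ⟦X⟧⟦X⟧) : ℂ⟦X⟧⟦X⟧ :=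
  PowerSeries.mk fun i => (weierstrassDividend k P Φ i).trunc k

theorem eq_weierstrassQuotient_mul_add_weierstrassRemainder {k : ℕ}
    (hP : PowerSeries.coeff 0 P = PowerSeries.X ^ k) (Φ : ℂ⟦X⟧⟦X⟧) :
    Φ = weierstrassQuotient k P Φ * P + weierstrassRemainder k P Φ := by
  refine PowerSeries.ext fun i => ?_
  have hD := PowerSeries.eq_X_pow_mul_shift_add_trunc k (weierstrassDividend k P Φ i)
  rw [← shift] at hD
  rw [map_add, PowerSeries.coeff_mul, weierstrassQuotient, weierstrassRemainder]
  simp only [PowerSeries.coeff_mk]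
  rw [Finset.Nat.sum_antidiagonal_eq_sum_range_succ (fun j l =>
    shift k (weierstrassDividend k P Φ j) * PowerSeries.coeff l P), Finset.sum_range_succ,
    Nat.sub_self, hP]
  linear_combination hD - weierstrassDividend_eq k P Φ i

theorem partialNorm_weierstrassDividend_le {k : ℕ} (hr : 0 < r) (hA : 0 < A) (hR : 0 < R)
    (hΦ : ∀ i N, partialNorm r N (PowerSeries.coeff i Φ) ≤ A * R ^ i)
    (hP : ∀ i N, partialNorm r N (PowerSeries.coeff i P) ≤ A * R ^ i) (i : ℕ) :
    ∀ N, partialNorm r N (weierstrassDividend k P Φ i) ≤ A * (R * (1 + A / r ^ k)) ^ i := by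
  set K := R * (1 + A / r ^ k) with hK
  have : 0 < K := by positivity
  induction i using Nat.strong_induction_on with
  | _ i ih =>
    intro N
    have hq : ∀ j < i, partialNorm r N (shift k (weierstrassDividend k P Φ j)) ≤
        A / r ^ k * K ^ j := fun j hj => by
      rw [div_mul_eq_mul_div, le_div_iff₀' (by positivity)]
      exact (pow_mul_partialNorm_shift_le hr.le N k _).trans (ih j hj _)
    calc partialNorm r N (weierstrassDividend k P Φ i)
        ≤ A * R ^ i + ∑ j ∈ Finset.range i, A / r ^ k * K ^ j * (A * R ^ (i - j)) := by
          rw [weierstrassDividend_eq]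
          refine (partialNorm_sub_le hr.le N _ _).trans (add_le_add (hΦ i N) ?_)
          refine (partialNorm_sum_le hr.le N _ _).trans (Finset.sum_le_sum fun j hj => ?_)
          exact (partialNorm_mul_le hr.le N _ _).trans <| mul_le_mul (hq j (Finset.mem_range.1 hj))
            (hP _ N) (partialNorm_nonneg hr.le _ _) (by positivity)
      _ = A * R ^ i + A * (K ^ i - R ^ i) := by
          rw [← geom_sum₂_mul K R i, Finset.sum_mul, Finset.mul_sum]
          refine congrArg _ (Finset.sum_congr rfl fun j hj => ?_)
          rw [show i - j = (i - 1 - j) + 1 by have := Finset.mem_range.1 hj; lia, pow_succ, hK]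
          ring
      _ = A * K ^ i := by ring

theorem partialNorm_coe_trunc_le (hr : 0 ≤ r) (N k : ℕ) (f : ℂ⟦X⟧) :
    partialNorm r N (f.trunc k : ℂ⟦X⟧) ≤ partialNorm r N f := by
  refine Finset.sum_le_sum fun n _ => ?_
  rw [Polynomial.coeff_coe, PowerSeries.coeff_trunc]
  gcongr
  split_ifs <;> simp

theorem IsConvergent.weierstrassDivision (hP : IsConvergent P) (hΦ : IsConvergent Φ) (k : ℕ) :
    IsConvergent (weierstrassQuotient k P Φ) ∧ IsConvergent (weierstrassRemainder k P Φ) := by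
  obtain ⟨C, R, hC, hR, hP, hΦ⟩ := hP.exists_common_bound hΦ
  have hr : 0 < 1 / (2 * R) := by positivity
  have hD := partialNorm_weierstrassDividend_le (k := k) hr (by positivity) hR
    (partialNorm_coeff_le hC hR hΦ) (partialNorm_coeff_le hC hR hP)
  constructor
  · refine isConvergent_of_partialNorm_coeff_le hr (C := 2 * C / (1 / (2 * R)) ^ k)
      (R := R * (1 + 2 * C / (1 / (2 * R)) ^ k)) (by positivity) (by positivity) fun i N => ?_
    rw [weierstrassQuotient, PowerSeries.coeff_mk, div_mul_eq_mul_div,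
      le_div_iff₀' (by positivity)]
    exact (pow_mul_partialNorm_shift_le hr.le N k _).trans (hD i _)
  · refine isConvergent_of_partialNorm_coeff_le hr (C := 2 * C)
      (R := R * (1 + 2 * C / (1 / (2 * R)) ^ k)) (by positivity) (by positivity) fun i N => ?_
    rw [weierstrassRemainder, PowerSeries.coeff_mk]
    exact (partialNorm_coe_trunc_le hr.le N k _).trans (hD i N)

end

/-! ### Weierstrass division of germs -/

section

variable {P Φ Ψ : ℂ⟦X⟧⟦X⟧} {F : ℂ × ℂ → ℂ} {p : ℂ × ℂ} {u v : ℂ} {k : ℕ}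

/-- The double series `Φ` converges to `u` at `p` when it is summed first in `y`, then in `x`. -/
def EvaluatesTo₂ (Φ : ℂ⟦X⟧⟦X⟧) (p : ℂ × ℂ) (u : ℂ) : Prop :=
  ∃ e : ℂ⟦X⟧, (∀ i, EvaluatesTo (PowerSeries.coeff i Φ) p.2 (PowerSeries.coeff i e)) ∧
    EvaluatesTo e p.1 u

namespace EvaluatesTo₂

theorem unique (hu : EvaluatesTo₂ Φ p u) (hv : EvaluatesTo₂ Φ p v) : u = v := by
  obtain ⟨e, he, hu⟩ := hu
  obtain ⟨e', he', hv⟩ := hv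
  obtain rfl : e = e' := PowerSeries.ext fun i => (he i).unique (he' i)
  exact hu.unique hv

theorem add (hu : EvaluatesTo₂ Φ p u) (hv : EvaluatesTo₂ Ψ p v) :
    EvaluatesTo₂ (Φ + Ψ) p (u + v) := by
  obtain ⟨e, he, hu⟩ := hu
  obtain ⟨e', he', hv⟩ := hv
  refine ⟨e + e', fun i => ?_, hu.add hv⟩
  rw [map_add, map_add]
  exact (he i).add (he' i)

theorem mul (hu : EvaluatesTo₂ Φ p u) (hv : EvaluatesTo₂ Ψ p v) :
    EvaluatesTo₂ (Φ * Ψ) p (u * v) := by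
  obtain ⟨e, he, hu⟩ := hu
  obtain ⟨e', he', hv⟩ := hv
  refine ⟨e * e', fun i => ?_, hu.mul hv⟩
  rw [PowerSeries.coeff_mul, PowerSeries.coeff_mul]
  exact .sum fun ij _ => (he ij.1).mul (he' ij.2)

end EvaluatesTo₂

theorem HasExpansion.eventually_evaluatesTo₂ (h : HasExpansion Φ F) :
    ∀ᶠ p in 𝓝 0, EvaluatesTo₂ Φ p (F p) := by
  obtain ⟨⟨C, R, -, hR, hΦ⟩, hF⟩ := h
  filter_upwards [hF, eventually_mul_norm_lt_one R] with p hp hp₂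
  have hrow (i : ℕ) : Summable fun j => coeff₂ i j Φ * p.2 ^ j := by
    refine .of_norm_bounded ((summable_geometric_of_lt_one (by positivity) hp₂.2).mul_left
      (C * R ^ i)) fun j => ?_
    rw [norm_mul, norm_pow, mul_pow, mul_assoc C, ← mul_assoc (R ^ i), ← pow_add, ← mul_assoc]
    gcongr
    exact hΦ i j
  refine ⟨PowerSeries.mk fun i => ∑' j, coeff₂ i j Φ * p.2 ^ j, fun i => ?_, ?_⟩
  · rw [PowerSeries.coeff_mk]
    exact (hrow i).hasSum
  · refine hp.prod_fiberwise fun i => ?_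
    rw [PowerSeries.coeff_mk, mul_comm]
    refine (HasSum.mul_left (p.1 ^ i) (hrow i).hasSum).congr_fun fun j => ?_
    rw [monomialTerm]
    ring

theorem IsConvergent.exists_eventually_evaluatesTo₂_sum (h : IsConvergent Φ)
    (hk : ∀ i j, k ≤ j → coeff₂ i j Φ = 0) :
    ∃ s : ℕ → ℂ → ℂ, (∀ j, AnalyticAt ℂ (s j) 0) ∧
      ∀ᶠ p in 𝓝 0, EvaluatesTo₂ Φ p (∑ j ∈ Finset.range k, s j p.1 * p.2 ^ j) := by
  obtain ⟨C, R, -, -, h⟩ := h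
  let column (j : ℕ) : ℂ⟦X⟧ := PowerSeries.mk fun i => coeff₂ i j Φ
  have hcolumn (j i : ℕ) : ‖PowerSeries.coeff i (column j)‖ ≤ C * R ^ j * R ^ i := by
    rw [PowerSeries.coeff_mk, mul_assoc, ← pow_add, add_comm j]
    exact h i j
  choose s hs hsc using fun j => exists_analyticAt_evaluatesTo (hcolumn j)
  refine ⟨s, hs, ?_⟩
  have hsc : ∀ᶠ t in 𝓝 0, ∀ j ∈ Finset.range k, EvaluatesTo (column j) t (s j t) :=
    (Finset.eventually_all _).2 fun j _ => hsc j
  filter_upwards [continuous_fst.continuousAt.eventually hsc] with p hp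
  refine ⟨∑ j ∈ Finset.range k, column j * PowerSeries.C (p.2 ^ j), fun i => ?_,
    .sum fun j hj => (hp j hj).mul (.C _ _)⟩
  rw [map_sum]
  simp only [PowerSeries.coeff_mul_C, column, PowerSeries.coeff_mk]
  refine hasSum_sum_of_ne_finset_zero fun j hj => ?_
  rw [← coeff₂, hk i j (by simpa using hj), zero_mul]

end

section

variable {P f : PlaneGerm} {k : ℕ}

theorem germ_sum {E ι : Type*} [NormedAddCommGroup E] [NormedSpace ℂ E] {s : Finset ι}
    {F : ι → E → ℂ} (hF : ∀ i, AnalyticAt ℂ (F i) 0) :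
    ∑ i ∈ s, germ (F i) (hF i) =
      germ (fun v => ∑ i ∈ s, F i v) (s.analyticAt_fun_sum fun i _ => hF i) := by
  refine (map_sum (Ideal.Quotient.mk (nullIdeal E)) (fun i => ⟨F i, hF i⟩) s).symm.trans ?_
  refine congrArg (Ideal.Quotient.mk (nullIdeal E)) (Subtype.ext ?_)
  rw [AddSubmonoidClass.coe_finsetSum]
  exact funext fun v => Finset.sum_apply v s F

/-- The germ in the plane of a function of the first coordinate. -/
def ofFst : LineGerm →ₐ[ℂ] PlaneGerm := pullback Prod.fst analyticAt_fst rfl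

/-- The germ in the plane of a function of the second coordinate. -/
def ofSnd : LineGerm →ₐ[ℂ] PlaneGerm := pullback Prod.snd analyticAt_snd rfl

/-- The germ in the plane of a polynomial in `y` whose coefficients are germs of functions of
`x`. -/
def toPlane : LineGerm[X] →+* PlaneGerm :=
  eval₂RingHom ofFst.toRingHom planeGermRing.y

theorem toPlane_C (c : LineGerm) : toPlane (Polynomial.C c) = ofFst c := eval₂_C _ _

theorem toPlane_X : toPlane Polynomial.X = planeGermRing.y := eval₂_X _ _

/-- The restriction of a germ to the line `x = 0`. -/
def restrictLine : PlaneGerm →ₐ[ℂ] LineGerm := pullback _ analyticAt_prodMk_zero rfl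

theorem restrictLine_ofSnd (f : LineGerm) : restrictLine (ofSnd f) = f := by
  obtain ⟨F, hF, rfl⟩ := exists_eq_germ f
  rfl

theorem exists_eq_mul_add_toPlane_of_restrict_eq_X_pow
    (hP : planeGermRing.restrict P = PowerSeries.X ^ k) (f : PlaneGerm) :
    ∃ q, ∃ r : LineGerm[X], r.degree < k ∧ f = q * P + toPlane r := by
  obtain ⟨F, hF, rfl⟩ := exists_eq_germ P
  obtain ⟨G, hG, rfl⟩ := exists_eq_germ f
  obtain ⟨Φ, hΦ⟩ := exists_hasExpansion hF
  obtain ⟨Ψ, hΨ⟩ := exists_hasExpansion hG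
  obtain ⟨hq, hr⟩ := hΦ.1.weierstrassDivision hΨ.1 k
  obtain ⟨s, hs, hrs⟩ := hr.exists_eventually_evaluatesTo₂_sum (k := k) fun i j hj => by
    rw [coeff₂, weierstrassRemainder, PowerSeries.coeff_mk, Polynomial.coeff_coe,
      PowerSeries.coeff_trunc, if_neg hj.not_gt]
  have hq := hq.hasExpansion
  refine ⟨germ _ hq.analyticAt, ∑ j ∈ Finset.range k, Polynomial.monomial j (germ (s j) (hs j)),
    ?_, ?_⟩
  · refine Polynomial.mem_degreeLT.1 (Submodule.sum_mem _ fun j hj => ?_)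
    exact Polynomial.mem_degreeLT.2 <| (Polynomial.degree_monomial_le j _).trans_lt <|
      Nat.cast_lt.2 (Finset.mem_range.1 hj)
  have hs' (j : ℕ) : AnalyticAt ℂ (fun p : ℂ × ℂ => s j p.1 * p.2 ^ j) 0 :=
    ((hs j).fun_comp (f := Prod.fst) (x := (0 : ℂ × ℂ)) analyticAt_fst).mul (analyticAt_snd.pow j)
  have hr : toPlane (∑ j ∈ Finset.range k, Polynomial.monomial j (germ (s j) (hs j))) =
      germ _ ((Finset.range k).analyticAt_fun_sum fun j _ => hs' j) := by
    rw [map_sum, ← germ_sum hs']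
    exact Finset.sum_congr rfl fun j _ => Polynomial.eval₂_monomial _ _
  rw [hr]
  refine germ_eq_germ_iff (hG := (hq.analyticAt.mul hF).add
    ((Finset.range k).analyticAt_fun_sum fun j _ => hs' j)).2 ?_
  filter_upwards [hΨ.eventually_evaluatesTo₂, hΦ.eventually_evaluatesTo₂,
    hq.eventually_evaluatesTo₂, hrs] with p hG hF hq hr
  rw [eq_weierstrassQuotient_mul_add_weierstrassRemainder (hΦ.maclaurin_eq.symm.trans hP) Ψ] at hG
  exact hG.unique ((hq.mul hF).add hr)

theorem exists_eq_mul_add_toPlane (hP : Associated (lineCoord ^ k) (restrictLine P))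
    (f : PlaneGerm) : ∃ q, ∃ r : LineGerm[X], r.degree < k ∧ f = q * P + toPlane r := by
  obtain ⟨u, hu⟩ := hP
  have hP₀ : planeGermRing.restrict (P * ofSnd ↑u⁻¹) = PowerSeries.X ^ k := by
    change lineSeries (restrictLine _) = _
    rw [map_mul, restrictLine_ofSnd, ← hu, mul_assoc, u.mul_inv, mul_one, map_pow,
      lineSeries_lineCoord]
  obtain ⟨q, r, hr, hf⟩ := exists_eq_mul_add_toPlane_of_restrict_eq_X_pow hP₀ f
  exact ⟨q * ofSnd ↑u⁻¹, r, hr, by rw [hf]; ring⟩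

theorem restrict_toPlane (r : LineGerm[X]) :
    planeGermRing.restrict (toPlane r) = (r.map evalZero : ℂ[X]) := by
  have h : (planeGermRing.restrict : PlaneGerm →+* ℂ⟦X⟧).comp toPlane =
      Polynomial.coeToPowerSeries.ringHom.comp (Polynomial.mapRingHom evalZero) := by
    refine Polynomial.ringHom_ext (fun c => ?_) ?_
    · obtain ⟨F, hF, rfl⟩ := exists_eq_germ c
      have hc : evalZero (germ F hF) = F 0 := constantCoeff_maclaurin F
      simp only [RingHom.comp_apply, Polynomial.coe_mapRingHom, Polynomial.map_C, hc,
        Polynomial.coeToPowerSeries.ringHom_apply, Polynomial.coe_C, toPlane_C]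
      exact maclaurin_const (F 0)
    · simp only [RingHom.comp_apply, Polynomial.coe_mapRingHom, Polynomial.map_X,
        Polynomial.coeToPowerSeries.ringHom_apply, Polynomial.coe_X, toPlane_X]
      exact planeGermRing.restrict_y
  exact DFunLike.congr_fun h r

theorem exists_monic_associated_toPlane (hP : Associated (lineCoord ^ k) (restrictLine P)) :
    ∃ W : LineGerm[X], W.Monic ∧ W.map evalZero = Polynomial.X ^ k ∧ Associated P (toPlane W) := by
  obtain ⟨q, r, hr, hq⟩ := exists_eq_mul_add_toPlane hP (planeGermRing.y ^ k)
  obtain ⟨u, hu⟩ := hP.map lineSeries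
  have hW : toPlane (Polynomial.X ^ k - r) = q * P := by
    rw [map_sub, map_pow, toPlane_X, hq, add_sub_cancel_right]
  have hq₀ := congrArg planeGermRing.restrict hq
  rw [map_add, map_mul, restrict_toPlane, map_pow, planeGermRing.restrict_y,
    show planeGermRing.restrict P = lineSeries (restrictLine P) from rfl, ← hu, map_pow,
    lineSeries_lineCoord] at hq₀
  have hr₀ : r.map evalZero = 0 := by
    ext n
    obtain hn | hn := lt_or_ge n k
    · refine (Polynomial.coeff_coe _ n).symm.trans (PowerSeries.X_pow_dvd_iff.1 ?_ n hn)
      exact ⟨1 - planeGermRing.restrict q * u, by linear_combination -hq₀⟩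
    · exact Polynomial.coeff_eq_zero_of_degree_lt <|
        Polynomial.degree_map_le.trans_lt (hr.trans_le (Nat.cast_le.2 hn))
  rw [hr₀, Polynomial.coe_zero, add_zero] at hq₀
  have hqu : planeGermRing.restrict q * u = 1 :=
    mul_left_cancel₀ (pow_ne_zero k PowerSeries.X_ne_zero) (by linear_combination -hq₀)
  have hq : IsUnit q := by
    refine planeGermRing.isUnit_of_constantCoeff_restrict_ne_zero q fun h => ?_
    simpa [h] using congrArg PowerSeries.constantCoeff hqu
  refine ⟨Polynomial.X ^ k - r, ?_, ?_, ?_⟩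
  · rw [sub_eq_add_neg]
    exact monic_X_pow_add (by rwa [degree_neg])
  · rw [Polynomial.map_sub, hr₀, sub_zero, Polynomial.map_pow, Polynomial.map_X]
  · rw [hW]
    exact ((associated_isUnit_mul_left_iff hq).2 (.refl P)).symm

end

/-! ### Common factors -/

section

variable {R : Type*} [CommRing R] [IsDomain R] [IsIntegrallyClosed R] {W : R[X]}

theorem exists_C_mem_span_or_exists_monic_dvd (hW : W.Monic) (G : R[X]) :
    (∃ d : R, d ≠ 0 ∧ Polynomial.C d ∈ Ideal.span {W, G}) ∨
      ∃ H : R[X], H.Monic ∧ H ≠ 1 ∧ H ∣ W ∧ H ∣ G := by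
  obtain ⟨K, _, _, _⟩ : ∃ (K : Type _) (_ : Field K) (_ : Algebra R K), IsFractionRing R K :=
    ⟨FractionRing R, inferInstance, inferInstance, inferInstance⟩
  let := Polynomial.algebra R K
  have := Polynomial.isLocalization (nonZeroDivisors R) K
  by_cases hI : (Ideal.span {W, G}).map (algebraMap R[X] K[X]) = ⊤
  · left
    have hloc := IsLocalization.map_algebraMap_ne_top_iff_disjoint
      ((nonZeroDivisors R).map (Polynomial.C : R →+* R[X])) K[X] (Ideal.span {W, G})
    obtain ⟨_, ⟨d, hd, rfl⟩, hd'⟩ := Set.not_disjoint_iff.1 fun h => hloc.2 h hI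
    exact ⟨d, nonZeroDivisors.ne_zero hd, hd'⟩
  right
  have hinj : Function.Injective (algebraMap R K) := IsFractionRing.injective R K
  obtain ⟨D, hD⟩ :=
    (IsPrincipalIdealRing.principal ((Ideal.span {W, G}).map (algebraMap R[X] K[X]))).principal
  have hdvd {f : R[X]} (hf : f ∈ ({W, G} : Set R[X])) : D ∣ f.map (algebraMap R K) :=
    Ideal.mem_span_singleton.1 (hD.le (Ideal.mem_map_of_mem _ (Ideal.subset_span hf)))
  obtain ⟨H, hH⟩ := IsIntegrallyClosed.eq_map_mul_C_of_dvd K hW (hdvd (.inl rfl))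
  have hD₀ : D ≠ 0 := ne_zero_of_dvd_ne_zero (hW.map (algebraMap R K)).ne_zero (hdvd (.inl rfl))
  have hHD : H.map (algebraMap R K) ∣ D := ⟨_, hH.symm⟩
  have hmonic : H.Monic := by
    refine Polynomial.monic_of_injective hinj (mul_right_cancel₀
      (Polynomial.leadingCoeff_ne_zero.2 hD₀) ?_)
    simpa using congrArg Polynomial.leadingCoeff hH
  have hdvd' {f : R[X]} (hf : f ∈ ({W, G} : Set R[X])) : H ∣ f :=
    (Polynomial.map_dvd_map _ hinj hmonic).1 (hHD.trans (hdvd hf))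
  refine ⟨H, hmonic, ?_, hdvd' (.inl rfl), hdvd' (.inr rfl)⟩
  rintro rfl
  refine hI (hD.trans (Ideal.span_singleton_eq_top.2 ?_))
  rw [← hH, Polynomial.map_one, one_mul]
  exact Polynomial.isUnit_C.2 (Polynomial.leadingCoeff_ne_zero.2 hD₀).isUnit

end

section

variable {P Q : PlaneGerm}

theorem isCofinite_of_ofFst_mem {I : Ideal PlaneGerm} {d : LineGerm} (hd : d ≠ 0)
    (hdI : ofFst d ∈ I) (hPI : P ∈ I) (hP : restrictLine P ≠ 0) : planeGermRing.IsCofinite I := by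
  obtain ⟨N, u, hu⟩ := exists_associated_lineCoord_pow hd
  refine planeGermRing.isCofinite_of_mem (N := N) ?_ hPI fun h =>
    hP (lineSeries_injective (h.trans (map_zero _).symm))
  rw [← hu, map_mul, map_pow] at hdI
  exact (Ideal.mul_unit_mem_iff_mem I (u.isUnit.map ofFst)).1 hdI

theorem value_toPlane_eq_zero_of_dvd {k : ℕ} {W H : LineGerm[X]} (hH : H.Monic) (hH₁ : H ≠ 1)
    (hHW : H ∣ W) (hW : W.map evalZero = Polynomial.X ^ k) :
    planeGermRing.value (toPlane H) = 0 := by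
  obtain ⟨j, -, hj⟩ := (dvd_prime_pow Polynomial.prime_X k).1
    ((Polynomial.map_dvd evalZero hHW).trans hW.dvd)
  have hj := Polynomial.eq_of_monic_of_associated (hH.map evalZero)
    (Polynomial.monic_X_pow j) hj
  have hj₀ : j ≠ 0 := by
    rintro rfl
    refine hH₁ (hH.natDegree_eq_zero.1 ?_)
    rw [← hH.natDegree_map evalZero, hj, pow_zero, natDegree_one]
  rw [PlaneGermRing.value, restrict_toPlane, hj]
  simp [hj₀]

theorem isCofinite_span_or_exists_dvd_of_restrictLine_ne_zero (hP : restrictLine P ≠ 0)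
    (Q : PlaneGerm) : planeGermRing.IsCofinite (Ideal.span {P, Q}) ∨
      ∃ f ≠ 0, planeGermRing.value f = 0 ∧ f ∣ P ∧ f ∣ Q := by
  obtain ⟨k, hk⟩ := exists_associated_lineCoord_pow hP
  obtain ⟨W, hW, hWk, hPW⟩ := exists_monic_associated_toPlane hk
  obtain ⟨q, G, -, hQ⟩ := exists_eq_mul_add_toPlane hk Q
  obtain ⟨d, hd, hdI⟩ | ⟨H, hH, hH₁, hHW, hHG⟩ := exists_C_mem_span_or_exists_monic_dvd hW G
  · have hPI : P ∈ Ideal.span {P, Q} := Ideal.subset_span (.inl rfl)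
    have hQI : Q ∈ Ideal.span {P, Q} := Ideal.subset_span (.inr rfl)
    have hle : (Ideal.span {W, G}).map toPlane ≤ Ideal.span {P, Q} := by
      rw [Ideal.map_span, Ideal.span_le]
      rintro _ ⟨f, rfl | rfl, rfl⟩
      · exact Ideal.mem_of_dvd _ hPW.dvd hPI
      · rw [eq_sub_of_add_eq' hQ.symm]
        exact Ideal.sub_mem _ hQI (Ideal.mul_mem_left _ q hPI)
    refine .inl (isCofinite_of_ofFst_mem hd ?_ hPI hP)
    rw [← toPlane_C]
    exact hle (Ideal.mem_map_of_mem toPlane hdI)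
  · have hHP : toPlane H ∣ P := (map_dvd toPlane hHW).trans hPW.symm.dvd
    refine .inr ⟨toPlane H, ne_zero_of_dvd_ne_zero (ne_zero_of_map hP) hHP,
      value_toPlane_eq_zero_of_dvd hH hH₁ hHW hWk, hHP, ?_⟩
    rw [hQ]
    exact dvd_add (hHP.mul_left q) (map_dvd toPlane hHG)

theorem isCofinite_span_or_exists_dvd (P Q : PlaneGerm) :
    planeGermRing.IsCofinite (Ideal.span {P, Q}) ∨
      ∃ f ≠ 0, planeGermRing.value f = 0 ∧ f ∣ P ∧ f ∣ Q := by
  by_cases hP : restrictLine P = 0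
  · by_cases hQ : restrictLine Q = 0
    · have hdvd {f : PlaneGerm} (hf : restrictLine f = 0) : planeGermRing.x ∣ f :=
        planeGermRing.x_dvd_of_restrict_eq_zero f ((congrArg lineSeries hf).trans (map_zero _))
      have hx : planeGermRing.x ≠ 0 := fun h => PowerSeries.X_ne_zero <| by
        rw [← planeGermRing.restrict_y, ← planeGermRing.swap_x, h, map_zero, map_zero]
      refine .inr ⟨planeGermRing.x, hx, ?_, hdvd hP, hdvd hQ⟩
      rw [PlaneGermRing.value, planeGermRing.restrict_x, map_zero]
    · obtain h | ⟨f, hf, hf₀, hfQ, hfP⟩ :=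
        isCofinite_span_or_exists_dvd_of_restrictLine_ne_zero hQ P
      · exact .inl (Set.pair_comm Q P ▸ h)
      · exact .inr ⟨f, hf, hf₀, hfP, hfQ⟩
  · exact isCofinite_span_or_exists_dvd_of_restrictLine_ne_zero hP Q

end

/-! ### Invariant curves under blow-ups -/

/-- A parametrized analytic curve germ `t ↦ (X t, Y t)` through the origin of `ℂ²`. -/
structure PlaneCurve where
  X : ℂ → ℂ
  Y : ℂ → ℂ
  analyticAt_X : AnalyticAt ℂ X 0
  analyticAt_Y : AnalyticAt ℂ Y 0
  X_zero : X 0 = 0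
  Y_zero : Y 0 = 0

namespace PlaneCurve

variable (γ : PlaneCurve) {P Q P' Q' : PlaneGerm} {c : ℂ}

/-- The substitution of a curve into the germs of functions on the plane. -/
def substitute : PlaneGerm →ₐ[ℂ] LineGerm :=
  pullback (fun t => (γ.X t, γ.Y t)) (γ.analyticAt_X.prod γ.analyticAt_Y)
    (Prod.ext γ.X_zero γ.Y_zero)

/-- The germ of the derivative of the first coordinate of a curve. -/
def derivX : LineGerm := germ (deriv γ.X) γ.analyticAt_X.deriv

/-- The germ of the derivative of the second coordinate of a curve. -/
def derivY : LineGerm := germ (deriv γ.Y) γ.analyticAt_Y.deriv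

/-- The curve `γ` is invariant under the vector field `P ∂x + Q ∂y`. -/
def IsInvariant (P Q : PlaneGerm) : Prop :=
  γ.substitute P * γ.derivY = γ.substitute Q * γ.derivX

/-- The image of a curve under the exchange of the coordinates. -/
def swap : PlaneCurve := ⟨γ.Y, γ.X, γ.analyticAt_Y, γ.analyticAt_X, γ.Y_zero, γ.X_zero⟩

theorem substitute_swap (f : PlaneGerm) :
    γ.swap.substitute f = γ.substitute (planeGermRing.swap f) := by
  obtain ⟨F, hF, rfl⟩ := exists_eq_germ f
  rfl

/-- The image of a curve under the blow-up chart `(x, y) ↦ (x, x (c + y))`. -/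
def blowUp (c : ℂ) : PlaneCurve where
  X := γ.X
  Y t := γ.X t * (c + γ.Y t)
  analyticAt_X := γ.analyticAt_X
  analyticAt_Y := γ.analyticAt_X.mul (analyticAt_const.add γ.analyticAt_Y)
  X_zero := γ.X_zero
  Y_zero := by rw [γ.X_zero, zero_mul]

theorem substitute_blowUp (f : PlaneGerm) :
    (γ.blowUp c).substitute f = γ.substitute (planeGermRing.chart c f) := by
  obtain ⟨F, hF, rfl⟩ := exists_eq_germ f
  rfl

theorem substitute_blowUp_x :
    (γ.blowUp c).substitute planeGermRing.x = γ.substitute planeGermRing.x := by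
  rw [substitute_blowUp, planeGermRing.chart_x]

theorem substitute_blowUp_y :
    (γ.blowUp c).substitute planeGermRing.y = γ.substitute planeGermRing.x *
      γ.substitute (algebraMap ℂ PlaneGerm c + planeGermRing.y) := by
  rw [substitute_blowUp, planeGermRing.chart_y, map_mul]

theorem isUnit_substitute_algebraMap_add_y (hc : c ≠ 0) :
    IsUnit (γ.substitute (algebraMap ℂ PlaneGerm c + planeGermRing.y)) :=
  isUnit_germ (F := fun t => c + γ.Y t) (analyticAt_const.add γ.analyticAt_Y)
    (by rwa [γ.Y_zero, add_zero])

theorem derivY_blowUp (c : ℂ) :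
    (γ.blowUp c).derivY =
      γ.derivX * γ.substitute (algebraMap ℂ PlaneGerm c + planeGermRing.y) +
        γ.substitute planeGermRing.x * γ.derivY := by
  refine germ_eq_germ_iff (hG := (γ.analyticAt_X.deriv.mul
    (analyticAt_const.add γ.analyticAt_Y)).add (γ.analyticAt_X.mul γ.analyticAt_Y.deriv)).2 ?_
  filter_upwards [γ.analyticAt_X.eventually_analyticAt, γ.analyticAt_Y.eventually_analyticAt]
    with t hX hY
  exact (hX.differentiableAt.hasDerivAt.mul (hY.differentiableAt.hasDerivAt.const_add c)).deriv

variable {γ}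

theorem IsInvariant.swap (h : γ.IsInvariant (planeGermRing.swap Q) (planeGermRing.swap P)) :
    γ.swap.IsInvariant P Q := by
  rw [IsInvariant, substitute_swap, substitute_swap]
  exact h.symm

theorem IsInvariant.blowUp {m : ℕ} (h : γ.IsInvariant P' Q')
    (hP : planeGermRing.x * planeGermRing.chart c P = planeGermRing.x ^ m * P')
    (hQ : planeGermRing.chart c Q -
      (algebraMap ℂ PlaneGerm c + planeGermRing.y) * planeGermRing.chart c P =
        planeGermRing.x ^ m * Q') :
    (γ.blowUp c).IsInvariant P Q := by
  have hP := congrArg γ.substitute hP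
  have hQ := congrArg γ.substitute hQ
  simp only [map_mul, map_pow, map_sub] at hP hQ
  rw [IsInvariant] at h ⊢
  rw [substitute_blowUp, substitute_blowUp, derivY_blowUp,
    show (γ.blowUp c).derivX = γ.derivX from rfl]
  linear_combination γ.substitute planeGermRing.x ^ m * h + γ.derivY * hP - γ.derivX * hQ

end PlaneCurve

section

variable {a b : PlaneGerm}

/-- The vector field `x a ∂x + b ∂y` has an invariant curve not contained in `x = 0`. -/
def HasPointCurve (a b : PlaneGerm) : Prop :=
  ∃ γ : PlaneCurve, γ.IsInvariant (planeGermRing.x * a) b ∧ γ.substitute planeGermRing.x ≠ 0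

/-- The vector field `x a ∂x + y b ∂y` has an invariant curve not contained in `x y = 0`. -/
def HasCornerCurve (a b : PlaneGerm) : Prop :=
  ∃ γ : PlaneCurve, γ.IsInvariant (planeGermRing.x * a) (planeGermRing.y * b) ∧
    γ.substitute planeGermRing.x ≠ 0 ∧ γ.substitute planeGermRing.y ≠ 0

theorem HasPointCurve.of_nonresonant (ha : planeGermRing.value a ≠ 0)
    (hb : planeGermRing.value b = 0)
    (h : ∀ n : ℕ, 1 ≤ n →
      PowerSeries.coeff 1 (planeGermRing.restrict b) ≠ n * planeGermRing.value a) :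
    HasPointCurve a b := by
  obtain ⟨u, rfl⟩ := planeGermRing.isUnit_of_constantCoeff_restrict_ne_zero a ha
  obtain ⟨q, rfl⟩ : ∃ q, b = u * q := ⟨↑u⁻¹ * b, (u.mul_inv_cancel_left b).symm⟩
  have hq : planeGermRing.value q = 0 := by
    rw [PlaneGermRing.value, map_mul, map_mul] at hb
    exact (mul_eq_zero.1 hb).resolve_left ha
  obtain ⟨F, hF, rfl⟩ := exists_eq_germ q
  have h₀ : F 0 = 0 := (constantCoeff_restrictSeries_germ hF).symm.trans hq
  have hl : ∀ n : ℕ, 1 ≤ n → PowerSeries.coeff 1 (planeGermRing.restrict (germ F hF)) ≠ n := by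
    intro n hn hc
    rw [PlaneGermRing.value, ← PowerSeries.coeff_zero_eq_constantCoeff_apply] at hq
    refine h n hn ?_
    rw [map_mul, PowerSeries.coeff_mul, Finset.Nat.antidiagonal_succ, Finset.sum_cons]
    simp [PlaneGermRing.value, hq, hc, mul_comm]
  obtain ⟨Y, hY, hY₀, hYF⟩ := briot_bouquet hF h₀ hl
  let γ : PlaneCurve := ⟨fun t => t, Y, analyticAt_id, hY, rfl, hY₀⟩
  have hγ : γ.substitute planeGermRing.x * γ.derivY = γ.substitute (germ F hF) :=
    germ_eq_germ_iff (hF := analyticAt_id.mul hY.deriv).2 hYF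
  have hX : γ.derivX = 1 :=
    germ_eq_germ_iff (hG := analyticAt_const).2 (.of_forall fun t => deriv_id t)
  refine ⟨γ, ?_, lineCoord_ne_zero⟩
  rw [PlaneCurve.IsInvariant, hX, map_mul, map_mul]
  linear_combination γ.substitute u * hγ

end

/-! ### From a parametrized curve to its equation -/

section

variable {R S : Type*} [CommRing R] [CommRing S] {φ : R →+* S}

theorem isIntegral_of_forall_exists_eq_eval₂ {t : S} {n : ℕ}
    (h : ∀ s, ∃ r : R[X], r.degree < n ∧ s = r.eval₂ φ t) : φ.IsIntegral := by
  algebraize [φ]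
  obtain ⟨r, hr, ht⟩ := h (t ^ n)
  have ht : IsIntegral R t := by
    refine ⟨Polynomial.X ^ n - r, ?_, ?_⟩
    · rw [sub_eq_add_neg]
      exact monic_X_pow_add (by rwa [degree_neg])
    · rw [eval₂_sub, eval₂_pow, eval₂_X, RingHom.algebraMap_toAlgebra, ← ht, sub_self]
  intro s
  obtain ⟨r, -, rfl⟩ := h s
  exact adjoin_le_integralClosure ht (aeval_mem_adjoin_singleton R t)

theorem exists_monic_forall_eval₂_eq_zero_dvd [IsDomain R] [IsIntegrallyClosed R] [IsDomain S]
    (hφ : Function.Injective φ) {s : S} (hs : φ.IsIntegralElem s) :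
    ∃ f : R[X], f.Monic ∧ f.eval₂ φ s = 0 ∧ ∀ r : R[X], r.eval₂ φ s = 0 → f ∣ r := by
  algebraize [φ]
  have : FaithfulSMul R S := (faithfulSMul_iff_algebraMap_injective R S).2 hφ
  exact ⟨minpoly R s, minpoly.monic hs, minpoly.aeval R s,
    fun r hr => minpoly.isIntegrallyClosed_dvd hs hr⟩

end

namespace PlaneCurve

variable {γ : PlaneCurve}

variable (γ) in
/-- The composition of germs in one variable with the first coordinate of a curve. -/
def pullbackX : LineGerm →ₐ[ℂ] LineGerm := pullback γ.X γ.analyticAt_X γ.X_zero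

theorem substitute_toPlane (r : LineGerm[X]) :
    γ.substitute (toPlane r) = r.eval₂ γ.pullbackX.toRingHom (γ.substitute planeGermRing.y) := by
  have h : γ.substitute.toRingHom.comp ofFst.toRingHom = γ.pullbackX.toRingHom := by
    ext c
    obtain ⟨C, hC, rfl⟩ := exists_eq_germ c
    rfl
  rw [← h]
  exact Polynomial.hom_eval₂ r _ γ.substitute.toRingHom _

theorem pullbackX_lineCoord : γ.pullbackX lineCoord = γ.substitute planeGermRing.x := rfl

theorem pullbackX_injective (hγ : γ.substitute planeGermRing.x ≠ 0) :
    Function.Injective γ.pullbackX := by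
  refine (injective_iff_map_eq_zero γ.pullbackX).2 fun c hc => by_contra fun hc₀ => ?_
  obtain ⟨n, u, rfl⟩ := exists_associated_lineCoord_pow hc₀
  rw [map_mul, map_pow, pullbackX_lineCoord] at hc
  exact mul_ne_zero (pow_ne_zero n hγ) (u.isUnit.map γ.pullbackX).ne_zero hc

/- Divide by `X y - x`, which vanishes along the graph `t ↦ (X t, t)`. -/
theorem isIntegral_pullbackX (hγ : γ.substitute planeGermRing.x ≠ 0) :
    γ.pullbackX.toRingHom.IsIntegral := by
  let δ : PlaneCurve := ⟨γ.X, fun t => t, γ.analyticAt_X, analyticAt_id, γ.X_zero, rfl⟩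
  let X : LineGerm := γ.substitute planeGermRing.x
  obtain ⟨n, hn⟩ := exists_associated_lineCoord_pow hγ
  have hX : restrictLine (ofSnd X - ofFst lineCoord) = X := by
    rw [map_sub, restrictLine_ofSnd]
    exact sub_zero X
  refine isIntegral_of_forall_exists_eq_eval₂ (t := lineCoord) (n := n) fun s => ?_
  obtain ⟨q, r, hr, hs⟩ := exists_eq_mul_add_toPlane (hn.trans (.of_eq hX.symm)) (ofSnd s)
  have hδ : δ.substitute (ofSnd X - ofFst lineCoord) = 0 := by
    rw [map_sub]
    exact sub_self X
  have hδs : δ.substitute (ofSnd s) = s := by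
    obtain ⟨S, hS, rfl⟩ := exists_eq_germ s
    rfl
  refine ⟨r, hr, ?_⟩
  rw [← hδs, hs, map_add, map_mul, hδ, mul_zero, zero_add, substitute_toPlane]
  rfl

theorem exists_forall_substitute_eq_zero_dvd (hγ : γ.substitute planeGermRing.x ≠ 0) :
    ∃ f ≠ 0, γ.substitute f = 0 ∧ ∀ h, γ.substitute h = 0 → f ∣ h := by
  obtain ⟨M, hM, hM₀, hdvd⟩ := exists_monic_forall_eval₂_eq_zero_dvd (pullbackX_injective hγ)
    (isIntegral_pullbackX hγ (γ.substitute planeGermRing.y))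
  have hrestrict : lineSeries (restrictLine (toPlane M)) = (M.map evalZero : ℂ[X]) :=
    restrict_toPlane M
  have hlead : PowerSeries.coeff M.natDegree (M.map evalZero : ℂ⟦X⟧) ≠ 0 := by
    rw [Polynomial.coeff_coe, Polynomial.coeff_map, hM.coeff_natDegree, map_one]
    exact one_ne_zero
  have hne : restrictLine (toPlane M) ≠ 0 := by
    intro h
    rw [← hrestrict, h, map_zero, map_zero] at hlead
    exact hlead rfl
  refine ⟨toPlane M, ne_zero_of_map hne, by rw [substitute_toPlane, hM₀], fun h hh => ?_⟩
  obtain ⟨k, hk⟩ := exists_associated_lineCoord_pow hne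
  have hkM : k ≤ M.natDegree := by
    have hX := (hk.map lineSeries).dvd
    rw [map_pow, lineSeries_lineCoord, hrestrict, PowerSeries.X_pow_dvd_iff] at hX
    exact not_lt.1 fun hlt => hlead (hX _ hlt)
  obtain ⟨q, r, hr, rfl⟩ := exists_eq_mul_add_toPlane hk h
  rw [map_add, map_mul, substitute_toPlane, hM₀, mul_zero, zero_add, substitute_toPlane] at hh
  have hr₀ : r = 0 := by
    by_contra hr₀
    refine hM.not_dvd_of_degree_lt hr₀ (hr.trans_le ?_) (hdvd r hh)
    rw [Polynomial.degree_eq_natDegree hM.ne_zero]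
    exact Nat.cast_le.2 hkM
  rw [hr₀, map_zero, add_zero]
  exact dvd_mul_left _ q

end PlaneCurve

/-! ### Equations of invariant curves -/

section

variable {F : ℂ × ℂ → ℂ} {P Q : PlaneGerm}

theorem analyticAt_fderiv_apply (hF : AnalyticAt ℂ F 0) (v : ℂ × ℂ) :
    AnalyticAt ℂ (fun p => fderiv ℂ F p v) 0 :=
  ((ContinuousLinearMap.apply ℂ ℂ v).analyticAt _).fun_comp hF.fderiv

/-- The germ of the derivative of a function along the vector field `P ∂x + Q ∂y`. -/
def lieDerivative (P Q : PlaneGerm) (hF : AnalyticAt ℂ F 0) : PlaneGerm :=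
  P * germ _ (analyticAt_fderiv_apply hF (1, 0)) + Q * germ _ (analyticAt_fderiv_apply hF (0, 1))

/-- The vector field `P ∂x + Q ∂y` leaves invariant the zero set of some nonzero germ that vanishes
at the origin. -/
def HasEquation (P Q : PlaneGerm) : Prop :=
  ∃ F, ∃ hF : AnalyticAt ℂ F 0, F 0 = 0 ∧ germ F hF ≠ 0 ∧ germ F hF ∣ lieDerivative P Q hF

theorem germ_dvd_lieDerivative_iff {p q : ℂ × ℂ → ℂ} {hp : AnalyticAt ℂ p 0}
    {hq : AnalyticAt ℂ q 0} {hF : AnalyticAt ℂ F 0} :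
    germ F hF ∣ lieDerivative (germ p hp) (germ q hq) hF ↔ ∃ g, AnalyticAt ℂ g 0 ∧ ∀ᶠ z in 𝓝 0,
      p z * fderiv ℂ F z (1, 0) + q z * fderiv ℂ F z (0, 1) = g z * F z := by
  have h (g : ℂ × ℂ → ℂ) (hg : AnalyticAt ℂ g 0) :=
    germ_eq_germ_iff (hF := (hp.mul (analyticAt_fderiv_apply hF (1, 0))).add
      (hq.mul (analyticAt_fderiv_apply hF (0, 1)))) (hG := hg.mul hF)
  constructor
  · rintro ⟨g', h'⟩
    obtain ⟨g, hg, rfl⟩ := exists_eq_germ g'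
    exact ⟨g, hg, (h g hg).1 (h'.trans (mul_comm (germ F hF) (germ g hg)))⟩
  · rintro ⟨g, hg, h'⟩
    exact ⟨germ g hg, ((h g hg).2 h').trans (mul_comm (germ g hg) (germ F hF))⟩

theorem HasEquation.of_dvd {f : PlaneGerm} (hf : f ≠ 0) (hf₀ : planeGermRing.value f = 0)
    (hP : f ∣ P) (hQ : f ∣ Q) : HasEquation P Q := by
  obtain ⟨F, hF, rfl⟩ := exists_eq_germ f
  exact ⟨F, hF, (constantCoeff_restrictSeries_germ hF).symm.trans hf₀, hf,
    dvd_add (hP.mul_right _) (hQ.mul_right _)⟩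

theorem HasEquation.swap (h : HasEquation (planeGermRing.swap Q) (planeGermRing.swap P)) :
    HasEquation P Q := by
  obtain ⟨F, hF, hF₀, hne, hdvd⟩ := h
  have hF' : AnalyticAt ℂ (F ∘ Prod.swap) 0 := AnalyticAt.comp hF analyticAt_swap
  have hswap : planeGermRing.swap (germ _ hF') = germ F hF := rfl
  have hderiv (v : ℂ × ℂ) : germ _ (analyticAt_fderiv_apply hF' v) =
      planeGermRing.swap (germ _ (analyticAt_fderiv_apply hF v.swap)) := by
    refine germ_eq_germ_iff.2 ?_
    filter_upwards [(continuous_swap.tendsto (0 : ℂ × ℂ)).eventually hF.eventually_analyticAt]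
      with p hp
    have := hp.differentiableAt.hasFDerivAt.comp p
      (ContinuousLinearEquiv.prodComm ℂ ℂ ℂ).hasFDerivAt
    exact DFunLike.congr_fun this.fderiv v
  refine ⟨_, hF', hF₀, fun h => hne ?_, ?_⟩
  · rw [← hswap, h, map_zero]
  · have h := map_dvd planeGermRing.swap hdvd
    rw [← hswap, planeGermRing.swap_swap] at h
    convert h using 1
    rw [lieDerivative, lieDerivative, hderiv, hderiv, map_add, map_mul, map_mul,
      planeGermRing.swap_swap, planeGermRing.swap_swap]
    exact add_comm _ _

end

namespace PlaneCurve

variable {γ : PlaneCurve} {F : ℂ × ℂ → ℂ} {P Q : PlaneGerm}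

theorem derivX_ne_zero (hγ : γ.substitute planeGermRing.x ≠ 0) : γ.derivX ≠ 0 := by
  intro h
  refine hγ (lineSeries_injective ?_)
  rw [map_zero]
  ext n
  rw [map_zero]
  obtain rfl | hn := eq_or_ne n 0
  · rw [PowerSeries.coeff_zero_eq_constantCoeff_apply]
    exact (constantCoeff_maclaurin γ.X).trans γ.X_zero
  · have hX := coeff_X_mul_maclaurin_deriv γ.X n
    rw [← lineSeries_germ γ.analyticAt_X.deriv, ← derivX, h, map_zero, mul_zero, map_zero] at hX
    exact (mul_eq_zero.1 hX.symm).resolve_left (Nat.cast_ne_zero.2 hn)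

theorem substitute_germ_eq_zero_iff (hF : AnalyticAt ℂ F 0) :
    γ.substitute (germ F hF) = 0 ↔ ∀ᶠ t in 𝓝 0, F (γ.X t, γ.Y t) = 0 :=
  germ_eq_germ_iff (hG := analyticAt_const)

theorem substitute_fderiv_add (hF : AnalyticAt ℂ F 0) (h : γ.substitute (germ F hF) = 0) :
    γ.substitute (germ _ (analyticAt_fderiv_apply hF (1, 0))) * γ.derivX +
      γ.substitute (germ _ (analyticAt_fderiv_apply hF (0, 1))) * γ.derivY = 0 := by
  have hγ := γ.analyticAt_X.prod γ.analyticAt_Y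
  have hγ₀ : ((γ.X 0, γ.Y 0) : ℂ × ℂ) = 0 := Prod.ext γ.X_zero γ.Y_zero
  have hcomp {G : ℂ × ℂ → ℂ} (hG : AnalyticAt ℂ G 0) :
      AnalyticAt ℂ (fun t => G (γ.X t, γ.Y t)) 0 := AnalyticAt.fun_comp (hγ₀.symm ▸ hG) hγ
  refine germ_eq_germ_iff
    (hF := ((hcomp (analyticAt_fderiv_apply hF (1, 0))).mul γ.analyticAt_X.deriv).add
      ((hcomp (analyticAt_fderiv_apply hF (0, 1))).mul γ.analyticAt_Y.deriv))
    (hG := analyticAt_const).2 ?_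
  filter_upwards [(substitute_germ_eq_zero_iff hF |>.1 h).eventually_nhds,
    hγ.continuousAt.eventually (hγ₀.symm ▸ hF.eventually_analyticAt),
    γ.analyticAt_X.eventually_analyticAt, γ.analyticAt_Y.eventually_analyticAt]
    with t ht hFt hXt hYt
  have hd := hFt.differentiableAt.hasFDerivAt.comp_hasDerivAt t
    (hXt.differentiableAt.hasDerivAt.prodMk hYt.differentiableAt.hasDerivAt)
  have hd₀ := hd.unique ((hasDerivAt_const t 0).congr_of_eventuallyEq ht)
  rw [show (deriv γ.X t, deriv γ.Y t) = deriv γ.X t • ((1 : ℂ), (0 : ℂ)) + deriv γ.Y t • (0, 1) by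
    simp, map_add, map_smul, map_smul, smul_eq_mul, smul_eq_mul] at hd₀
  refine Eq.trans ?_ hd₀
  simp only [Pi.add_apply, Pi.mul_apply, mul_comm]

theorem IsInvariant.hasEquation (h : γ.IsInvariant P Q) (hγ : γ.substitute planeGermRing.x ≠ 0) :
    HasEquation P Q := by
  obtain ⟨f, hf, hf₀, hdvd⟩ := exists_forall_substitute_eq_zero_dvd hγ
  obtain ⟨F, hF, rfl⟩ := exists_eq_germ f
  refine ⟨F, hF, ?_, hf, hdvd _ ?_⟩
  · have h₀ := ((substitute_germ_eq_zero_iff hF).1 hf₀).self_of_nhds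
    rwa [γ.X_zero, γ.Y_zero] at h₀
  · refine (mul_eq_zero.1 ?_).resolve_right (derivX_ne_zero hγ)
    rw [IsInvariant] at h
    rw [lieDerivative, map_add, map_mul, map_mul]
    linear_combination γ.substitute P * substitute_fderiv_add hF hf₀ -
      γ.substitute (germ _ (analyticAt_fderiv_apply hF (0, 1))) * h

end PlaneCurve

section

variable {a b a' b' : PlaneGerm} {c : ℂ} {n : ℕ}

theorem HasPointCurve.of_isTransform (ha : planeGermRing.IsTransform c n a a')
    (hb : planeGermRing.IsTransform c (n + 1) b b')
    (h : HasPointCurve a' (b' - (algebraMap ℂ PlaneGerm c + planeGermRing.y) * a')) :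
    HasPointCurve a b := by
  obtain ⟨γ, hγ, hX⟩ := h
  refine ⟨γ.blowUp c, hγ.blowUp (m := n + 1) ?_ ?_, γ.substitute_blowUp_x.trans_ne hX⟩
  · rw [map_mul, planeGermRing.chart_x, ha]
    ring
  · rw [map_mul, planeGermRing.chart_x, ha, hb]
    ring

theorem HasPointCurve.of_hasCornerCurve
    (ha : planeGermRing.IsTransform 0 n (planeGermRing.swap a) a')
    (hb : planeGermRing.IsTransform 0 (n + 1) (planeGermRing.swap b) b')
    (h : HasCornerCurve b' (a' - b')) : HasPointCurve a b := by
  obtain ⟨γ, hγ, hX, hY⟩ := h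
  refine ⟨(γ.blowUp 0).swap, (hγ.blowUp (m := n + 1) ?_ ?_).swap, ?_⟩
  · rw [hb]
    ring
  · rw [map_mul, map_mul, planeGermRing.swap_x, planeGermRing.chart_y, ha, hb, map_zero]
    ring
  · rw [PlaneCurve.substitute_swap, planeGermRing.swap_x, PlaneCurve.substitute_blowUp_y,
      map_zero, zero_add]
    exact mul_ne_zero hX hY

theorem HasCornerCurve.of_hasPointCurve (hc : c ≠ 0) (ha : planeGermRing.IsTransform c n a a')
    (hb : planeGermRing.IsTransform c n b b')
    (h : HasPointCurve a' ((algebraMap ℂ PlaneGerm c + planeGermRing.y) * (b' - a'))) :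
    HasCornerCurve a b := by
  obtain ⟨γ, hγ, hX⟩ := h
  refine ⟨γ.blowUp c, hγ.blowUp (m := n + 1) ?_ ?_, γ.substitute_blowUp_x.trans_ne hX, ?_⟩
  · rw [map_mul, planeGermRing.chart_x, ha]
    ring
  · rw [map_mul, map_mul, planeGermRing.chart_x, planeGermRing.chart_y, ha, hb]
    ring
  · rw [PlaneCurve.substitute_blowUp_y]
    exact mul_ne_zero hX (γ.isUnit_substitute_algebraMap_add_y hc).ne_zero

theorem HasCornerCurve.of_isTransform (ha : planeGermRing.IsTransform 0 n a a')
    (hb : planeGermRing.IsTransform 0 n b b') (h : HasCornerCurve a' (b' - a')) :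
    HasCornerCurve a b := by
  obtain ⟨γ, hγ, hX, hY⟩ := h
  refine ⟨γ.blowUp 0, hγ.blowUp (m := n + 1) ?_ ?_, γ.substitute_blowUp_x.trans_ne hX, ?_⟩
  · rw [map_mul, planeGermRing.chart_x, ha]
    ring
  · rw [map_mul, map_mul, planeGermRing.chart_x, planeGermRing.chart_y, ha, hb, map_zero]
    ring
  · rw [PlaneCurve.substitute_blowUp_y, map_zero, zero_add]
    exact mul_ne_zero hX hY

theorem HasCornerCurve.of_swap
    (h : HasCornerCurve (planeGermRing.swap b) (planeGermRing.swap a)) : HasCornerCurve a b := by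
  obtain ⟨γ, hγ, hX, hY⟩ := h
  refine ⟨γ.swap, PlaneCurve.IsInvariant.swap ?_, hY, hX⟩
  rwa [map_mul, map_mul, planeGermRing.swap_y, planeGermRing.swap_x]

theorem HasEquation.of_hasPointCurve (ha : planeGermRing.IsTransform c n a a')
    (hb : planeGermRing.IsTransform c n b b')
    (h : HasPointCurve a' (b' - (algebraMap ℂ PlaneGerm c + planeGermRing.y) * a')) :
    HasEquation a b := by
  obtain ⟨γ, hγ, hX⟩ := h
  refine (hγ.blowUp (c := c) (m := n) ?_ ?_).hasEquation (γ.substitute_blowUp_x.trans_ne hX)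
  · rw [ha]
    ring
  · rw [ha, hb]
    ring

end

theorem separatrixRules :
    planeGermRing.SeparatrixRules HasEquation HasPointCurve HasCornerCurve where
  pointCurve_of_nonresonant _ _ := .of_nonresonant
  pointCurve_of_pointCurve _ _ _ _ _ _ := .of_isTransform
  pointCurve_of_cornerCurve _ _ _ _ _ := .of_hasCornerCurve
  cornerCurve_of_pointCurve _ _ _ _ _ _ := .of_hasPointCurve
  cornerCurve_of_cornerCurve _ _ _ _ _ := .of_isTransform
  cornerCurve_of_swap _ _ := .of_swap
  curve_of_pointCurve _ _ _ _ _ _ := .of_hasPointCurve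
  curve_of_swap _ _ := .swap

theorem hasEquation (P Q : PlaneGerm) : HasEquation P Q := by
  obtain h | ⟨f, hf, hf₀, hP, hQ⟩ := isCofinite_span_or_exists_dvd P Q
  · exact separatrixRules.curve h
  · exact .of_dvd hf hf₀ hP hQ

end

end CamachoSad

theorem camacho_sad_separatrix_general
    (P Q : ℂ × ℂ → ℂ) (U : Set (ℂ × ℂ)) (hU : U ∈ nhds (0 : ℂ × ℂ))
    (hP : AnalyticOnNhd ℂ P U) (hQ : AnalyticOnNhd ℂ Q U) :
    ∃ r > (0 : ℝ), Metric.ball (0 : ℂ × ℂ) r ⊆ U ∧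
      ∃ f g : ℂ × ℂ → ℂ,
        AnalyticOnNhd ℂ f (Metric.ball (0 : ℂ × ℂ) r) ∧
        AnalyticOnNhd ℂ g (Metric.ball (0 : ℂ × ℂ) r) ∧
        f 0 = 0 ∧
        (∃ p ∈ Metric.ball (0 : ℂ × ℂ) r, f p ≠ 0) ∧
        ∀ p ∈ Metric.ball (0 : ℂ × ℂ) r,
          P p * fderiv ℂ f p (1, 0) + Q p * fderiv ℂ f p (0, 1) = g p * f p := by
  have hP₀ := hP 0 (mem_of_mem_nhds hU)
  have hQ₀ := hQ 0 (mem_of_mem_nhds hU)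
  obtain ⟨f, hf, hf₀, hne, hdvd⟩ := CamachoSad.hasEquation
    (CamachoSad.germ P hP₀) (CamachoSad.germ Q hQ₀)
  obtain ⟨g, hg, hfg⟩ := CamachoSad.germ_dvd_lieDerivative_iff.1 hdvd
  obtain ⟨r, hr, hball⟩ := Metric.eventually_nhds_iff_ball.1
    (((Filter.eventually_mem_set.2 hU).and hfg).and
      (hf.eventually_analyticAt.and hg.eventually_analyticAt))
  refine ⟨r, hr, fun p hp => (hball p hp).1.1, f, g, fun p hp => (hball p hp).2.1,
    fun p hp => (hball p hp).2.2, hf₀, ?_, fun p hp => (hball p hp).1.2⟩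
  by_contra! h
  exact hne (CamachoSad.germ_eq_germ_iff (hG := analyticAt_const).2
    (Filter.mem_of_superset (Metric.ball_mem_nhds 0 hr) h))

/-- **Camacho–Sad separatrix theorem.** A holomorphic vector field
`Z = P ∂/∂z + Q ∂/∂w` with an isolated singularity at `0 ∈ ℂ²` admits a separatrix:
there is a nontrivial invariant analytic curve `{f = 0}` through `0`, invariance being
expressed by `P·f_z + Q·f_w = g·f` for some holomorphic `g`. -/
theorem camacho_sad_separatrix
    (P Q : ℂ × ℂ → ℂ) (U : Set (ℂ × ℂ)) (hU : U ∈ nhds (0 : ℂ × ℂ))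
    (hP : AnalyticOnNhd ℂ P U) (hQ : AnalyticOnNhd ℂ Q U)
    (hP0 : P 0 = 0) (hQ0 : Q 0 = 0)
    (hiso : ∃ ε > (0 : ℝ), ∀ p ∈ Metric.ball (0 : ℂ × ℂ) ε, p ≠ 0 →
      (P p ≠ 0 ∨ Q p ≠ 0)) :
    ∃ r > (0 : ℝ), Metric.ball (0 : ℂ × ℂ) r ⊆ U ∧
      ∃ f g : ℂ × ℂ → ℂ,
        AnalyticOnNhd ℂ f (Metric.ball (0 : ℂ × ℂ) r) ∧
        AnalyticOnNhd ℂ g (Metric.ball (0 : ℂ × ℂ) r) ∧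
        f 0 = 0 ∧
        (∃ p ∈ Metric.ball (0 : ℂ × ℂ) r, f p ≠ 0) ∧
        ∀ p ∈ Metric.ball (0 : ℂ × ℂ) r,
          P p * fderiv ℂ f p (1, 0) + Q p * fderiv ℂ f p (0, 1) = g p * f p :=
  camacho_sad_separatrix_general P Q U hU hP hQ
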